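/- Let 𝔽_{4,3} denote the 4-graph with vertex set {1,…,7} and edge set {1234, 1235, 1236, 1237, 4567}. There exist constants N_0 and c > 0 such that for all integers n ≥ N_0 and all integers t with 0 ≤ t ≤ c·n, one has EX(n,(t+1)𝔽_{4,3}) ⊆ K_t^4 ⋈ { B_4^{odd}(n−t, m) : 0 ≤ m ≤ √(4(n−t)) }. -/

import Mathlib

open Filter

namespace DensityCH

/-- An `r`-uniform hypergraph with vertices in `ℕ`:
a finite vertex set together with a set of `r`-element edges. -/
structure HGraph (r : ℕ) where
  verts : Finset ℕ
  edges : Finset (Finset ℕ)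
  edges_sub : ∀ e ∈ edges, e ⊆ verts
  edges_card : ∀ e ∈ edges, e.card = r

namespace HGraph

/-- Build an `r`-graph from a vertex set and a set of candidate edges,
keeping exactly the well-formed candidates. -/
def ofEdges (r : ℕ) (V : Finset ℕ) (E : Finset (Finset ℕ)) : HGraph r where
  verts := V
  edges := E.filter fun e => e ⊆ V ∧ e.card = r
  edges_sub := fun e he => ((Finset.mem_filter.mp he).2).1
  edges_card := fun e he => ((Finset.mem_filter.mp he).2).2

variable {r : ℕ}

/-- `H` contains a copy of `F`, i.e. a subgraph isomorphic to `F`. -/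
def IsCopyIn (F H : HGraph r) : Prop :=
  ∃ f : ℕ → ℕ, Set.InjOn f ↑F.verts ∧ (∀ v ∈ F.verts, f v ∈ H.verts) ∧
    ∀ e ∈ F.edges, e.image f ∈ H.edges

/-- The subgraph of `H` induced on `S`. -/
def induce (H : HGraph r) (S : Finset ℕ) : HGraph r :=
  ofEdges r (H.verts ∩ S) (H.edges.filter fun e => e ⊆ S)

/-- Delete a vertex from `H`. -/
def deleteVert (H : HGraph r) (v : ℕ) : HGraph r :=
  ofEdges r (H.verts.erase v) (H.edges.filter fun e => v ∉ e)

/-- The degree of a vertex. -/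
def deg (H : HGraph r) (v : ℕ) : ℕ := (H.edges.filter fun e => v ∈ e).card

/-- The maximum degree `Δ(H)`. -/
def maxDeg (H : HGraph r) : ℕ := H.verts.sup H.deg

/-- The minimum degree `δ(H)`. -/
def minDeg (H : HGraph r) : ℕ :=
  if h : H.verts.Nonempty then H.verts.inf' h H.deg else 0

/-- The average degree `d(H) = r·|E(H)|/|V(H)|`. -/
noncomputable def avgDeg (H : HGraph r) : ℝ :=
  (r : ℝ) * (H.edges.card : ℝ) / (H.verts.card : ℝ)

/-- `H` contains `k` pairwise vertex-disjoint copies of `F`, i.e. `ν(F,H) ≥ k`. -/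
def HasMatching (F H : HGraph r) (k : ℕ) : Prop :=
  ∃ S : Fin k → Finset ℕ,
    (∀ i, S i ⊆ H.verts ∧ (S i).card = F.verts.card) ∧
    (∀ i j, i ≠ j → Disjoint (S i) (S j)) ∧
    ∀ i, F.IsCopyIn (H.induce (S i))

/-- Isomorphism of hypergraphs. -/
def Iso (G H : HGraph r) : Prop :=
  ∃ f : ℕ → ℕ, Set.BijOn f ↑G.verts ↑H.verts ∧
    ∀ e ∈ Finset.powersetCard r G.verts, (e ∈ G.edges ↔ e.image f ∈ H.edges)

/-- The join `G ⋈ H`: all edges of `G`, all edges of `H`, and all `r`-sets meeting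
both vertex sets. -/
def join (G H : HGraph r) : HGraph r :=
  ofEdges r (G.verts ∪ H.verts)
    (G.edges ∪ H.edges ∪ ((Finset.powersetCard r (G.verts ∪ H.verts)).filter
      fun e => (e ∩ G.verts).Nonempty ∧ (e ∩ H.verts).Nonempty))

end HGraph

/-- The complete `r`-graph on a vertex set `S`. -/
def completeOn (r : ℕ) (S : Finset ℕ) : HGraph r :=
  HGraph.ofEdges r S (Finset.powersetCard r S)

/-- The `r`-graph on `V` with no edges. -/
def emptyOn (r : ℕ) (V : Finset ℕ) : HGraph r := HGraph.ofEdges r V ∅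

/-- The Turán number `ex(n,F)`. -/
noncomputable def exN (r n : ℕ) (F : HGraph r) : ℕ :=
  sSup {m | ∃ H : HGraph r, H.verts.card = n ∧ ¬ F.IsCopyIn H ∧ H.edges.card = m}

/-- `d(n,F) = r·ex(n,F)/n`. -/
noncomputable def dN (r n : ℕ) (F : HGraph r) : ℝ := (r : ℝ) * (exN r n F : ℝ) / (n : ℝ)

/-- `δ(n,F) = ex(n,F) − ex(n−1,F)` (as a real number). -/
noncomputable def deltaN (r n : ℕ) (F : HGraph r) : ℝ := (exN r n F : ℝ) - (exN r (n-1) F : ℝ)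

/-- `x` is the Turán density `π(F)`, i.e. the limit of `ex(n,F)/C(n,r)`. -/
def HasTuranDensity (r : ℕ) (F : HGraph r) (x : ℝ) : Prop :=
  Tendsto (fun n : ℕ => (exN r n F : ℝ) / (n.choose r : ℝ)) atTop (nhds x)

/-- `ex(n,(t+1)F)`: the maximum number of edges of an `n`-vertex `r`-graph with no
`t+1` pairwise vertex-disjoint copies of `F`. -/
noncomputable def exMatchN (r n t : ℕ) (F : HGraph r) : ℕ :=
  sSup {m | ∃ H : HGraph r, H.verts.card = n ∧ ¬ F.HasMatching H (t+1) ∧ H.edges.card = m}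

/-- `H ∈ EX(n,F)`. -/
def IsExtremalFree (r n : ℕ) (F H : HGraph r) : Prop :=
  H.verts.card = n ∧ ¬ F.IsCopyIn H ∧ H.edges.card = exN r n F

/-- `H ∈ EX(n,(t+1)F)`. -/
def IsExtremalMatchingFree (r n t : ℕ) (F H : HGraph r) : Prop :=
  H.verts.card = n ∧ ¬ F.HasMatching H (t+1) ∧ H.edges.card = exMatchN r n t F

/-- `F` is `(f1, f2)`-bounded at `n`. -/
def BoundedAt (r n : ℕ) (F : HGraph r) (f1 f2 : ℝ) : Prop :=
  ∀ H : HGraph r, H.verts.card = n → ¬ F.IsCopyIn H →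
    dN r n F - f1 ≤ H.avgDeg → (H.maxDeg : ℝ) ≤ dN r n F + f2

/-- `ex(·,F)` is `g`-smooth at `n`: `|δ(n,F) − d(n−1,F)| ≤ g(n)`. -/
def SmoothAt (r n : ℕ) (F : HGraph r) (g : ℝ) : Prop :=
  |deltaN r n F - dN r (n-1) F| ≤ g

/-- The collection `H 0, …, H t` (on a common vertex set) has a rainbow `F`-matching. -/
def HasRainbowMatching (r t : ℕ) (F : HGraph r) (H : Fin (t+1) → HGraph r) : Prop :=
  ∃ S : Fin (t+1) → Finset ℕ,
    (∀ i, S i ⊆ (H i).verts ∧ (S i).card = F.verts.card) ∧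
    (∀ i j, i ≠ j → Disjoint (S i) (S j)) ∧
    ∀ i, F.IsCopyIn ((H i).induce (S i))

/-!  Patterns -/

/-- An `r`-uniform pattern: a finite index set together with a collection of
`r`-multisets on it. -/
structure Pattern (r : ℕ) where
  idx : Finset ℕ
  mE : Finset (Multiset ℕ)
  card_eq : ∀ s ∈ mE, Multiset.card s = r
  mem_idx : ∀ s ∈ mE, ∀ i ∈ s, i ∈ idx

namespace Pattern

variable {r : ℕ}

/-- The pattern `P − i`. -/
def erase (P : Pattern r) (i : ℕ) : Pattern r where
  idx := P.idx.erase i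
  mE := P.mE.filter fun s => i ∉ s
  card_eq := fun s hs => P.card_eq s (Finset.mem_filter.mp hs).1
  mem_idx := by
    intro s hs j hj
    have h1 := Finset.mem_filter.mp hs
    refine Finset.mem_erase.mpr ⟨?_, P.mem_idx s h1.1 j hj⟩
    rintro rfl
    exact h1.2 hj

/-- `H` is a `P`-construction: a blowup of the pattern `P`. -/
def IsConstruction (P : Pattern r) (H : HGraph r) : Prop :=
  ∃ part : ℕ → ℕ, (∀ v ∈ H.verts, part v ∈ P.idx) ∧
    ∀ e : Finset ℕ, e ∈ H.edges ↔ (e ⊆ H.verts ∧ e.card = r ∧ Multiset.map part e.val ∈ P.mE)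

/-- `H` is a `P`-subconstruction: a subgraph of a `P`-construction. -/
def IsSubconstruction (P : Pattern r) (H : HGraph r) : Prop :=
  ∃ G : HGraph r, P.IsConstruction G ∧ H.verts ⊆ G.verts ∧ H.edges ⊆ G.edges

end Pattern

/-- `Λ(P,n)`: the maximum number of edges of an `n`-vertex `P`-construction. -/
noncomputable def patEx (r : ℕ) (P : Pattern r) (n : ℕ) : ℕ :=
  sSup {m | ∃ H : HGraph r, P.IsConstruction H ∧ H.verts.card = n ∧ H.edges.card = m}

/-- The Lagrangian `λ(P) = lim Λ(P,n)/C(n,r)`. -/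
noncomputable def patLagrangian (r : ℕ) (P : Pattern r) : ℝ :=
  limUnder atTop fun n : ℕ => (patEx r P n : ℝ) / (n.choose r : ℝ)

/-- The pattern `P` is minimal: `λ(P−i) < λ(P)` for all `i`. -/
def Pattern.Minimal {r : ℕ} (P : Pattern r) : Prop :=
  ∀ i ∈ P.idx, patLagrangian r (P.erase i) < patLagrangian r P

/-- `(F,P)` is a Turán pair. -/
def IsTuranPair (r : ℕ) (F : HGraph r) (P : Pattern r) : Prop :=
  (∀ H : HGraph r, P.IsConstruction H → ¬ F.IsCopyIn H) ∧
  (∀ H : HGraph r, ¬ F.IsCopyIn H → H.edges.card = exN r H.verts.card F →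
    P.IsConstruction H)

/-- `F` is edge-stable with respect to `P` (with Turán density `π`). -/
def EdgeStable (r : ℕ) (F : HGraph r) (P : Pattern r) (π : ℝ) : Prop :=
  ∀ δ : ℝ, 0 < δ → ∃ N₀ : ℕ, ∃ ζ : ℝ, 0 < ζ ∧
    ∀ H : HGraph r, N₀ ≤ H.verts.card → ¬ F.IsCopyIn H →
      (π - ζ) * (H.verts.card.choose r : ℝ) ≤ (H.edges.card : ℝ) →
      ∃ H' : HGraph r, H'.verts ⊆ H.verts ∧ H'.edges ⊆ H.edges ∧
        (π - δ) * (H.verts.card.choose r : ℝ) ≤ (H'.edges.card : ℝ) ∧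
        P.IsSubconstruction H'

/-- `F` is weakly vertex-extendable with respect to `P` (with Turán density `π`). -/
def WeaklyVertexExtendable (r : ℕ) (F : HGraph r) (P : Pattern r) (π : ℝ) : Prop :=
  ∀ δ : ℝ, 0 < δ → ∃ N₀ : ℕ, ∃ ζ : ℝ, 0 < ζ ∧
    ∀ H : HGraph r, N₀ ≤ H.verts.card → ¬ F.IsCopyIn H →
      (π - ζ) * (((H.verts.card - 1).choose (r-1) : ℕ) : ℝ) ≤ (H.minDeg : ℝ) →
      ∀ v ∈ H.verts, P.IsSubconstruction (H.deleteVert v) →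
        (H.deg v : ℝ) ≤ (π + δ) * (((H.verts.card - 1).choose (r-1) : ℕ) : ℝ)

/-- `F` is degree-stable with respect to `P` (with Turán density `π`). -/
def DegreeStable (r : ℕ) (F : HGraph r) (P : Pattern r) (π : ℝ) : Prop :=
  ∃ ζ : ℝ, 0 < ζ ∧ ∃ N₀ : ℕ,
    ∀ H : HGraph r, N₀ ≤ H.verts.card → ¬ F.IsCopyIn H →
      (π - ζ) * (((H.verts.card - 1).choose (r-1) : ℕ) : ℝ) ≤ (H.minDeg : ℝ) →
      P.IsSubconstruction H

/-!  Concrete constructions -/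

/-- The generalized Turán graph `T_r(·,ℓ)` on vertex set `V` (parts are residue
classes mod `ℓ`; on an interval these are balanced). -/
def turanOn (r ℓ : ℕ) (V : Finset ℕ) : HGraph r :=
  HGraph.ofEdges r V ((Finset.powersetCard r V).filter
    fun e => ∀ u ∈ e, ∀ v ∈ e, u % ℓ = v % ℓ → u = v)

/-- The `r`-graph on `V₁ ∪ V₂` whose edges are all `r`-sets meeting both parts. -/
def crossOn (r : ℕ) (V₁ V₂ : Finset ℕ) : HGraph r :=
  HGraph.ofEdges r (V₁ ∪ V₂) ((Finset.powersetCard r (V₁ ∪ V₂)).filter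
    fun e => (e ∩ V₁).Nonempty ∧ (e ∩ V₂).Nonempty)

/-- The `r`-graph on `V₁ ∪ V₂` whose edges are all `r`-sets meeting `V₁` in an odd
number of vertices. -/
def oddCross (r : ℕ) (V₁ V₂ : Finset ℕ) : HGraph r :=
  HGraph.ofEdges r (V₁ ∪ V₂) ((Finset.powersetCard r (V₁ ∪ V₂)).filter
    fun e => Odd (e ∩ V₁).card)

/-- The Fano plane. -/
def fano : HGraph 3 :=
  HGraph.ofEdges 3 (Finset.Icc 1 7)
    {({1,2,3} : Finset ℕ), {3,4,5}, {5,6,1}, {1,7,4}, {2,7,5}, {3,7,6}, {2,4,6}}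

/-- The generalized triangle `𝕋_r`, with edges `{1,…,r}`, `{1,…,r−1,r+1}` and
`{r,…,2r−1}`. -/
def genTri (r : ℕ) : HGraph r :=
  HGraph.ofEdges r (Finset.Icc 1 (2*r - 1))
    {Finset.Icc 1 r, Finset.Icc 1 (r-1) ∪ {r+1}, Finset.Icc r (2*r - 1)}

/-- `G` is a blowup of the `r`-graph `W` (viewing `W` as a pattern). -/
def IsBlowupOf {r : ℕ} (W G : HGraph r) : Prop :=
  ∃ part : ℕ → ℕ, (∀ v ∈ G.verts, part v ∈ W.verts) ∧
    ∀ e : Finset ℕ, e ∈ G.edges ↔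
      (e ⊆ G.verts ∧ e.card = r ∧ ∃ f ∈ W.edges, Multiset.map part e.val = f.val)

/-- The expansion `H^F` of an `r`-graph `F`: for every pair of vertices not covered
by an edge of `F`, add an edge consisting of this pair plus `r−2` new vertices,
these sets of new vertices being pairwise disjoint. -/
def HGraph.expansion {r : ℕ} (F : HGraph r) : HGraph r :=
  HGraph.ofEdges r
    (F.verts ∪ (((F.verts ×ˢ F.verts).filter fun p =>
        p.1 < p.2 ∧ ∀ e ∈ F.edges, ¬ (p.1 ∈ e ∧ p.2 ∈ e)).biUnion fun p =>
      (Finset.range (r-2)).image fun s =>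
        (F.verts.sup id + 1) + (p.1 * (F.verts.sup id + 1) + p.2) * r + s))
    (F.edges ∪ (((F.verts ×ˢ F.verts).filter fun p =>
        p.1 < p.2 ∧ ∀ e ∈ F.edges, ¬ (p.1 ∈ e ∧ p.2 ∈ e)).image fun p =>
      insert p.1 (insert p.2 ((Finset.range (r-2)).image fun s =>
        (F.verts.sup id + 1) + (p.1 * (F.verts.sup id + 1) + p.2) * r + s))))

/-- A `2`-graph is a tree on `k` vertices: `k` vertices, `k−1` edges, connected. -/
def IsTreeGraph (k : ℕ) (T : HGraph 2) : Prop :=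
  T.verts.card = k ∧ T.edges.card = k - 1 ∧
  ∀ S : Finset ℕ, S ⊆ T.verts → S.Nonempty → S ≠ T.verts →
    ∃ e ∈ T.edges, (e ∩ S).Nonempty ∧ (e \ S).Nonempty

/-- `T` satisfies the Erdős–Sós property for `k`: every graph with average degree
greater than `k−2` contains `T`. -/
def ErdosSos (k : ℕ) (T : HGraph 2) : Prop :=
  ∀ G : HGraph 2, ((k : ℝ) - 2) * (G.verts.card : ℝ) < 2 * (G.edges.card : ℝ) →
    T.IsCopyIn G

/-- The `(r−2)`-expansion `Exp(T)` of a `2`-graph `T`: enlarge every edge by one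
common fixed set of `r−2` new vertices. -/
def expTree (r : ℕ) (T : HGraph 2) : HGraph r :=
  HGraph.ofEdges r
    (T.verts ∪ ((Finset.range (r-2)).image fun s => T.verts.sup id + 1 + s))
    (T.edges.image fun e =>
      e ∪ ((Finset.range (r-2)).image fun s => T.verts.sup id + 1 + s))

/-- The chromatic number of a `2`-graph. -/
noncomputable def chrom (F : HGraph 2) : ℕ :=
  sInf {k | ∃ c : ℕ → ℕ, (∀ v ∈ F.verts, c v < k) ∧
    ∀ e ∈ F.edges, ∀ u ∈ e, ∀ v ∈ e, u ≠ v → c u ≠ c v}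

/-- A graph is edge-critical if deleting some edge lowers its chromatic number. -/
def EdgeCritical (F : HGraph 2) : Prop :=
  ∃ e ∈ F.edges, chrom (HGraph.ofEdges 2 F.verts (F.edges.erase e)) < chrom F

/-- `H` is semibipartite: the vertex set splits into `V₁ ∪ V₂` so that every edge
has exactly one vertex in `V₁`. -/
def Semibipartite (r : ℕ) (H : HGraph r) : Prop :=
  ∃ V₁ ⊆ H.verts, ∀ e ∈ H.edges, (e ∩ V₁).card = 1

/-- `H` is a `K_ℓ^r`-subconstruction, i.e. an `ℓ`-partite `r`-graph. -/
def IsKlSub (r ℓ : ℕ) (H : HGraph r) : Prop :=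
  ∃ f : ℕ → ℕ, (∀ v ∈ H.verts, f v < ℓ) ∧
    ∀ e ∈ H.edges, ∀ u ∈ e, ∀ v ∈ e, f u = f v → u = v

/-- The Lagrangian `λ(W)` of an `r`-graph `W`, viewing `W` as a pattern. -/
noncomputable def hgLagrangian (r : ℕ) (W : HGraph r) : ℝ :=
  limUnder atTop fun n : ℕ =>
    ((sSup {m | ∃ G : HGraph r, IsBlowupOf W G ∧ G.verts.card = n ∧ G.edges.card = m} : ℕ) : ℝ)
      / (n.choose r : ℝ)

/-- The `r`-graph `B(r,ℓ+1)`. -/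
def BGraph (r ℓ : ℕ) : HGraph r :=
  HGraph.ofEdges r (Finset.Icc 1 (ℓ+1))
    (insert (Finset.Icc 1 r)
      ((Finset.powersetCard r (Finset.Icc 2 (ℓ+1))).filter
        fun e => (e ∩ Finset.Icc 2 r).card ≤ 1))

/-- The `r`-uniform matching of size two, `M_2^r`. -/
def matching2 (r : ℕ) : HGraph r :=
  HGraph.ofEdges r (Finset.Icc 1 (2*r)) {Finset.Icc 1 r, Finset.Icc (r+1) (2*r)}

/-- The expanded triangle `𝓒_3^{2r}`. -/
def expandedTriangle (r : ℕ) : HGraph (2*r) :=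
  HGraph.ofEdges (2*r) (Finset.Icc 1 (3*r))
    {Finset.Icc 1 (2*r), Finset.Icc (r+1) (3*r), Finset.Icc 1 r ∪ Finset.Icc (2*r+1) (3*r)}

/-- The `4`-graph `𝔽_{4,3}`. -/
def F43 : HGraph 4 :=
  HGraph.ofEdges 4 (Finset.Icc 1 7)
    {({1,2,3,4} : Finset ℕ), {1,2,3,5}, {1,2,3,6}, {1,2,3,7}, {4,5,6,7}}

/-- The `3`-graph `𝔽_{3,2}`. -/
def F32 : HGraph 3 :=
  HGraph.ofEdges 3 (Finset.Icc 1 5)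
    {({1,2,3} : Finset ℕ), {1,2,4}, {1,2,5}, {3,4,5}}

/-- `H` contains pairwise vertex-disjoint copies of `F i`, `ts i` many of each. -/
def HasMixedMatching (r k : ℕ) (F : Fin k → HGraph r) (ts : Fin k → ℕ)
    (H : HGraph r) : Prop :=
  ∃ S : (i : Fin k) → Fin (ts i) → Finset ℕ,
    (∀ i j, S i j ⊆ H.verts ∧ (S i j).card = (F i).verts.card) ∧
    (∀ p q : Σ i : Fin k, Fin (ts i), p ≠ q → Disjoint (S p.1 p.2) (S q.1 q.2)) ∧
    ∀ i j, (F i).IsCopyIn (H.induce (S i j))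

/-- `ex(n, ⊔ᵢ tᵢ Fᵢ)`. -/
noncomputable def exMixedN (r k : ℕ) (F : Fin k → HGraph r) (ts : Fin k → ℕ)
    (n : ℕ) : ℕ :=
  sSup {m | ∃ H : HGraph r, H.verts.card = n ∧ ¬ HasMixedMatching r k F ts H ∧
    H.edges.card = m}

/-- `ex(n, {F₁,…,F_k})`. -/
noncomputable def exFamN (r k : ℕ) (F : Fin k → HGraph r) (n : ℕ) : ℕ :=
  sSup {m | ∃ H : HGraph r, H.verts.card = n ∧ (∀ i, ¬ (F i).IsCopyIn H) ∧
    H.edges.card = m}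


/-- Independent neighbourhoods: no triple has all vertices of an edge as neighbours. -/
def Ind (E : Finset (Finset ℕ)) : Prop :=
  ∀ T f : Finset ℕ, T.card = 3 → f ∈ E → (∀ w ∈ f, insert w T ∈ E) → False

/-- The neighbourhood of a triple. -/
def nb (E : Finset (Finset ℕ)) (V T : Finset ℕ) : Finset ℕ := V.filter (fun w => insert w T ∈ E)

/-- The degree of a vertex. -/
def dg (E : Finset (Finset ℕ)) (v : ℕ) : ℕ := (E.filter (fun f => v ∈ f)).card

/-- The quadruples of `V` meeting `A` in an odd number of points. -/
def oddQ (V A : Finset ℕ) : Finset (Finset ℕ) :=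
  (Finset.powersetCard 4 V).filter (fun q => Odd (q ∩ A).card)

lemma card_types (V A : Finset ℕ) (i j : ℕ) :
    ((Finset.powersetCard (i + j) V).filter (fun T => (T ∩ A).card = i)).card
      = (V ∩ A).card.choose i * (V \ A).card.choose j := by
  rw [← Finset.card_powersetCard, ← Finset.card_powersetCard, ← Finset.card_product]
  refine Finset.card_bij' (fun T _ => (T ∩ A, T \ A)) (fun p _ => p.1 ∪ p.2) ?_ ?_ ?_ ?_
  · intro T hT
    simp only [Finset.mem_filter, Finset.mem_powersetCard, Finset.mem_product] at hT ⊢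
    refine ⟨⟨Finset.inter_subset_inter_right hT.1.1, hT.2⟩, Finset.sdiff_subset_sdiff hT.1.1 le_rfl, ?_⟩
    have := Finset.card_inter_add_card_sdiff T A
    omega
  · rintro ⟨X, Y⟩ hp
    simp only [Finset.mem_filter, Finset.mem_powersetCard, Finset.mem_product] at hp ⊢
    obtain ⟨⟨h1, h2⟩, h3, h4⟩ := hp
    have hd : Disjoint X Y := by
      rw [Finset.disjoint_left]
      intro a ha hb
      exact (Finset.mem_sdiff.1 (h3 hb)).2 (Finset.mem_inter.1 (h1 ha)).2
    refine ⟨⟨?_, ?_⟩, ?_⟩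
    · exact Finset.union_subset (h1.trans Finset.inter_subset_left) (h3.trans Finset.sdiff_subset)
    · rw [Finset.card_union_of_disjoint hd]; omega
    · have : (X ∪ Y) ∩ A = X := by
        ext a
        simp only [Finset.mem_inter, Finset.mem_union]
        constructor
        · rintro ⟨h | h, h'⟩
          · exact h
          · exact absurd h' (Finset.mem_sdiff.1 (h3 h)).2
        · intro h; exact ⟨Or.inl h, (Finset.mem_inter.1 (h1 h)).2⟩
      rw [this]; exact h2
  · intro T hT
    ext a
    simp only [Finset.mem_inter, Finset.mem_union, Finset.mem_sdiff]
    tauto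
  · rintro ⟨X, Y⟩ hp
    simp only [Finset.mem_powersetCard, Finset.mem_product] at hp
    obtain ⟨⟨h1, h2⟩, h3, h4⟩ := hp
    have hX : ∀ a ∈ X, a ∈ A := fun a ha => (Finset.mem_inter.1 (h1 ha)).2
    have hY : ∀ a ∈ Y, a ∉ A := fun a ha => (Finset.mem_sdiff.1 (h3 ha)).2
    simp only [Prod.mk.injEq]
    constructor <;> ext a <;> simp only [Finset.mem_inter, Finset.mem_union, Finset.mem_sdiff] <;>
      have := hX a <;> have := hY a <;> tauto

lemma double_count {α β : Type*} [DecidableEq α] [DecidableEq β] (s : Finset α) (t : Finset β)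
    (r : α → β → Prop) [∀ a b, Decidable (r a b)] :
    ∑ a ∈ s, (t.filter (fun b => r a b)).card = ∑ b ∈ t, (s.filter (fun a => r a b)).card :=
  Finset.sum_card_bipartiteAbove_eq_sum_card_bipartiteBelow r

lemma codeg_eq {V : Finset ℕ} {E : Finset (Finset ℕ)} (hU : E ⊆ Finset.powersetCard 4 V)
    {T : Finset ℕ} (hT : T.card = 3) :
    (E.filter (fun f => T ⊆ f)).card = (nb E V T).card := by
  symm
  refine Finset.card_bij (fun w _ => insert w T) ?_ ?_ ?_
  · intro w hw
    simp only [nb, Finset.mem_filter] at hw ⊢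
    exact ⟨hw.2, Finset.subset_insert _ _⟩
  · intro w hw w' hw' h
    simp only [nb, Finset.mem_filter] at hw hw'
    have h4 := (Finset.mem_powersetCard.1 (hU hw.2)).2
    have hn : w ∉ T := by
      intro h0; rw [Finset.insert_eq_of_mem h0] at h4; omega
    have : w ∈ insert w' T := h ▸ Finset.mem_insert_self w T
    rcases Finset.mem_insert.1 this with h1 | h1
    · exact h1
    · exact absurd h1 hn
  · intro f hf
    simp only [Finset.mem_filter] at hf
    have h4 := Finset.mem_powersetCard.1 (hU hf.1)
    have hc : (f \ T).card = 1 := by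
      rw [Finset.card_sdiff_of_subset hf.2]; omega
    obtain ⟨w, hw⟩ := Finset.card_eq_one.1 hc
    have hwf : insert w T = f := by
      have := Finset.sdiff_union_of_subset hf.2
      rw [hw] at this
      rw [Finset.insert_eq]; exact this
    refine ⟨w, ?_, hwf⟩
    simp only [nb, Finset.mem_filter, hwf, hf.1, and_true]
    apply h4.1
    have : w ∈ f \ T := by rw [hw]; simp
    exact (Finset.mem_sdiff.1 this).1

lemma filter_sub_powersetCard {V f : Finset ℕ} (h : f ⊆ V) (k : ℕ) (p : Finset ℕ → Prop) [DecidablePred p] :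
    ((Finset.powersetCard k V).filter p).filter (fun T => T ⊆ f)
     = (Finset.powersetCard k f).filter p := by
  ext T
  simp only [Finset.mem_filter, Finset.mem_powersetCard]
  constructor
  · rintro ⟨⟨⟨h1, h2⟩, h3⟩, h4⟩; exact ⟨⟨h4, h2⟩, h3⟩
  · rintro ⟨⟨h1, h2⟩, h3⟩; exact ⟨⟨⟨h1.trans h, h2⟩, h3⟩, h1⟩

lemma six_choose_three (s : ℕ) : 6 * s.choose 3 ≤ s ^ 3 := by
  have := Nat.choose_le_pow_div (α := ℚ) 3 s
  have h6 : ((3 : ℕ).factorial : ℚ) = 6 := by norm_num [Nat.factorial]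
  rw [h6, le_div_iff₀ (by norm_num)] at this
  have h2 : ((6 * s.choose 3 : ℕ) : ℚ) ≤ ((s ^ 3 : ℕ) : ℚ) := by push_cast; linarith
  exact_mod_cast h2

lemma two_choose_two (s : ℕ) : 2 * s.choose 2 ≤ s ^ 2 := by
  have := Nat.choose_le_pow_div (α := ℚ) 2 s
  have h6 : ((2 : ℕ).factorial : ℚ) = 2 := by norm_num [Nat.factorial]
  rw [h6, le_div_iff₀ (by norm_num)] at this
  have h2 : ((2 * s.choose 2 : ℕ) : ℚ) ≤ ((s ^ 2 : ℕ) : ℚ) := by push_cast; linarith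
  exact_mod_cast h2

theorem key {V : Finset ℕ} {E : Finset (Finset ℕ)} (hU : E ⊆ Finset.powersetCard 4 V)
    (hI : Ind E) (d : ℝ) (hd : ∀ v ∈ V, d ≤ dg E v) (hne : E.Nonempty) :
    ∃ A ⊆ V, 24 * E.card ≤ V.card ^ 3 * A.card ∧
      3 * A.card * d + ((E \ oddQ V A).card : ℝ) ≤ 3 * E.card + A.card ^ 3 * (V \ A).card := by
  classical
  have hTne : (Finset.powersetCard 3 V).Nonempty := by
    obtain ⟨f, hf⟩ := hne
    have := Finset.mem_powersetCard.1 (hU hf)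
    apply Finset.powersetCard_nonempty_of_le
    have h1 := Finset.card_le_card this.1
    omega
  obtain ⟨T0, hT0, hmax⟩ := Finset.exists_max_image _ (fun T => (nb E V T).card) hTne
  set A := nb E V T0 with hA
  have hAV : A ⊆ V := Finset.filter_subset _ _
  have hT0c := (Finset.mem_powersetCard.1 hT0).2
  have hcod : ∀ T ∈ Finset.powersetCard 3 V, (E.filter (fun f => T ⊆ f)).card ≤ A.card := by
    intro T hT
    rw [codeg_eq hU (Finset.mem_powersetCard.1 hT).2]
    exact hmax T hT
  refine ⟨A, hAV, ?_, ?_⟩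
  · have h1 : ∑ T ∈ Finset.powersetCard 3 V, (E.filter (fun f => T ⊆ f)).card
        ≤ (Finset.powersetCard 3 V).card * A.card := by
      rw [← smul_eq_mul]
      exact Finset.sum_le_card_nsmul _ _ _ hcod
    rw [double_count] at h1
    have h2 : ∑ f ∈ E, ((Finset.powersetCard 3 V).filter (fun T => T ⊆ f)).card = E.card * 4 := by
      rw [← smul_eq_mul]
      apply Finset.sum_const_nat
      intro f hf
      have hf' := Finset.mem_powersetCard.1 (hU hf)
      have := filter_sub_powersetCard hf'.1 3 (fun _ => True)
      simp only [Finset.filter_true] at this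
      rw [this, Finset.card_powersetCard, hf'.2]; rfl
    rw [h2, Finset.card_powersetCard] at h1
    have h3 := six_choose_three V.card
    calc 24 * E.card = 6 * (E.card * 4) := by ring
      _ ≤ 6 * (V.card.choose 3 * A.card) := by omega
      _ = (6 * V.card.choose 3) * A.card := by ring
      _ ≤ _ := Nat.mul_le_mul_right _ h3
  · have hind : ∀ f ∈ E, (f ∩ A).card ≤ 3 := by
      intro f hf
      by_contra hcon
      have hf' := Finset.mem_powersetCard.1 (hU hf)
      have h1 : f ∩ A = f := Finset.eq_of_subset_of_card_le Finset.inter_subset_left (by omega)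
      refine hI T0 f hT0c hf ?_
      intro w hw
      have : w ∈ A := (Finset.mem_inter.1 (h1.symm ▸ hw : w ∈ f ∩ A)).2
      exact (Finset.mem_filter.1 this).2
    have hdeg : ∑ v ∈ A, dg E v = ∑ f ∈ E, (f ∩ A).card := by
      unfold dg
      rw [double_count]
      apply Finset.sum_congr rfl
      intro f hf
      rw [Finset.filter_mem_eq_inter, Finset.inter_comm]
    have h2T : ∑ f ∈ E, (f ∩ A).card.choose 2 * (4 - (f ∩ A).card) ≤
        (A.card.choose 2 * (V \ A).card) * A.card := by
      have h1 : ∑ T ∈ (Finset.powersetCard 3 V).filter (fun T => (T ∩ A).card = 2),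
          (E.filter (fun f => T ⊆ f)).card
          ≤ ((Finset.powersetCard 3 V).filter (fun T => (T ∩ A).card = 2)).card * A.card := by
        rw [← smul_eq_mul]
        exact Finset.sum_le_card_nsmul _ _ _ (fun T hT => hcod T (Finset.mem_filter.1 hT).1)
      rw [double_count, card_types V A 2 1, Nat.choose_one_right,
        Finset.inter_eq_right.2 hAV] at h1
      refine le_trans (le_of_eq ?_) h1
      apply Finset.sum_congr rfl
      intro f hf
      have hf' := Finset.mem_powersetCard.1 (hU hf)
      rw [filter_sub_powersetCard hf'.1, card_types f A 2 1, Nat.choose_one_right]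
      congr 1
      have := Finset.card_inter_add_card_sdiff f A
      omega
    have hbad : (E \ oddQ V A).card = ∑ f ∈ E, if Odd (f ∩ A).card then 0 else 1 := by
      have : E \ oddQ V A = E.filter (fun f => ¬ Odd (f ∩ A).card) := by
        ext f
        simp only [oddQ, Finset.mem_sdiff, Finset.mem_filter]
        constructor
        · rintro ⟨h1, h2⟩; exact ⟨h1, fun h => h2 ⟨hU h1, h⟩⟩
        · rintro ⟨h1, h2⟩; exact ⟨h1, fun h => h2 h.2⟩
      rw [this, Finset.card_filter]
      apply Finset.sum_congr rfl
      intro f _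
      by_cases h : Odd (f ∩ A).card <;> simp [h]
    have hmain : 3 * ∑ v ∈ A, dg E v + (E \ oddQ V A).card ≤
        3 * E.card + A.card ^ 3 * (V \ A).card := by
      have hp : ∑ f ∈ E, (3 * (f ∩ A).card + if Odd (f ∩ A).card then 0 else 1) ≤
          ∑ f ∈ E, (3 + 2 * ((f ∩ A).card.choose 2 * (4 - (f ∩ A).card))) := by
        apply Finset.sum_le_sum
        intro f hf
        have := hind f hf
        generalize (f ∩ A).card = c at this
        interval_cases c <;> decide
      rw [Finset.sum_add_distrib, Finset.sum_add_distrib, ← Finset.mul_sum, ← Finset.mul_sum,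
        ← hdeg, ← hbad, Finset.sum_const, smul_eq_mul] at hp
      have h2 := two_choose_two A.card
      have h3 : 2 * ((A.card.choose 2 * (V \ A).card) * A.card) ≤ A.card ^ 3 * (V \ A).card := by
        calc _ = (2 * A.card.choose 2) * ((V \ A).card * A.card) := by ring
          _ ≤ A.card ^ 2 * ((V \ A).card * A.card) := Nat.mul_le_mul_right _ h2
          _ = _ := by ring
      omega
    have hsum : (A.card : ℝ) * d ≤ ((∑ v ∈ A, dg E v : ℕ) : ℝ) := by
      push_cast
      rw [← nsmul_eq_mul]
      exact Finset.card_nsmul_le_sum _ _ _ (fun v hv => hd v (hAV hv))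
    have hm' : ((3 * ∑ v ∈ A, dg E v + (E \ oddQ V A).card : ℕ) : ℝ) ≤
        ((3 * E.card + A.card ^ 3 * (V \ A).card : ℕ) : ℝ) := by exact_mod_cast hmain
    rw [Nat.cast_add, Nat.cast_mul] at hm'
    push_cast at hm' hsum ⊢
    linarith

/-- The edges inside `S`. -/
def res (E : Finset (Finset ℕ)) (S : Finset ℕ) : Finset (Finset ℕ) := E.filter (fun f => f ⊆ S)

lemma Ind.mono {E E' : Finset (Finset ℕ)} (h : Ind E) (hs : E' ⊆ E) : Ind E' :=
  fun T f hT hf hw => h T f hT (hs hf) (fun w hw' => hs (hw w hw'))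

lemma res_subset (E : Finset (Finset ℕ)) (S : Finset ℕ) : res E S ⊆ E := Finset.filter_subset _ _

lemma res_unif {V : Finset ℕ} {E : Finset (Finset ℕ)} (hU : E ⊆ Finset.powersetCard 4 V)
    (S : Finset ℕ) : res E S ⊆ Finset.powersetCard 4 S := by
  intro f hf
  have := Finset.mem_filter.1 hf
  exact Finset.mem_powersetCard.2 ⟨this.2, (Finset.mem_powersetCard.1 (hU this.1)).2⟩

lemma res_self {V : Finset ℕ} {E : Finset (Finset ℕ)} (hU : E ⊆ Finset.powersetCard 4 V) :
    res E V = E := by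
  apply Finset.filter_true_of_mem
  intro f hf
  exact (Finset.mem_powersetCard.1 (hU hf)).1

lemma res_erase (E : Finset (Finset ℕ)) (S : Finset ℕ) (v : ℕ) :
    (res E (S.erase v)).card + dg (res E S) v = (res E S).card := by
  have h1 : res E (S.erase v) = (res E S).filter (fun f => ¬ v ∈ f) := by
    ext f
    simp only [res, Finset.mem_filter, Finset.subset_erase]
    tauto
  rw [h1, dg, add_comm]
  exact Finset.card_filter_add_card_filter_not _

lemma handshake {V : Finset ℕ} {E : Finset (Finset ℕ)} (hU : E ⊆ Finset.powersetCard 4 V) :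
    ∑ v ∈ V, dg E v = 4 * E.card := by
  unfold dg
  rw [double_count, mul_comm]
  apply Finset.sum_const_nat
  intro f hf
  have := Finset.mem_powersetCard.1 (hU hf)
  rw [Finset.filter_mem_eq_inter, Finset.inter_eq_right.2 this.1, this.2]

theorem n1 {V : Finset ℕ} {E : Finset (Finset ℕ)} (hU : E ⊆ Finset.powersetCard 4 V)
    (hI : Ind E) : (E.card : ℝ) ≤ (V.card : ℝ) ^ 4 / 48 + (V.card : ℝ) ^ 3 := by
  classical
  by_contra hcon
  push Not at hcon
  let F : ℝ → ℝ := fun s => s ^ 4 / 48 + s ^ 3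
  obtain ⟨S, hS, hmax⟩ := Finset.exists_max_image V.powerset
    (fun S => ((res E S).card : ℝ) / F S.card) ⟨V, Finset.mem_powerset_self V⟩
  set R := ((res E S).card : ℝ) / F S.card with hR
  have hFpos : ∀ k : ℕ, 0 < k → 0 < F k := by
    intro k hk
    have : (0 : ℝ) < k := by exact_mod_cast hk
    simp only [F]; positivity
  have hF0 : F (0 : ℕ) = 0 := by simp [F]
  have hVpos : 0 < V.card := by
    rcases Nat.eq_zero_or_pos V.card with h | h
    · have hV : V = ∅ := Finset.card_eq_zero.1 h
      subst hV
      have : E = ∅ := by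
        apply Finset.subset_empty.1
        refine hU.trans ?_
        simp
      subst this
      simp at hcon
    · exact h
  have hR1 : 1 < R := by
    have := hmax V (Finset.mem_powerset_self V)
    rw [res_self hU] at this
    refine lt_of_lt_of_le ?_ this
    rw [lt_div_iff₀ (hFpos _ hVpos), one_mul]
    exact hcon
  have hSpos : 0 < S.card := by
    rcases Nat.eq_zero_or_pos S.card with h | h
    · rw [hR, h, hF0, div_zero] at hR1; linarith
    · exact h
  have heS : ((res E S).card : ℝ) = R * F S.card := by
    rw [hR, div_mul_cancel₀ _ (hFpos _ hSpos).ne']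
  have hU' := res_unif hU S
  have hI' := hI.mono (res_subset E S)
  have hne : (res E S).Nonempty := by
    rw [← Finset.card_pos]
    have : (0 : ℝ) < (res E S).card := by
      rw [heS]; exact mul_pos (lt_trans one_pos hR1) (hFpos _ hSpos)
    exact_mod_cast this
  have hdeg : ∀ v ∈ S, R * (F S.card - F (S.card - 1)) ≤ dg (res E S) v := by
    intro v hv
    have h1 := res_erase E S v
    have h1' : ((res E (S.erase v)).card : ℝ) + dg (res E S) v = (res E S).card := by
      exact_mod_cast h1
    have hc : (((S.erase v).card : ℕ) : ℝ) = (S.card : ℝ) - 1 := by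
      rw [Finset.card_erase_of_mem hv]
      push_cast [Nat.cast_sub hSpos]; ring
    have h2 : ((res E (S.erase v)).card : ℝ) ≤ R * F (S.card - 1) := by
      have hle := hmax (S.erase v) (Finset.mem_powerset.2
        ((Finset.erase_subset _ _).trans (Finset.mem_powerset.1 hS)))
      rcases Nat.eq_zero_or_pos (S.erase v).card with h | h
      · have hemp : S.erase v = ∅ := Finset.card_eq_zero.1 h
        have hz : res E (S.erase v) = ∅ := by
          have := res_unif hU (S.erase v)
          rw [hemp] at this ⊢
          apply Finset.subset_empty.1
          refine this.trans ?_
          simp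
        rw [hz, ← hc, h, hF0]; simp
      · rw [← hc]
        rwa [div_le_iff₀ (hFpos _ h)] at hle
    rw [mul_sub, ← heS]
    linarith
  obtain ⟨A, hAS, hA1, hA2⟩ := key hU' hI' _ hdeg hne
  have hbeta : ((S \ A).card : ℝ) = S.card - A.card := by
    rw [Finset.card_sdiff_of_subset hAS, Nat.cast_sub (Finset.card_le_card hAS)]
  have hA1' : 24 * ((res E S).card : ℝ) ≤ (S.card : ℝ) ^ 3 * A.card := by exact_mod_cast hA1
  have hbadnn : (0 : ℝ) ≤ ((res E S \ oddQ S A).card : ℝ) := Nat.cast_nonneg _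
  have hAle : (A.card : ℝ) ≤ S.card := by exact_mod_cast Finset.card_le_card hAS
  rw [hbeta, heS] at hA2
  rw [heS] at hA1'
  have hs0 : (0 : ℝ) < S.card := by exact_mod_cast hSpos
  generalize (S.card : ℝ) = s at *
  generalize (A.card : ℝ) = a at *
  have hFs : F s = s ^ 4 / 48 + s ^ 3 := rfl
  have hFs1 : F (s - 1) = (s - 1) ^ 4 / 48 + (s - 1) ^ 3 := rfl
  have hFsp : 0 < F s := by rw [hFs]; positivity
  have h1 : 24 * F s < s ^ 3 * a := by nlinarith
  have h2 : s / 2 + 24 < a := by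
    rw [hFs] at h1
    have h3 : s ^ 3 * (s / 2 + 24) < s ^ 3 * a := by nlinarith
    exact lt_of_mul_lt_mul_left h3 (by positivity)
  have hs48 : 48 < s := by linarith
  have hdiff : s ^ 3 / 12 + 2 * s ^ 2 ≤ F s - F (s - 1) := by
    rw [hFs, hFs1]; nlinarith
  have ha0 : 0 < a := by linarith
  set Q := a * (F s - F (s - 1)) - F s with hQ
  have hQ1 : (4 * a - s) * s ^ 3 / 48 + s ^ 2 * (2 * a - s) ≤ Q := by
    have h5 := mul_le_mul_of_nonneg_left hdiff ha0.le
    rw [hQ]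
    have : F s = s ^ 4 / 48 + s ^ 3 := rfl
    nlinarith
  have h48 : 0 ≤ (4 * a - s) * s ^ 3 / 48 := by
    have : 0 ≤ 4 * a - s := by linarith
    positivity
  have h49 : 0 < s ^ 2 * (2 * a - s) := by
    have : 0 < 2 * a - s := by linarith
    positivity
  have hQpos : 0 < Q := by linarith
  have h6 : 3 * (R * Q) ≤ a ^ 3 * (s - a) := by
    have : 3 * (R * Q) = 3 * a * (R * (F s - F (s - 1))) - 3 * (R * F s) := by rw [hQ]; ring
    linarith
  have h7 : Q < R * Q := by nlinarith
  have hid : 16 * (a ^ 3 * (s - a)) = (4 * a - s) * s ^ 3 - (2 * a - s) ^ 3 * (2 * a + s) := by ring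
  have h8 : 0 ≤ (2 * a - s) ^ 3 * (2 * a + s) := by
    have : 0 < 2 * a - s := by linarith
    positivity
  linarith

theorem cleaning (V : Finset ℕ) {E : Finset (Finset ℕ)} (hU : E ⊆ Finset.powersetCard 4 V) (ρ : ℝ) :
    ∃ S ⊆ V, (∀ v ∈ S, ρ * ((S.card : ℝ) ^ 4 - ((S.card : ℝ) - 1) ^ 4) ≤ dg (res E S) v) ∧
      (E.card : ℝ) - ρ * (V.card : ℝ) ^ 4 ≤ (res E S).card - ρ * (S.card : ℝ) ^ 4 := by
  classical
  obtain ⟨S, hS, hmax⟩ := Finset.exists_max_image V.powerset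
    (fun S => ((res E S).card : ℝ) - ρ * (S.card : ℝ) ^ 4) ⟨V, Finset.mem_powerset_self V⟩
  refine ⟨S, Finset.mem_powerset.1 hS, ?_, ?_⟩
  · intro v hv
    have h1' : ((res E (S.erase v)).card : ℝ) + dg (res E S) v = (res E S).card := by
      exact_mod_cast res_erase E S v
    have hle := hmax (S.erase v) (Finset.mem_powerset.2
        ((Finset.erase_subset _ _).trans (Finset.mem_powerset.1 hS)))
    have hSpos : 0 < S.card := Finset.card_pos.2 ⟨v, hv⟩
    have hc : (((S.erase v).card : ℕ) : ℝ) = (S.card : ℝ) - 1 := by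
      rw [Finset.card_erase_of_mem hv]
      push_cast [Nat.cast_sub hSpos]; ring
    simp only [hc] at hle
    linarith
  · have := hmax V (Finset.mem_powerset_self V)
    rwa [res_self hU] at this

lemma choose3_real (a : ℕ) : (a.choose 3 : ℝ) = a * (a - 1) * (a - 2) / 6 := by
  rw [Nat.cast_choose_eq_descPochhammer_div]
  simp [descPochhammer_succ_right, Nat.factorial]

lemma oddQ_card {V A : Finset ℕ} (hA : A ⊆ V) :
    (oddQ V A).card = A.card * (V \ A).card.choose 3 + A.card.choose 3 * (V \ A).card := by
  have h1 := card_types V A 1 3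
  have h2 := card_types V A 3 1
  rw [Nat.choose_one_right, Finset.inter_eq_right.2 hA] at h1 h2
  rw [← h1, ← h2, ← Finset.card_union_of_disjoint]
  · congr 1
    ext T
    simp only [oddQ, Finset.mem_union, Finset.mem_filter, Finset.mem_powersetCard]
    constructor
    · rintro ⟨h, ho⟩
      have : (T ∩ A).card ≤ 4 := h.2 ▸ Finset.card_le_card Finset.inter_subset_left
      have h3 : (T ∩ A).card = 1 ∨ (T ∩ A).card = 3 := by
        obtain ⟨k, hk⟩ := ho; omega
      rcases h3 with h3 | h3
      · left; exact ⟨h, h3⟩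
      · right; exact ⟨h, h3⟩
    · rintro (⟨h, ho⟩ | ⟨h, ho⟩)
      · exact ⟨h, by rw [ho]; decide⟩
      · exact ⟨h, by rw [ho]; decide⟩
  · rw [Finset.disjoint_left]
    intro T h1 h2
    have := (Finset.mem_filter.1 h1).2
    have := (Finset.mem_filter.1 h2).2
    omega

/-- the number of odd quadruples -/
lemma oddQ_card_real {V A : Finset ℕ} (hA : A ⊆ V) :
    ((oddQ V A).card : ℝ) = A.card * (V \ A).card *
      ((A.card : ℝ) ^ 2 + ((V \ A).card : ℝ) ^ 2 - 3 * V.card + 4) / 6 := by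
  rw [oddQ_card hA]
  push_cast
  rw [choose3_real, choose3_real]
  have hbeta : (V.card : ℝ) = A.card + (V \ A).card := by
    have := Finset.card_sdiff_add_card_eq_card hA
    exact_mod_cast (by omega : V.card = A.card + (V \ A).card)
  rw [hbeta]
  ring

lemma oddQ_le {V A : Finset ℕ} (hA : A ⊆ V) :
    48 * ((oddQ V A).card : ℝ) ≤ (V.card : ℝ) ^ 4 - (2 * A.card - V.card : ℝ) ^ 4 := by
  rw [oddQ_card hA]
  push_cast
  have h3 : ∀ k : ℕ, 6 * (k.choose 3 : ℝ) ≤ (k : ℝ) ^ 3 := by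
    intro k; exact_mod_cast six_choose_three k
  have hbeta : (V.card : ℝ) = A.card + (V \ A).card := by
    have := Finset.card_sdiff_add_card_eq_card hA
    exact_mod_cast (by omega : V.card = A.card + (V \ A).card)
  rw [hbeta]
  have e1 := mul_le_mul_of_nonneg_left (h3 (V \ A).card) (Nat.cast_nonneg A.card : (0 : ℝ) ≤ A.card)
  have e2 := mul_le_mul_of_nonneg_left (h3 A.card) (Nat.cast_nonneg (V \ A).card : (0 : ℝ) ≤ (V \ A).card)
  nlinarith

lemma bad_miss {V : Finset ℕ} (E : Finset (Finset ℕ)) (A : Finset ℕ) :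
    E.card + (oddQ V A \ E).card = (oddQ V A).card + (E \ oddQ V A).card := by
  have h1 := Finset.card_sdiff_add_card_inter E (oddQ V A)
  have h2 := Finset.card_sdiff_add_card_inter (oddQ V A) E
  rw [Finset.inter_comm] at h2
  omega

theorem partition {V : Finset ℕ} {E : Finset (Finset ℕ)} (hU : E ⊆ Finset.powersetCard 4 V)
    (hI : Ind E) (hs : (10 : ℝ) ^ 14 ≤ V.card)
    (hd : ∀ v ∈ V, (1 / 12 - 1 / 10 ^ 12) * (V.card : ℝ) ^ 3 ≤ dg E v) :
    ∃ A ⊆ V, ((E \ oddQ V A).card : ℝ) ≤ 1 / 10 ^ 11 * (V.card : ℝ) ^ 4 ∧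
      ((oddQ V A \ E).card : ℝ) ≤ 1 / 10 ^ 11 * (V.card : ℝ) ^ 4 ∧
      |2 * (A.card : ℝ) - V.card| ≤ V.card / 250 := by
  have hhs : (V.card : ℝ) * ((1 / 12 - 1 / 10 ^ 12) * (V.card : ℝ) ^ 3) ≤ 4 * E.card := by
    have h := handshake hU
    have h2 : ((∑ v ∈ V, dg E v : ℕ) : ℝ) = 4 * E.card := by rw [h]; push_cast; ring
    rw [← h2]
    push_cast
    rw [← nsmul_eq_mul]
    exact Finset.card_nsmul_le_sum _ _ _ hd
  have hs0 : (0 : ℝ) < V.card := by linarith [show (0 : ℝ) < 10 ^ 14 by norm_num]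
  have hne : E.Nonempty := by
    rw [← Finset.card_pos]
    have : (0 : ℝ) < E.card := by
      have : 0 < (V.card : ℝ) * ((1 / 12 - 1 / 10 ^ 12) * (V.card : ℝ) ^ 3) := by
        have : (0 : ℝ) < 1 / 12 - 1 / 10 ^ 12 := by norm_num
        positivity
      linarith
    exact_mod_cast this
  obtain ⟨A, hAV, h24, hk⟩ := key hU hI _ hd hne
  have hn1 := n1 hU hI
  have hbm : (E.card : ℝ) + (oddQ V A \ E).card = (oddQ V A).card + (E \ oddQ V A).card := by
    exact_mod_cast bad_miss E A
  have hO := oddQ_le hAV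
  have h24' : 24 * (E.card : ℝ) ≤ (V.card : ℝ) ^ 3 * A.card := by exact_mod_cast h24
  have hbeta : ((V \ A).card : ℝ) = V.card - A.card := by
    rw [Finset.card_sdiff_of_subset hAV, Nat.cast_sub (Finset.card_le_card hAV)]
  have hAle : (A.card : ℝ) ≤ V.card := by exact_mod_cast Finset.card_le_card hAV
  have hm0 : (0 : ℝ) ≤ (oddQ V A \ E).card := Nat.cast_nonneg _
  rw [hbeta] at hk
  refine ⟨A, hAV, ?_⟩
  generalize (V.card : ℝ) = s at *
  generalize (A.card : ℝ) = a at *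
  generalize (E.card : ℝ) = e at *
  generalize ((oddQ V A).card : ℝ) = o at *
  generalize ((oddQ V A \ E).card : ℝ) = m at *
  generalize ((E \ oddQ V A).card : ℝ) = b at *
  have hs3 : 0 < s ^ 3 := by positivity
  have hs34 : s ^ 3 ≤ 1 / 10 ^ 14 * s ^ 4 := by
    have : s ^ 3 * 10 ^ 14 ≤ s ^ 3 * s := mul_le_mul_of_nonneg_left hs hs3.le
    have e : s ^ 4 = s ^ 3 * s := by ring
    rw [e]
    linarith
  have ha : (1 / 2 - 6 / 10 ^ 12) * s ≤ a := by
    have : s ^ 3 * ((1 / 2 - 6 / 10 ^ 12) * s) ≤ s ^ 3 * a := by nlinarith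
    exact le_of_mul_le_mul_left this hs3
  have hid : 16 * (a ^ 3 * (s - a)) = (4 * a - s) * s ^ 3 - (2 * a - s) ^ 3 * (2 * a + s) := by ring
  have hcube : -(s ^ 4) * (1 / 10 ^ 15) ≤ (2 * a - s) ^ 3 * (2 * a + s) := by
    by_cases h : 0 ≤ 2 * a - s
    · have : 0 ≤ (2 * a - s) ^ 3 * (2 * a + s) := by
        have : 0 ≤ 2 * a + s := by linarith
        positivity
      have : 0 ≤ s ^ 4 := by positivity
      linarith
    · push Not at h
      have h1 : s - 2 * a ≤ 12 / 10 ^ 12 * s := by linarith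
      have h2 : 0 ≤ s - 2 * a := by linarith
      have h3 : (s - 2 * a) ^ 3 ≤ (12 / 10 ^ 12 * s) ^ 3 := pow_le_pow_left₀ h2 h1 3
      have h4 : (s - 2 * a) ^ 3 * (2 * a + s) ≤ (12 / 10 ^ 12 * s) ^ 3 * (3 * s) := by
        apply mul_le_mul h3 (by linarith) (by linarith) (by positivity)
      have h5 : (12 / 10 ^ 12 * s) ^ 3 * (3 * s) ≤ s ^ 4 * (1 / 10 ^ 15) := by
        have : (12 / 10 ^ 12 * s) ^ 3 * (3 * s) = (12 / 10 ^ 12) ^ 3 * 3 * s ^ 4 := by ring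
        rw [this, mul_comm (s ^ 4)]
        apply mul_le_mul_of_nonneg_right _ (by positivity)
        norm_num
      nlinarith
  have has : a * s ^ 3 ≤ s ^ 4 := by nlinarith
  have hb : b ≤ 44 / 10 ^ 13 * s ^ 4 := by
    have e1 : 3 * a * ((1 / 12 - 1 / 10 ^ 12) * s ^ 3) = (1 / 4 - 3 / 10 ^ 12) * (a * s ^ 3) := by ring
    rw [e1] at hk
    have e2 : (4 * a - s) * s ^ 3 = 4 * (a * s ^ 3) - s ^ 4 := by ring
    rw [e2] at hid
    linarith
  have he : (1 / 48 - 1 / (4 * 10 ^ 12)) * s ^ 4 ≤ e := by nlinarith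
  have hs4 : 0 < s ^ 4 := by positivity
  have hq : 0 ≤ (2 * a - s) ^ 4 := by positivity
  refine ⟨by linarith, by linarith, ?_⟩
  have hq2 : (2 * a - s) ^ 4 ≤ (s / 250) ^ 4 := by
    have : (s / 250) ^ 4 = 1 / 250 ^ 4 * s ^ 4 := by ring
    rw [this]
    linarith
  have h5 : |2 * a - s| ^ 4 ≤ (s / 250) ^ 4 := by
    rwa [Even.pow_abs (by decide)]
  exact le_of_pow_le_pow_left₀ (by norm_num) (by positivity) h5

/-- The link triples of `v` inside `W`. -/
def lk (E : Finset (Finset ℕ)) (W : Finset ℕ) (v : ℕ) : Finset (Finset ℕ) :=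
  (Finset.powersetCard 3 W).filter (fun T => insert v T ∈ E)

/-- Link triples meeting `A` oddly. -/
def lkO (E : Finset (Finset ℕ)) (W A : Finset ℕ) (v : ℕ) : Finset (Finset ℕ) :=
  (lk E W v).filter (fun T => Odd (T ∩ A).card)

/-- Link triples meeting `A` evenly. -/
def lkE (E : Finset (Finset ℕ)) (W A : Finset ℕ) (v : ℕ) : Finset (Finset ℕ) :=
  (lk E W v).filter (fun T => ¬ Odd (T ∩ A).card)

lemma lkO_add_lkE (E : Finset (Finset ℕ)) (W A : Finset ℕ) (v : ℕ) :
    (lkO E W A v).card + (lkE E W A v).card = (lk E W v).card :=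
  Finset.card_filter_add_card_filter_not _

lemma inter_compl_card {W A T : Finset ℕ} (hT : T ⊆ W) :
    (T ∩ A).card + (T ∩ (W \ A)).card = T.card := by
  have : T ∩ (W \ A) = T \ A := by
    ext x
    simp only [Finset.mem_inter, Finset.mem_sdiff]
    constructor
    · rintro ⟨h1, _, h3⟩; exact ⟨h1, h3⟩
    · rintro ⟨h1, h3⟩; exact ⟨h1, hT h1, h3⟩
  rw [this]
  exact Finset.card_inter_add_card_sdiff T A

lemma oddQ_compl (W A : Finset ℕ) : oddQ W (W \ A) = oddQ W A := by
  unfold oddQ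
  apply Finset.filter_congr
  intro q hq
  have hq := Finset.mem_powersetCard.1 hq
  have := inter_compl_card (A := A) hq.1
  rw [hq.2] at this
  rw [Nat.odd_iff, Nat.odd_iff]
  omega

lemma lkO_compl (E : Finset (Finset ℕ)) (W A : Finset ℕ) (v : ℕ) :
    lkO E W (W \ A) v = lkE E W A v := by
  unfold lkO lkE
  apply Finset.filter_congr
  intro q hq
  have hq := Finset.mem_powersetCard.1 (Finset.mem_filter.1 hq).1
  have := inter_compl_card (A := A) hq.1
  rw [hq.2] at this
  rw [Nat.odd_iff, Nat.odd_iff]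
  omega

lemma lkE_compl (E : Finset (Finset ℕ)) (W A : Finset ℕ) (v : ℕ) :
    lkE E W (W \ A) v = lkO E W A v := by
  unfold lkO lkE
  apply Finset.filter_congr
  intro q hq
  have hq := Finset.mem_powersetCard.1 (Finset.mem_filter.1 hq).1
  have := inter_compl_card (A := A) hq.1
  rw [hq.2] at this
  rw [Nat.odd_iff, Nat.odd_iff]
  omega

/-- Triples of `W` meeting `X`. -/
lemma hit_card (W X : Finset ℕ) :
    ((Finset.powersetCard 3 W).filter (fun T => ¬ Disjoint T X)).card ≤ X.card * W.card ^ 2 := by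
  have hsub : (Finset.powersetCard 3 W).filter (fun T => ¬ Disjoint T X) ⊆
      (X ×ˢ (W ×ˢ W)).image (fun p => ({p.1, p.2.1, p.2.2} : Finset ℕ)) := by
    intro T hT
    obtain ⟨hT, hd⟩ := Finset.mem_filter.1 hT
    obtain ⟨hTW, hT3⟩ := Finset.mem_powersetCard.1 hT
    rw [Finset.not_disjoint_iff] at hd
    obtain ⟨x, hxT, hxX⟩ := hd
    have h2 : (T.erase x).card = 2 := by rw [Finset.card_erase_of_mem hxT]; omega
    obtain ⟨y, z, hyz, he⟩ := Finset.card_eq_two.1 h2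
    rw [Finset.mem_image]
    refine ⟨(x, y, z), ?_, ?_⟩
    · simp only [Finset.mem_product]
      have hy : y ∈ T.erase x := by rw [he]; simp
      have hz : z ∈ T.erase x := by rw [he]; simp
      exact ⟨hxX, hTW (Finset.mem_of_mem_erase hy), hTW (Finset.mem_of_mem_erase hz)⟩
    · have := Finset.insert_erase hxT
      rw [he] at this
      exact this
  calc _ ≤ _ := Finset.card_le_card hsub
    _ ≤ _ := Finset.card_image_le
    _ = _ := by rw [Finset.card_product, Finset.card_product]; ring

/-- missing odd quadruples bound the deficiency of odd link triples -/
lemma sum_def {W A : Finset ℕ} {E : Finset (Finset ℕ)} (L : Finset (Finset ℕ))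
    (hL : ∀ T ∈ L, T ⊆ W ∧ T.card = 3 ∧ Odd (T ∩ A).card) :
    ∑ T ∈ L, ((W \ A).filter (fun w => insert w T ∉ E)).card
      ≤ 4 * (oddQ W A \ E).card + 3 * L.card := by
  have h1 : ∀ T ∈ L, ((W \ A).filter (fun w => insert w T ∉ E)).card
      ≤ ((oddQ W A \ E).filter (fun q => T ⊆ q)).card + 3 := by
    intro T hT
    obtain ⟨hTW, hT3, hodd⟩ := hL T hT
    have hs : (W \ A).filter (fun w => insert w T ∉ E) ⊆
        ((W \ A).filter (fun w => insert w T ∉ E ∧ w ∉ T)) ∪ T := by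
      intro w hw
      simp only [Finset.mem_union, Finset.mem_filter] at hw ⊢
      tauto
    refine (Finset.card_le_card hs).trans ((Finset.card_union_le _ _).trans ?_)
    rw [hT3]
    apply Nat.add_le_add_right
    apply Finset.card_le_card_of_injOn (fun w => insert w T)
    · intro w hw
      simp only [Finset.coe_filter, Set.mem_ofPred_eq, Finset.mem_sdiff] at hw ⊢
      obtain ⟨⟨hwW, hwA⟩, hwE, hwT⟩ := hw
      refine ⟨⟨?_, hwE⟩, Finset.subset_insert _ _⟩
      unfold oddQ
      rw [Finset.mem_filter, Finset.mem_powersetCard]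
      refine ⟨⟨Finset.insert_subset hwW hTW, ?_⟩, ?_⟩
      · rw [Finset.card_insert_of_notMem hwT, hT3]
      · rw [Finset.insert_inter_of_notMem hwA]; exact hodd
    · intro w hw w' hw' h
      simp only [Finset.coe_filter, Set.mem_ofPred_eq] at hw hw' h
      have : w ∈ insert w' T := h ▸ Finset.mem_insert_self w T
      rcases Finset.mem_insert.1 this with h1 | h1
      · exact h1
      · exact absurd h1 hw.2.2
  have h2 : ∑ T ∈ L, ((oddQ W A \ E).filter (fun q => T ⊆ q)).card ≤ (oddQ W A \ E).card * 4 := by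
    rw [double_count, ← smul_eq_mul]
    apply Finset.sum_le_card_nsmul
    intro q hq
    have hq' := Finset.mem_powersetCard.1 (Finset.mem_filter.1 (Finset.mem_sdiff.1 hq).1).1
    have : L.filter (fun T => T ⊆ q) ⊆ Finset.powersetCard 3 q := by
      intro T hT
      obtain ⟨hT, hTq⟩ := Finset.mem_filter.1 hT
      exact Finset.mem_powersetCard.2 ⟨hTq, (hL T hT).2.1⟩
    refine (Finset.card_le_card this).trans ?_
    rw [Finset.card_powersetCard, hq'.2]
    decide
  calc _ ≤ ∑ T ∈ L, (((oddQ W A \ E).filter (fun q => T ⊆ q)).card + 3) := Finset.sum_le_sum h1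
    _ ≤ _ := by
      rw [Finset.sum_add_distrib, Finset.sum_const, smul_eq_mul]
      omega

lemma LA {W A : Finset ℕ} {E : Finset (Finset ℕ)} (hE4 : ∀ f ∈ E, f.card = 4) (hI : Ind E)
    (hs : (10 : ℝ) ^ 14 ≤ W.card)
    (hm : ((oddQ W A \ E).card : ℝ) ≤ 1 / 10 ^ 11 * (W.card : ℝ) ^ 4) (v : ℕ)
    (hL : 1 / 10 ^ 5 * (W.card : ℝ) ^ 3 < (lkO E W A v).card) :
    (((lk E W v).filter (fun T => T ⊆ W \ A)).card : ℝ) ≤ 1 / 10 ^ 5 * (W.card : ℝ) ^ 3 := by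
  have hs0 : (0 : ℝ) < W.card := by linarith [show (0 : ℝ) < 10 ^ 14 by norm_num]
  have hLprop : ∀ T ∈ lkO E W A v, T ⊆ W ∧ T.card = 3 ∧ Odd (T ∩ A).card := by
    intro T hT
    obtain ⟨h1, h2⟩ := Finset.mem_filter.1 hT
    have := Finset.mem_powersetCard.1 (Finset.mem_filter.1 h1).1
    exact ⟨this.1, this.2, h2⟩
  have hsum := sum_def (E := E) (lkO E W A v) hLprop
  have hex : ∃ T ∈ lkO E W A v, ((((W \ A).filter (fun w => insert w T ∉ E)).card : ℕ) : ℝ)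
      ≤ 5 / 10 ^ 6 * W.card := by
    by_contra hcon
    push Not at hcon
    have h1 : ((lkO E W A v).card : ℝ) * (5 / 10 ^ 6 * W.card) ≤
        ∑ T ∈ lkO E W A v, ((((W \ A).filter (fun w => insert w T ∉ E)).card : ℕ) : ℝ) := by
      rw [← nsmul_eq_mul]
      exact Finset.card_nsmul_le_sum _ _ _ (fun T hT => (hcon T hT).le)
    have h2 : ∑ T ∈ lkO E W A v, ((((W \ A).filter (fun w => insert w T ∉ E)).card : ℕ) : ℝ)
        ≤ 4 * (oddQ W A \ E).card + 3 * (lkO E W A v).card := by exact_mod_cast hsum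
    generalize ((lkO E W A v).card : ℝ) = L at *
    generalize (W.card : ℝ) = s at *
    have hL0 : 0 < L := lt_trans (by positivity) hL
    have h3 : L * (45 / 10 ^ 7 * s) ≤ L * (5 / 10 ^ 6 * s) - 3 * L := by
      have : L * 3 ≤ L * (5 / 10 ^ 7 * s) := by
        apply mul_le_mul_of_nonneg_left _ hL0.le
        linarith
      nlinarith
    have h4 : 1 / 10 ^ 5 * s ^ 3 * (45 / 10 ^ 7 * s) < L * (45 / 10 ^ 7 * s) :=
      mul_lt_mul_of_pos_right hL (by positivity)
    have h5 : 0 < s ^ 4 := by positivity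
    nlinarith
  obtain ⟨T, hT, hTx⟩ := hex
  obtain ⟨hTW, hT3, hTo⟩ := hLprop T hT
  have hvT : insert v T ∈ E := (Finset.mem_filter.1 (Finset.mem_filter.1 hT).1).2
  set X := (W \ A).filter (fun w => insert w T ∉ E) with hX
  have hsub : (lk E W v).filter (fun T => T ⊆ W \ A) ⊆
      (Finset.powersetCard 3 W).filter (fun T => ¬ Disjoint T X) := by
    intro R hR
    obtain ⟨hR1, hR2⟩ := Finset.mem_filter.1 hR
    obtain ⟨hR3, hR4⟩ := Finset.mem_filter.1 hR1
    refine Finset.mem_filter.2 ⟨hR3, fun hd => ?_⟩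
    refine hI T (insert v R) hT3 hR4 ?_
    intro w hw
    rcases Finset.mem_insert.1 hw with rfl | hw
    · exact hvT
    · by_contra hn
      exact Finset.disjoint_left.1 hd hw (Finset.mem_filter.2 ⟨hR2 hw, hn⟩)
  have h1 := (Finset.card_le_card hsub).trans (hit_card W X)
  have h2 : (((lk E W v).filter (fun T => T ⊆ W \ A)).card : ℝ) ≤ X.card * (W.card : ℝ) ^ 2 := by
    exact_mod_cast h1
  have h3 : (X.card : ℝ) * (W.card : ℝ) ^ 2 ≤ 5 / 10 ^ 6 * W.card * (W.card : ℝ) ^ 2 :=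
    mul_le_mul_of_nonneg_right hTx (by positivity)
  have : (0 : ℝ) < (W.card : ℝ) ^ 3 := by positivity
  nlinarith

lemma nb_bound {W A : Finset ℕ} {E : Finset (Finset ℕ)} (hE4 : ∀ f ∈ E, f.card = 4) (hI : Ind E)
    (hAW : A ⊆ W) (hs : (10 : ℝ) ^ 14 ≤ W.card)
    (hm : ((oddQ W A \ E).card : ℝ) ≤ 1 / 10 ^ 11 * (W.card : ℝ) ^ 4)
    (hb : |2 * (A.card : ℝ) - W.card| ≤ W.card / 200) (T : Finset ℕ) (hT : T.card ≤ 3) :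
    ((nb E W T).card : ℝ) ≤ 53 / 100 * W.card := by
  have hs0 : (0 : ℝ) < W.card := by linarith [show (0 : ℝ) < 10 ^ 14 by norm_num]
  by_cases hT3 : T.card = 3
  swap
  · have : nb E W T = ∅ := by
      apply Finset.filter_false_of_mem
      intro w _ hw
      have := hE4 _ hw
      have := Finset.card_insert_le w T
      omega
    rw [this]; simp
  set X := nb E W T with hX
  have hXW : X ⊆ W := Finset.filter_subset _ _
  have hsub : oddQ X (X ∩ A) ⊆ oddQ W A \ E := by
    intro q hq
    obtain ⟨h1, h2⟩ := Finset.mem_filter.1 hq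
    obtain ⟨h3, h4⟩ := Finset.mem_powersetCard.1 h1
    rw [Finset.mem_sdiff]
    constructor
    · refine Finset.mem_filter.2 ⟨Finset.mem_powersetCard.2 ⟨h3.trans hXW, h4⟩, ?_⟩
      rwa [← Finset.inter_assoc, Finset.inter_eq_left.2 h3] at h2
    · intro hqE
      exact hI T q hT3 hqE (fun w hw => (Finset.mem_filter.1 (h3 hw)).2)
  have hcard := Finset.card_le_card hsub
  rw [oddQ_card Finset.inter_subset_left, Finset.sdiff_inter_self_left] at hcard
  have hsum : (X ∩ A).card + (X \ A).card = X.card := Finset.card_inter_add_card_sdiff X A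
  have hp : (X ∩ A).card ≤ A.card := Finset.card_le_card Finset.inter_subset_right
  have hq : (X \ A).card ≤ (W \ A).card := Finset.card_le_card (Finset.sdiff_subset_sdiff hXW le_rfl)
  have hw : (W \ A).card + A.card = W.card := Finset.card_sdiff_add_card_eq_card hAW
  have hc : ((X \ A).card : ℝ) * ((X ∩ A).card.choose 3 : ℝ) ≤ (oddQ W A \ E).card := by
    have : (X \ A).card * (X ∩ A).card.choose 3 ≤ (oddQ W A \ E).card := by
      rw [mul_comm]; omega
    exact_mod_cast this
  rw [choose3_real] at hc
  have hsum' : ((X ∩ A).card : ℝ) + (X \ A).card = X.card := by exact_mod_cast hsum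
  have hp' : ((X ∩ A).card : ℝ) ≤ A.card := by exact_mod_cast hp
  have hq' : ((X \ A).card : ℝ) ≤ (W \ A).card := by exact_mod_cast hq
  have hw' : ((W \ A).card : ℝ) + A.card = W.card := by exact_mod_cast hw
  generalize ((X ∩ A).card : ℝ) = p at *
  generalize ((X \ A).card : ℝ) = q at *
  generalize ((W \ A).card : ℝ) = b at *
  generalize (A.card : ℝ) = a at *
  generalize (W.card : ℝ) = s at *
  rw [← hsum']
  obtain ⟨hb1, hb2⟩ := abs_le.1 hb
  by_cases h1 : p ≤ s / 50
  · linarith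
  by_cases h2 : q ≤ s / 50
  · linarith
  exfalso
  push Not at h1 h2
  have e1 : s / 50 * (s / 50 - 1) ≤ p * (p - 1) :=
    mul_le_mul h1.le (by linarith) (by linarith) (by linarith)
  have e1' : s / 100 * (s / 100) ≤ s / 50 * (s / 50 - 1) :=
    mul_le_mul (by linarith) (by linarith) (by linarith) (by linarith)
  have e2 : s / 100 * (s / 100) * (s / 100) ≤ p * (p - 1) * (p - 2) :=
    mul_le_mul (by linarith) (by linarith) (by linarith)
      (mul_nonneg (by linarith) (by linarith))
  have e3 : s / 100 * (s / 100 * (s / 100) * (s / 100) / 6) ≤ q * (p * (p - 1) * (p - 2) / 6) :=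
    mul_le_mul (by linarith) (by linarith) (by positivity) (by linarith)
  have : 0 < s ^ 4 := by positivity
  nlinarith

lemma LB {W A : Finset ℕ} {E : Finset (Finset ℕ)} (hE4 : ∀ f ∈ E, f.card = 4) (hI : Ind E)
    (hAW : A ⊆ W) (hs : (10 : ℝ) ^ 14 ≤ W.card)
    (hm : ((oddQ W A \ E).card : ℝ) ≤ 1 / 10 ^ 11 * (W.card : ℝ) ^ 4)
    (hb : |2 * (A.card : ℝ) - W.card| ≤ W.card / 200) (v : ℕ) :
    (((lk E W v).filter (fun T => (T ∩ A).card = 1 ∨ (T ∩ A).card = 2)).card : ℝ)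
      ≤ 663 / 10000 * (W.card : ℝ) ^ 3 := by
  set M := (lk E W v).filter (fun T => (T ∩ A).card = 1 ∨ (T ∩ A).card = 2) with hM
  have hMp : ∀ T ∈ M, T ⊆ W ∧ T.card = 3 ∧ insert v T ∈ E ∧ ((T ∩ A).card = 1 ∨ (T ∩ A).card = 2) := by
    intro T hT
    obtain ⟨h1, h2⟩ := Finset.mem_filter.1 hT
    obtain ⟨h3, h4⟩ := Finset.mem_filter.1 h1
    have := Finset.mem_powersetCard.1 h3
    exact ⟨this.1, this.2, h4, h2⟩
  have hdc := double_count M (A ×ˢ (W \ A)) (fun T p => p.1 ∈ T ∧ p.2 ∈ T)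
  have hl : ∑ T ∈ M, ((A ×ˢ (W \ A)).filter (fun p => p.1 ∈ T ∧ p.2 ∈ T)).card = M.card * 2 := by
    apply Finset.sum_const_nat
    intro T hT
    obtain ⟨h1, h2, -, h4⟩ := hMp T hT
    have : (A ×ˢ (W \ A)).filter (fun p => p.1 ∈ T ∧ p.2 ∈ T) = (T ∩ A) ×ˢ (T ∩ (W \ A)) := by
      ext ⟨x, y⟩
      simp only [Finset.mem_filter, Finset.mem_product, Finset.mem_inter]
      tauto
    rw [this, Finset.card_product]
    have h5 := inter_compl_card (A := A) h1
    rw [h2] at h5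
    rcases h4 with h4 | h4
    · rw [h4] at h5 ⊢; omega
    · rw [h4] at h5 ⊢; omega
  have hr : ∀ p ∈ A ×ˢ (W \ A), (((M.filter (fun T => p.1 ∈ T ∧ p.2 ∈ T)).card : ℕ) : ℝ)
      ≤ 53 / 100 * W.card := by
    rintro ⟨a, b⟩ hp
    obtain ⟨ha, hb'⟩ := Finset.mem_product.1 hp
    simp only at ha hb'
    have hab : a ≠ b := by rintro rfl; exact (Finset.mem_sdiff.1 hb').2 ha
    refine le_trans ?_ (nb_bound hE4 hI hAW hs hm hb {v, a, b} Finset.card_le_three)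
    have hsub : M.filter (fun T => a ∈ T ∧ b ∈ T) ⊆ (nb E W {v, a, b}).image (fun w => {w, a, b}) := by
      intro T hT
      obtain ⟨hT, haT, hbT⟩ := Finset.mem_filter.1 hT
      obtain ⟨h1, h2, h3, -⟩ := hMp T hT
      have hc : ((T.erase a).erase b).card = 1 := by
        rw [Finset.card_erase_of_mem (Finset.mem_erase.2 ⟨hab.symm, hbT⟩),
          Finset.card_erase_of_mem haT, h2]
      obtain ⟨w, hw⟩ := Finset.card_eq_one.1 hc
      have hTe : T = {w, a, b} := by
        have e1 := Finset.insert_erase (Finset.mem_erase.2 ⟨hab.symm, hbT⟩ : b ∈ T.erase a)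
        have e2 := Finset.insert_erase haT
        rw [← e2, ← e1, hw]
        ext x; simp only [Finset.mem_insert, Finset.mem_singleton]; tauto
      rw [Finset.mem_image]
      refine ⟨w, Finset.mem_filter.2 ⟨h1 (by rw [hTe]; simp), ?_⟩, hTe.symm⟩
      rw [hTe] at h3
      have : insert w ({v, a, b} : Finset ℕ) = insert v {w, a, b} := Finset.insert_comm _ _ _
      rw [this]; exact h3
    have := (Finset.card_le_card hsub).trans Finset.card_image_le
    exact_mod_cast this
  have hsum : ((M.card * 2 : ℕ) : ℝ) ≤ (A ×ˢ (W \ A)).card * (53 / 100 * W.card) := by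
    rw [← hl, hdc]
    push_cast
    rw [← nsmul_eq_mul]
    exact Finset.sum_le_card_nsmul _ _ _ hr
  rw [Finset.card_product] at hsum
  have hw : ((W \ A).card : ℝ) + A.card = W.card := by
    exact_mod_cast Finset.card_sdiff_add_card_eq_card hAW
  push_cast at hsum
  have hs0 : (0 : ℝ) < W.card := by linarith [show (0 : ℝ) < 10 ^ 14 by norm_num]
  generalize ((W \ A).card : ℝ) = b at *
  generalize (A.card : ℝ) = a at *
  generalize (W.card : ℝ) = s at *
  have h4 : a * b ≤ s ^ 2 / 4 := by rw [← hw]; nlinarith [sq_nonneg (a - b)]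
  have h5 := mul_le_mul_of_nonneg_right h4 (show 0 ≤ 53 / 100 * s by positivity)
  have : 0 < s ^ 3 := by positivity
  nlinarith

/-- trichotomy for links -/
lemma LK {W A : Finset ℕ} {E : Finset (Finset ℕ)} (hE4 : ∀ f ∈ E, f.card = 4) (hI : Ind E)
    (hAW : A ⊆ W) (hs : (10 : ℝ) ^ 14 ≤ W.card)
    (hm : ((oddQ W A \ E).card : ℝ) ≤ 1 / 10 ^ 11 * (W.card : ℝ) ^ 4)
    (hb : |2 * (A.card : ℝ) - W.card| ≤ W.card / 200) (v : ℕ) :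
    ((lkO E W A v).card : ℝ) ≤ 1 / 10 ^ 5 * (W.card : ℝ) ^ 3 ∨
    ((lkE E W A v).card : ℝ) ≤ 1 / 10 ^ 5 * (W.card : ℝ) ^ 3 ∨
    ((lk E W v).card : ℝ) ≤ (W.card : ℝ) ^ 3 / 15 := by
  by_cases h1 : ((lkO E W A v).card : ℝ) ≤ 1 / 10 ^ 5 * (W.card : ℝ) ^ 3
  · exact Or.inl h1
  by_cases h2 : ((lkE E W A v).card : ℝ) ≤ 1 / 10 ^ 5 * (W.card : ℝ) ^ 3
  · exact Or.inr (Or.inl h2)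
  right; right
  push Not at h1 h2
  have hA := LA hE4 hI hs hm v h1
  have hB := LA (A := W \ A) hE4 hI hs (by rw [oddQ_compl]; exact hm) v (by rw [lkO_compl]; exact h2)
  rw [Finset.sdiff_sdiff_eq_self hAW] at hB
  have hM := LB hE4 hI hAW hs hm hb v
  have hsub : lk E W v ⊆ (lk E W v).filter (fun T => T ⊆ W \ A) ∪ (lk E W v).filter (fun T => T ⊆ A)
      ∪ (lk E W v).filter (fun T => (T ∩ A).card = 1 ∨ (T ∩ A).card = 2) := by
    intro T hT
    have hp := Finset.mem_powersetCard.1 (Finset.mem_filter.1 hT).1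
    simp only [Finset.mem_union, Finset.mem_filter]
    have hle : (T ∩ A).card ≤ 3 := hp.2 ▸ Finset.card_le_card Finset.inter_subset_left
    have : (T ∩ A).card = 0 ∨ (T ∩ A).card = 3 ∨ ((T ∩ A).card = 1 ∨ (T ∩ A).card = 2) := by omega
    rcases this with h | h | h
    · left; left; refine ⟨hT, ?_⟩
      intro x hx
      rw [Finset.card_eq_zero] at h
      refine Finset.mem_sdiff.2 ⟨hp.1 hx, fun hxA => ?_⟩
      have : x ∈ T ∩ A := Finset.mem_inter.2 ⟨hx, hxA⟩
      rw [h] at this; simp at this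
    · left; right; refine ⟨hT, ?_⟩
      have : T ∩ A = T := Finset.eq_of_subset_of_card_le Finset.inter_subset_left (by omega)
      exact Finset.inter_eq_left.1 this
    · right; exact ⟨hT, h⟩
  have hc := (Finset.card_le_card hsub).trans ((Finset.card_union_le _ _).trans
    (Nat.add_le_add_right (Finset.card_union_le _ _) _))
  have hc' : ((lk E W v).card : ℝ) ≤ ((lk E W v).filter (fun T => T ⊆ W \ A)).card +
     ((lk E W v).filter (fun T => T ⊆ A)).card +
     ((lk E W v).filter (fun T => (T ∩ A).card = 1 ∨ (T ∩ A).card = 2)).card := by exact_mod_cast hc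
  have hs0 : (0 : ℝ) < W.card := by linarith [show (0 : ℝ) < 10 ^ 14 by norm_num]
  have : 0 < (W.card : ℝ) ^ 3 := by positivity
  linarith

/-- number of odd triples -/
lemma oddT_card {W A : Finset ℕ} (hAW : A ⊆ W) (hs : 1 ≤ W.card) 
    (hb : |2 * (A.card : ℝ) - W.card| ≤ W.card / 200) :
    (((Finset.powersetCard 3 W).filter (fun T => Odd (T ∩ A).card)).card : ℝ) ≤
      (1 / 12 + 1 / 10 ^ 6) * (W.card : ℝ) ^ 3 := by
  have h1 := card_types W A 1 2
  have h2 := card_types W A 3 0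
  rw [Nat.choose_one_right, Finset.inter_eq_right.2 hAW] at h1
  rw [Nat.choose_zero_right, mul_one, Finset.inter_eq_right.2 hAW] at h2
  have hsub : (Finset.powersetCard 3 W).filter (fun T => Odd (T ∩ A).card) ⊆
      ((Finset.powersetCard (1 + 2) W).filter (fun T => (T ∩ A).card = 1)) ∪
      ((Finset.powersetCard (3 + 0) W).filter (fun T => (T ∩ A).card = 3)) := by
    intro T hT
    obtain ⟨h1, h2⟩ := Finset.mem_filter.1 hT
    have hp := Finset.mem_powersetCard.1 h1
    have hle : (T ∩ A).card ≤ 3 := hp.2 ▸ Finset.card_le_card Finset.inter_subset_left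
    have : (T ∩ A).card = 1 ∨ (T ∩ A).card = 3 := by
      obtain ⟨k, hk⟩ := h2; omega
    rw [Finset.mem_union, Finset.mem_filter, Finset.mem_filter]
    rcases this with h | h
    · left; exact ⟨h1, h⟩
    · right; exact ⟨h1, h⟩
  have hc := (Finset.card_le_card hsub).trans (Finset.card_union_le _ _)
  rw [h1, h2] at hc
  have hc' : (((Finset.powersetCard 3 W).filter (fun T => Odd (T ∩ A).card)).card : ℝ) ≤
    A.card * ((W \ A).card.choose 2 : ℕ) + (A.card.choose 3 : ℕ) := by exact_mod_cast hc
  have e2 : 2 * (((W \ A).card.choose 2 : ℕ) : ℝ) ≤ ((W \ A).card : ℝ) ^ 2 := by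
    exact_mod_cast two_choose_two _
  have e3 : 6 * ((A.card.choose 3 : ℕ) : ℝ) ≤ (A.card : ℝ) ^ 3 := by
    exact_mod_cast six_choose_three _
  have hw : ((W \ A).card : ℝ) + A.card = W.card := by
    exact_mod_cast Finset.card_sdiff_add_card_eq_card hAW
  have ha0 : (0 : ℝ) ≤ A.card := Nat.cast_nonneg _
  have hs0 : (0 : ℝ) < W.card := by exact_mod_cast hs
  refine hc'.trans ?_
  generalize (((W \ A).card.choose 2 : ℕ) : ℝ) = c2 at *
  generalize ((A.card.choose 3 : ℕ) : ℝ) = c3 at *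
  generalize ((W \ A).card : ℝ) = b at *
  generalize (A.card : ℝ) = a at *
  generalize (W.card : ℝ) = s at *
  have h5 := mul_le_mul_of_nonneg_left e2 ha0
  have hid : 4 * (a ^ 3 + 3 * a * b ^ 2) = 2 * s ^ 3 + 2 * (2 * a - s) ^ 3 := by
    rw [← hw]; ring
  have hx : (2 * a - s) ^ 3 ≤ (s / 200) ^ 3 := by
    have h6 : |2 * a - s| ^ 3 ≤ (s / 200) ^ 3 := pow_le_pow_left₀ (abs_nonneg _) hb 3
    rw [← abs_pow] at h6
    exact (le_abs_self _).trans h6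
  have : 0 < s ^ 3 := by positivity
  nlinarith

lemma dg_eq_lk {V : Finset ℕ} {E : Finset (Finset ℕ)} (hU : E ⊆ Finset.powersetCard 4 V) (v : ℕ) :
    dg E v = (lk E V v).card := by
  symm
  refine Finset.card_bij (fun T _ => insert v T) ?_ ?_ ?_
  · intro T hT
    exact Finset.mem_filter.2 ⟨(Finset.mem_filter.1 hT).2, Finset.mem_insert_self _ _⟩
  · intro T hT T' hT' h
    have key : ∀ T ∈ lk E V v, v ∉ T := by
      intro T hT hv
      obtain ⟨h1, h2⟩ := Finset.mem_filter.1 hT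
      rw [Finset.insert_eq_of_mem hv] at h2
      have := (Finset.mem_powersetCard.1 (hU h2)).2
      have := (Finset.mem_powersetCard.1 h1).2
      omega
    rw [← Finset.erase_insert (key T hT), h, Finset.erase_insert (key T' hT')]
  · intro f hf
    obtain ⟨h1, h2⟩ := Finset.mem_filter.1 hf
    have hp := Finset.mem_powersetCard.1 (hU h1)
    refine ⟨f.erase v, Finset.mem_filter.2 ⟨Finset.mem_powersetCard.2
      ⟨(Finset.erase_subset _ _).trans hp.1, ?_⟩, ?_⟩, Finset.insert_erase h2⟩
    · rw [Finset.card_erase_of_mem h2]; omega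
    · rw [Finset.insert_erase h2]; exact h1

lemma kk (Z : Finset (Finset ℕ)) (hZ : ∀ f ∈ Z, f.card = 4) (k : ℕ) (hk : 4 ≤ k)
    (hc : k.choose 4 ≤ Z.card) : k.choose 3 ≤ (Finset.shadow Z).card := by
  classical
  obtain ⟨n, hkn, hn⟩ : ∃ n, k ≤ n ∧ ∀ f ∈ Z, ∀ x ∈ f, x < n := by
    refine ⟨(Z.sup id).sup id + 1 + k, by omega, ?_⟩
    intro f hf x hx
    have h1 : x ∈ Z.sup id := Finset.mem_sup.2 ⟨f, hf, hx⟩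
    have h2 : x ≤ (Z.sup id).sup id := Finset.le_sup (f := id) h1
    omega
  let Z' : Finset (Finset (Fin n)) :=
    Finset.univ.filter (fun g => g.map Fin.valEmbedding ∈ Z)
  have hsurj : ∀ f ∈ Z, ∃ g : Finset (Fin n), g.map Fin.valEmbedding = f := by
    intro f hf
    refine ⟨f.attachFin (fun x hx => hn f hf x hx), ?_⟩
    exact Finset.map_valEmbedding_attachFin _
  have hcard : Z'.card = Z.card := by
    refine Finset.card_bij (fun g _ => g.map Fin.valEmbedding) ?_ ?_ ?_
    · intro g hg; exact (Finset.mem_filter.1 hg).2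
    · intro g _ g' _ h; exact Finset.map_injective _ h
    · intro f hf
      obtain ⟨g, hg⟩ := hsurj f hf
      exact ⟨g, Finset.mem_filter.2 ⟨Finset.mem_univ _, hg ▸ hf⟩, hg⟩
  have hsz : (Z' : Set (Finset (Fin n))).Sized 4 := by
    intro g hg
    have := hZ _ (Finset.mem_filter.1 (Finset.mem_coe.1 hg)).2
    rwa [Finset.card_map] at this
  have h := Finset.kruskal_katona_lovasz_form (i := 1) (r := 4) (k := k) (by norm_num) hk hkn hsz
    (by rw [hcard]; exact hc)
  simp only [Function.iterate_one] at h
  refine le_trans h ?_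
  apply Finset.card_le_card_of_injOn (fun g => g.map Fin.valEmbedding)
  · intro g hg
    rw [Finset.mem_coe] at hg ⊢
    rw [Finset.mem_shadow_iff_insert_mem] at hg ⊢
    obtain ⟨a, ha, hin⟩ := hg
    refine ⟨a.val, ?_, ?_⟩
    · intro h'
      obtain ⟨b, hb, hba⟩ := Finset.mem_map.1 h'
      have : b = a := Fin.ext hba
      exact ha (this ▸ hb)
    · have := (Finset.mem_filter.1 hin).2
      rwa [Finset.map_insert] at this
  · intro g _ g' _ h'; exact Finset.map_injective _ h'

lemma kk_use (Z : Finset (Finset ℕ)) (hZ : ∀ f ∈ Z, f.card = 4) (hne : Z.Nonempty) (s : ℝ)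
    (hs : 10 ^ 14 ≤ s) (hc : (Z.card : ℝ) ≤ 1 / 10 ^ 5 * s ^ 4) :
    4 * (Z.card : ℝ) < 2 / 5 * s * (Finset.shadow Z).card := by
  have hpos : 1 ≤ Z.card := Finset.card_pos.2 hne
  have hex : ∃ k, Z.card < (k + 4).choose 4 := by
    refine ⟨Z.card, ?_⟩
    have h1 : (Z.card + 4).choose 4 ≥ (Z.card + 1).choose 1 := by
      have e1 : (Z.card + 4).choose 4 = (Z.card + 4).choose Z.card := by
        rw [← Nat.choose_symm (by omega)]; congr 1
      have e2 : (Z.card + 1).choose 1 = (Z.card + 1).choose Z.card := by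
        rw [← Nat.choose_symm (by omega)]; congr 1
      rw [e1, e2]
      exact Nat.choose_le_choose _ (by omega)
    rw [Nat.choose_one_right] at h1
    omega
  obtain ⟨j, hj1, hj2⟩ : ∃ k, (k + 4).choose 4 ≤ Z.card ∧ Z.card < (k + 5).choose 4 := by
    have hspec := Nat.find_spec hex
    have hmin := fun m (hm : m < Nat.find hex) => Nat.find_min hex hm
    generalize Nat.find hex = k0 at hspec hmin
    rcases k0 with _ | k
    · simp at hspec; exact absurd hspec hne.ne_empty
    · exact ⟨k, not_lt.1 (hmin k (by omega)), hspec⟩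
  have hsh := kk Z hZ (j + 4) (by omega) hj1
  have e1 := Nat.add_one_mul_choose_eq (j + 4) 3
  have e2 := Nat.choose_succ_right_eq (j + 4) 3
  have hsub : j + 4 - 3 = j + 1 := by omega
  rw [hsub] at e2
  have e1' : ((j : ℝ) + 5) * ((j + 4).choose 3 : ℕ) = ((j + 5).choose 4 : ℕ) * 4 := by
    have : (j + 4 + 1) * (j + 4).choose 3 = (j + 5).choose 4 * 4 := by simpa using e1
    have h2 : (((j + 4 + 1) * (j + 4).choose 3 : ℕ) : ℝ) = (((j + 5).choose 4 * 4 : ℕ) : ℝ) := by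
      rw [this]
    push_cast at h2
    linarith
  have e2' : ((j + 4).choose 4 : ℕ) * (4 : ℝ) = ((j + 4).choose 3 : ℕ) * ((j : ℝ) + 1) := by
    exact_mod_cast e2
  have hj1' : (((j + 4).choose 4 : ℕ) : ℝ) ≤ Z.card := by exact_mod_cast hj1
  have hj2' : (Z.card : ℝ) < ((j + 5).choose 4 : ℕ) := by exact_mod_cast hj2
  have hsh' : (((j + 4).choose 3 : ℕ) : ℝ) ≤ (Finset.shadow Z).card := by exact_mod_cast hsh
  have c3 := choose3_real (j + 4)
  have hjs : (j : ℝ) + 5 ≤ 2 / 5 * s := by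
    by_contra hcon
    push Not at hcon
    have hj : s / 5 ≤ j := by linarith
    have hj0 : (0 : ℝ) ≤ j := Nat.cast_nonneg _
    have h3 : (j : ℝ) ^ 3 / 6 ≤ ((j + 4).choose 3 : ℕ) := by
      rw [c3]; push_cast
      nlinarith [pow_nonneg hj0 2, pow_nonneg hj0 3]
    have h4 : (j : ℝ) ^ 3 / 6 * j ≤ ((j + 4).choose 3 : ℕ) * ((j : ℝ) + 1) :=
      mul_le_mul h3 (by linarith) hj0 (Nat.cast_nonneg _)
    have h5 : (s / 5) ^ 4 ≤ (j : ℝ) ^ 4 := pow_le_pow_left₀ (by linarith [show (0 : ℝ) < 10 ^ 14 by norm_num]) hj 4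
    have hs4 : 0 < s ^ 4 := by
      have : 0 < s := by linarith [show (0 : ℝ) < 10 ^ 14 by norm_num]
      positivity
    nlinarith
  have h0 : (0 : ℝ) ≤ (Finset.shadow Z).card := Nat.cast_nonneg _
  have hj0 : (0 : ℝ) ≤ j := Nat.cast_nonneg _
  calc 4 * (Z.card : ℝ) < ((j + 5).choose 4 : ℕ) * 4 := by linarith
    _ = ((j : ℝ) + 5) * ((j + 4).choose 3 : ℕ) := e1'.symm
    _ ≤ 2 / 5 * s * (Finset.shadow Z).card :=
      mul_le_mul hjs hsh' (Nat.cast_nonneg _) (by linarith)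

lemma dg_bad_miss (E O : Finset (Finset ℕ)) (v : ℕ) :
    dg E v + dg (O \ E) v = dg O v + dg (E \ O) v := by
  unfold dg
  have e : ∀ X Y : Finset (Finset ℕ), (X \ Y).filter (fun f => v ∈ f) =
      X.filter (fun f => v ∈ f) \ Y.filter (fun f => v ∈ f) := by
    intro X Y; ext f; simp only [Finset.mem_filter, Finset.mem_sdiff]; tauto
  rw [e, e]
  have h1 := Finset.card_sdiff_add_card_inter (E.filter (fun f => v ∈ f)) (O.filter (fun f => v ∈ f))
  have h2 := Finset.card_sdiff_add_card_inter (O.filter (fun f => v ∈ f)) (E.filter (fun f => v ∈ f))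
  rw [Finset.inter_comm] at h2
  omega

lemma bal_compl {V A : Finset ℕ} (hA : A ⊆ V) {c : ℝ} (hb : |2 * (A.card : ℝ) - V.card| ≤ c) :
    |2 * ((V \ A).card : ℝ) - V.card| ≤ c := by
  have hw : ((V \ A).card : ℝ) + A.card = V.card := by
    exact_mod_cast Finset.card_sdiff_add_card_eq_card hA
  have : 2 * ((V \ A).card : ℝ) - V.card = -(2 * (A.card : ℝ) - V.card) := by linarith
  rw [this, abs_neg]; exact hb

/-- bad link outside of `A` -/
lemma lk_bad {V A : Finset ℕ} {E : Finset (Finset ℕ)} (hU : E ⊆ Finset.powersetCard 4 V)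
    {v : ℕ} (hv : v ∉ A) : lk (E \ oddQ V A) V v = lkE E V A v := by
  ext T
  simp only [lk, lkE, oddQ, Finset.mem_filter, Finset.mem_sdiff]
  constructor
  · rintro ⟨h1, h2, h3⟩
    refine ⟨⟨h1, h2⟩, fun ho => h3 ⟨hU h2, ?_⟩⟩
    rwa [Finset.insert_inter_of_notMem hv]
  · rintro ⟨⟨h1, h2⟩, h3⟩
    refine ⟨h1, h2, fun ho => h3 ?_⟩
    have := ho.2
    rwa [Finset.insert_inter_of_notMem hv] at this

lemma dg_bad {V A : Finset ℕ} {E : Finset (Finset ℕ)} (hU : E ⊆ Finset.powersetCard 4 V)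
    {v : ℕ} (hv : v ∉ A) : dg (E \ oddQ V A) v = (lkE E V A v).card := by
  rw [dg_eq_lk (V := V) (Finset.sdiff_subset.trans hU), lk_bad hU hv]

lemma P4a {V A : Finset ℕ} {E : Finset (Finset ℕ)} (hU : E ⊆ Finset.powersetCard 4 V)
    (hA : A ⊆ V) (hs : 1 ≤ V.card) (hb : |2 * (A.card : ℝ) - V.card| ≤ V.card / 200)
    {v : ℕ} (hv : v ∉ A) (hd : (1 / 12 - 1 / 10 ^ 12) * (V.card : ℝ) ^ 3 ≤ dg E v)
    (hl : ((lkE E V A v).card : ℝ) ≤ 11 / 10 ^ 6 * (V.card : ℝ) ^ 3) :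
    (dg (E \ oddQ V A) v : ℝ) ≤ 11 / 10 ^ 6 * (V.card : ℝ) ^ 3 ∧
    (dg (oddQ V A \ E) v : ℝ) ≤ 2 / 10 ^ 5 * (V.card : ℝ) ^ 3 := by
  have h1 := dg_bad hU hv
  have h2 : (dg E v : ℝ) + dg (oddQ V A \ E) v = dg (oddQ V A) v + dg (E \ oddQ V A) v := by
    exact_mod_cast dg_bad_miss E (oddQ V A) v
  have h3 : dg (oddQ V A) v ≤
      ((Finset.powersetCard 3 V).filter (fun T => Odd (T ∩ A).card)).card := by
    rw [dg_eq_lk (V := V) (E := oddQ V A) (Finset.filter_subset _ _)]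
    apply Finset.card_le_card
    intro T hT
    obtain ⟨h3, h4⟩ := Finset.mem_filter.1 hT
    refine Finset.mem_filter.2 ⟨h3, ?_⟩
    have := (Finset.mem_filter.1 h4).2
    rwa [Finset.insert_inter_of_notMem hv] at this
  have h4 := oddT_card hA hs hb
  have h3' : (dg (oddQ V A) v : ℝ) ≤
      (((Finset.powersetCard 3 V).filter (fun T => Odd (T ∩ A).card)).card : ℕ) := by exact_mod_cast h3
  have h1' : (dg (E \ oddQ V A) v : ℝ) = (lkE E V A v).card := by exact_mod_cast h1
  have hs0 : (0 : ℝ) < V.card := by exact_mod_cast hs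
  have : 0 < (V.card : ℝ) ^ 3 := by positivity
  constructor
  · linarith
  · linarith

lemma P4b {V A : Finset ℕ} {E : Finset (Finset ℕ)} (hI : Ind E)
    (hA : A ⊆ V) (hs : (10 : ℝ) ^ 14 ≤ V.card) (hb : |2 * (A.card : ℝ) - V.card| ≤ V.card / 200)
    {v : ℕ} (hvV : v ∈ V) (hv : v ∉ A) {T : Finset ℕ} (hTV : T ⊆ V) (hT3 : T.card = 3)
    (hTo : ¬ Odd (T ∩ A).card) (hE : insert v T ∈ E)
    (hd : (dg (oddQ V A \ E) v : ℝ) ≤ 2 / 10 ^ 5 * (V.card : ℝ) ^ 3) :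
    2 / 5 * (V.card : ℝ) ≤ ((oddQ V A \ E).filter (fun q => T ⊆ q)).card := by
  set Y := A.filter (fun w => insert w T ∈ E) with hY
  have hYA : Y ⊆ A := Finset.filter_subset _ _
  have h1 : Y.card.choose 3 ≤ dg (oddQ V A \ E) v := by
    rw [dg_eq_lk (V := V) (E := oddQ V A \ E) (Finset.sdiff_subset.trans (Finset.filter_subset _ _)),
      ← Finset.card_powersetCard]
    apply Finset.card_le_card
    intro R hR
    obtain ⟨hR1, hR2⟩ := Finset.mem_powersetCard.1 hR
    have hRV : R ⊆ V := hR1.trans (hYA.trans hA)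
    have hvR : v ∉ R := fun h => hv (hYA (hR1 h))
    refine Finset.mem_filter.2 ⟨Finset.mem_powersetCard.2 ⟨hRV, hR2⟩, ?_⟩
    rw [Finset.mem_sdiff]
    constructor
    · refine Finset.mem_filter.2 ⟨Finset.mem_powersetCard.2 ⟨Finset.insert_subset hvV hRV, ?_⟩, ?_⟩
      · rw [Finset.card_insert_of_notMem hvR, hR2]
      · rw [Finset.insert_inter_of_notMem hv, Finset.inter_eq_left.2 (hR1.trans hYA), hR2]; decide
    · intro hin
      refine hI T _ hT3 hin ?_
      intro w hw
      rcases Finset.mem_insert.1 hw with rfl | hw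
      · exact hE
      · exact (Finset.mem_filter.1 (hR1 hw)).2
  have h2 : A.card ≤ Y.card + 3 + ((oddQ V A \ E).filter (fun q => T ⊆ q)).card := by
    have hsub : A ⊆ (Y ∪ T) ∪ A.filter (fun w => insert w T ∉ E ∧ w ∉ T) := by
      intro w hw
      simp only [hY, Finset.mem_union, Finset.mem_filter]
      tauto
    have hc := (Finset.card_le_card hsub).trans ((Finset.card_union_le _ _).trans
      (Nat.add_le_add_right (Finset.card_union_le _ _) _))
    rw [hT3] at hc
    refine hc.trans (Nat.add_le_add_left ?_ _)
    apply Finset.card_le_card_of_injOn (fun w => insert w T)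
    · intro w hw
      simp only [Finset.coe_filter, Set.mem_ofPred_eq, Finset.mem_sdiff] at hw ⊢
      obtain ⟨hwA, hwE, hwT⟩ := hw
      refine ⟨⟨?_, hwE⟩, Finset.subset_insert _ _⟩
      refine Finset.mem_filter.2 ⟨Finset.mem_powersetCard.2 ⟨Finset.insert_subset (hA hwA) hTV, ?_⟩, ?_⟩
      · rw [Finset.card_insert_of_notMem hwT, hT3]
      · rw [Finset.insert_inter_of_mem hwA, Finset.card_insert_of_notMem
          (fun h => hwT (Finset.mem_inter.1 h).1), Nat.odd_add_one]
        exact hTo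
    · intro w hw w' hw' h
      simp only [Finset.coe_filter, Set.mem_ofPred_eq] at hw hw' h
      have : w ∈ insert w' T := h ▸ Finset.mem_insert_self w T
      rcases Finset.mem_insert.1 this with h1 | h1
      · exact h1
      · exact absurd h1 hw.2.2
  have h1' : ((Y.card.choose 3 : ℕ) : ℝ) ≤ dg (oddQ V A \ E) v := by exact_mod_cast h1
  have h2' : (A.card : ℝ) ≤ Y.card + 3 + ((oddQ V A \ E).filter (fun q => T ⊆ q)).card := by
    exact_mod_cast h2
  rw [choose3_real] at h1'
  obtain ⟨hb1, hb2⟩ := abs_le.1 hb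
  generalize (Y.card : ℝ) = y at *
  generalize (A.card : ℝ) = a at *
  generalize (V.card : ℝ) = s at *
  have hy : y ≤ 6 / 100 * s := by
    by_contra hcon
    push Not at hcon
    have hs0 : 0 < s := by linarith [show (0 : ℝ) < 10 ^ 14 by norm_num]
    have e1 : (55 / 1000 * s) * (55 / 1000 * s) ≤ y * (y - 1) :=
      mul_le_mul (by linarith) (by linarith) (by linarith) (by linarith)
    have e2 : (55 / 1000 * s) * (55 / 1000 * s) * (55 / 1000 * s) ≤ y * (y - 1) * (y - 2) :=
      mul_le_mul e1 (by linarith) (by linarith)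
        (mul_nonneg (by linarith) (by linarith))
    have : 0 < s ^ 3 := by positivity
    nlinarith
  linarith

theorem core {V : Finset ℕ} {E : Finset (Finset ℕ)} (hU : E ⊆ Finset.powersetCard 4 V)
    (hI : Ind E) (hs : (10 : ℝ) ^ 14 ≤ V.card)
    (hd : ∀ v ∈ V, (1 / 12 - 1 / 10 ^ 12) * (V.card : ℝ) ^ 3 ≤ dg E v) :
    ∃ A ⊆ V, E.card < (oddQ V A).card ∨ E = oddQ V A := by
  classical
  obtain ⟨A, hA, hbad, hmiss, hbal⟩ := partition hU hI hs hd
  have hs0 : (0 : ℝ) < V.card := by linarith [show (0 : ℝ) < 10 ^ 14 by norm_num]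
  have hs3 : 0 < (V.card : ℝ) ^ 3 := by positivity
  have hs1 : 1 ≤ V.card := by exact_mod_cast hs0
  have hE4 : ∀ f ∈ E, f.card = 4 := fun f hf => (Finset.mem_powersetCard.1 (hU hf)).2
  have hbal2 : |2 * (A.card : ℝ) - V.card| ≤ V.card / 200 := hbal.trans (by linarith)
  set A' := V.filter (fun v => ((lkO E V A v).card : ℝ) ≤ 1 / 10 ^ 5 * (V.card : ℝ) ^ 3) with hA'
  have hA'V : A' ⊆ V := Finset.filter_subset _ _
  have hlk : ∀ v ∈ V, (1 / 12 - 1 / 10 ^ 12) * (V.card : ℝ) ^ 3 ≤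
      (lkO E V A v).card + (lkE E V A v).card := by
    intro v hv
    have h1 := hd v hv
    rw [dg_eq_lk hU] at h1
    have h2 : ((lkO E V A v).card : ℝ) + (lkE E V A v).card = (lk E V v).card := by
      exact_mod_cast lkO_add_lkE E V A v
    linarith
  have hB' : ∀ v ∈ V, v ∉ A' → ((lkE E V A v).card : ℝ) ≤ 1 / 10 ^ 5 * (V.card : ℝ) ^ 3 := by
    intro v hv hvA
    rcases LK hE4 hI hA hs hmiss hbal2 v with h | h | h
    · exact absurd (Finset.mem_filter.2 ⟨hv, h⟩) hvA
    · exact h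
    · have := hlk v hv
      have h2 : ((lkO E V A v).card : ℝ) + (lkE E V A v).card = (lk E V v).card := by
        exact_mod_cast lkO_add_lkE E V A v
      linarith
  -- symmetric difference
  set D := V.filter (fun v => (v ∈ A ∧ v ∉ A') ∨ (v ∉ A ∧ v ∈ A')) with hD
  have hDbad : ∀ v ∈ D, (V.card : ℝ) ^ 3 / 13 ≤ dg (E \ oddQ V A) v := by
    intro v hv
    obtain ⟨hvV, h⟩ := Finset.mem_filter.1 hv
    have h3 := hlk v hvV
    rcases h with ⟨h1, h2⟩ | ⟨h1, h2⟩
    · have h4 := hB' v hvV h2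
      have : v ∉ V \ A := fun h => (Finset.mem_sdiff.1 h).2 h1
      rw [← oddQ_compl, dg_bad hU this, lkE_compl]
      linarith
    · have h4 := (Finset.mem_filter.1 h2).2
      rw [dg_bad hU h1]
      linarith
  have hDcard : (D.card : ℝ) ≤ 1 / 10 ^ 9 * V.card := by
    have h1 := handshake (V := V) (E := E \ oddQ V A) (Finset.sdiff_subset.trans hU)
    have h2 : (D.card : ℝ) * ((V.card : ℝ) ^ 3 / 13) ≤ ∑ v ∈ D, (dg (E \ oddQ V A) v : ℝ) := by
      rw [← nsmul_eq_mul]; exact Finset.card_nsmul_le_sum _ _ _ hDbad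
    have h3 : ∑ v ∈ D, (dg (E \ oddQ V A) v : ℝ) ≤ ∑ v ∈ V, (dg (E \ oddQ V A) v : ℝ) :=
      Finset.sum_le_sum_of_subset_of_nonneg (Finset.filter_subset _ _) (fun _ _ _ => Nat.cast_nonneg _)
    have h4 : ∑ v ∈ V, (dg (E \ oddQ V A) v : ℝ) = 4 * (E \ oddQ V A).card := by exact_mod_cast h1
    have h5 : (V.card : ℝ) ^ 3 * D.card ≤ (V.card : ℝ) ^ 3 * (1 / 10 ^ 9 * V.card) := by nlinarith
    exact le_of_mul_le_mul_left h5 hs3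
  have hnotD : ∀ v ∈ V, v ∉ D → (v ∈ A ↔ v ∈ A') := by
    intro v hv hvD
    rw [hD, Finset.mem_filter] at hvD
    tauto
  have hTD : ∀ T ⊆ V, Disjoint T D → T ∩ A = T ∩ A' := by
    intro T hT hdis
    ext x
    simp only [Finset.mem_inter]
    constructor
    · rintro ⟨h1, h2⟩; exact ⟨h1, (hnotD x (hT h1) (Finset.disjoint_left.1 hdis h1)).1 h2⟩
    · rintro ⟨h1, h2⟩; exact ⟨h1, (hnotD x (hT h1) (Finset.disjoint_left.1 hdis h1)).2 h2⟩
  have hhit : (((Finset.powersetCard 3 V).filter (fun T => ¬ Disjoint T D)).card : ℝ) ≤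
      1 / 10 ^ 9 * (V.card : ℝ) ^ 3 := by
    have h1 : (((Finset.powersetCard 3 V).filter (fun T => ¬ Disjoint T D)).card : ℝ) ≤
      D.card * (V.card : ℝ) ^ 2 := by exact_mod_cast hit_card V D
    have h2 := mul_le_mul_of_nonneg_right hDcard (show (0 : ℝ) ≤ (V.card : ℝ) ^ 2 by positivity)
    linarith
  have hbal' : |2 * (A'.card : ℝ) - V.card| ≤ V.card / 200 := by
    have h1 : A.card ≤ A'.card + D.card := by
      refine (Finset.card_le_card ?_).trans (Finset.card_union_le _ _)
      intro x hx
      by_cases h : x ∈ D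
      · exact Finset.mem_union_right _ h
      · exact Finset.mem_union_left _ ((hnotD x (hA hx) h).1 hx)
    have h2 : A'.card ≤ A.card + D.card := by
      refine (Finset.card_le_card ?_).trans (Finset.card_union_le _ _)
      intro x hx
      by_cases h : x ∈ D
      · exact Finset.mem_union_right _ h
      · exact Finset.mem_union_left _ ((hnotD x (hA'V hx) h).2 hx)
    have h1' : (A.card : ℝ) ≤ A'.card + D.card := by exact_mod_cast h1
    have h2' : (A'.card : ℝ) ≤ A.card + D.card := by exact_mod_cast h2
    obtain ⟨b1, b2⟩ := abs_le.1 hbal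
    rw [abs_le]
    constructor <;> linarith
  have hO' : ∀ v ∈ A', ((lkO E V A' v).card : ℝ) ≤ 11 / 10 ^ 6 * (V.card : ℝ) ^ 3 := by
    intro v hv
    have hsub : lkO E V A' v ⊆ lkO E V A v ∪ (Finset.powersetCard 3 V).filter (fun T => ¬ Disjoint T D) := by
      intro T hT
      obtain ⟨h1, h2⟩ := Finset.mem_filter.1 hT
      have h3 := (Finset.mem_filter.1 h1).1
      rw [Finset.mem_union]
      by_cases h : Disjoint T D
      · left; refine Finset.mem_filter.2 ⟨h1, ?_⟩
        rwa [hTD T (Finset.mem_powersetCard.1 h3).1 h]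
      · right; exact Finset.mem_filter.2 ⟨h3, h⟩
    have hc : ((lkO E V A' v).card : ℝ) ≤ (lkO E V A v).card +
       ((Finset.powersetCard 3 V).filter (fun T => ¬ Disjoint T D)).card := by
      exact_mod_cast (Finset.card_le_card hsub).trans (Finset.card_union_le _ _)
    have := (Finset.mem_filter.1 hv).2
    linarith
  have hE' : ∀ v ∈ V, v ∉ A' → ((lkE E V A' v).card : ℝ) ≤ 11 / 10 ^ 6 * (V.card : ℝ) ^ 3 := by
    intro v hvV hv
    have hsub : lkE E V A' v ⊆ lkE E V A v ∪ (Finset.powersetCard 3 V).filter (fun T => ¬ Disjoint T D) := by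
      intro T hT
      obtain ⟨h1, h2⟩ := Finset.mem_filter.1 hT
      have h3 := (Finset.mem_filter.1 h1).1
      rw [Finset.mem_union]
      by_cases h : Disjoint T D
      · left; refine Finset.mem_filter.2 ⟨h1, ?_⟩
        rwa [hTD T (Finset.mem_powersetCard.1 h3).1 h]
      · right; exact Finset.mem_filter.2 ⟨h3, h⟩
    have hc : ((lkE E V A' v).card : ℝ) ≤ (lkE E V A v).card +
       ((Finset.powersetCard 3 V).filter (fun T => ¬ Disjoint T D)).card := by
      exact_mod_cast (Finset.card_le_card hsub).trans (Finset.card_union_le _ _)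
    have := hB' v hvV hv
    linarith
  have hbalc := bal_compl hA'V hbal'
  have hdegs : ∀ v ∈ V, (dg (E \ oddQ V A') v : ℝ) ≤ 11 / 10 ^ 6 * (V.card : ℝ) ^ 3 ∧
    (dg (oddQ V A' \ E) v : ℝ) ≤ 2 / 10 ^ 5 * (V.card : ℝ) ^ 3 := by
    intro v hv
    by_cases h : v ∈ A'
    · have h2 : v ∉ V \ A' := fun h' => (Finset.mem_sdiff.1 h').2 h
      have := P4a hU Finset.sdiff_subset hs1 hbalc h2 (hd v hv) (by rw [lkE_compl]; exact hO' v h)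
      rwa [oddQ_compl] at this
    · exact P4a hU hA'V hs1 hbal' h (hd v hv) (hE' v hv h)
  set Z := E \ oddQ V A' with hZ
  set M := oddQ V A' \ E with hM
  have hbm : E.card + M.card = (oddQ V A').card + Z.card := bad_miss E A'
  refine ⟨A', hA'V, ?_⟩
  rcases Finset.eq_empty_or_nonempty Z with hZe | hZne
  · rcases Finset.eq_empty_or_nonempty M with hMe | hMne
    · right
      exact Finset.Subset.antisymm (Finset.sdiff_eq_empty_iff_subset.1 hZe)
        (Finset.sdiff_eq_empty_iff_subset.1 hMe)
    · left
      rw [hZe] at hbm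
      have := Finset.card_pos.2 hMne
      simp at hbm
      omega
  · left
    have hZU : Z ⊆ Finset.powersetCard 4 V := Finset.sdiff_subset.trans hU
    have hZ4 : ∀ f ∈ Z, f.card = 4 := fun f hf => (Finset.mem_powersetCard.1 (hZU hf)).2
    have hZc : (Z.card : ℝ) ≤ 1 / 10 ^ 5 * (V.card : ℝ) ^ 4 := by
      have h1 : ∑ v ∈ V, (dg Z v : ℝ) = 4 * Z.card := by exact_mod_cast handshake hZU
      have h2 : ∑ v ∈ V, (dg Z v : ℝ) ≤ V.card • (11 / 10 ^ 6 * (V.card : ℝ) ^ 3) :=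
        Finset.sum_le_card_nsmul _ _ _ (fun v hv => (hdegs v hv).1)
      rw [nsmul_eq_mul] at h2
      have : 0 < (V.card : ℝ) ^ 4 := by positivity
      nlinarith
    have hkk := kk_use Z hZ4 hZne V.card hs hZc
    have hsh : ∀ T ∈ Finset.shadow Z, 2 / 5 * (V.card : ℝ) ≤ ((M.filter (fun q => T ⊆ q)).card : ℕ) := by
      intro T hT
      rw [Finset.mem_shadow_iff_insert_mem] at hT
      obtain ⟨v, hvT, hin⟩ := hT
      have hp := Finset.mem_powersetCard.1 (hZU hin)
      have hvV : v ∈ V := hp.1 (Finset.mem_insert_self _ _)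
      have hTV : T ⊆ V := (Finset.subset_insert _ _).trans hp.1
      have hT3 : T.card = 3 := by
        have := hp.2
        rw [Finset.card_insert_of_notMem hvT] at this; omega
      obtain ⟨hinE, hino⟩ := Finset.mem_sdiff.1 hin
      have hno : ¬ Odd (insert v T ∩ A').card := fun h =>
        hino (Finset.mem_filter.2 ⟨Finset.mem_powersetCard.2 hp, h⟩)
      by_cases h : v ∈ A'
      · have h2 : v ∉ V \ A' := fun h' => (Finset.mem_sdiff.1 h').2 h
        have := P4b (A := V \ A') hI Finset.sdiff_subset hs hbalc hvV h2 hTV hT3 ?_ hinE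
          (by rw [oddQ_compl]; exact (hdegs v hvV).2)
        · rwa [oddQ_compl] at this
        · rw [Finset.insert_inter_of_mem h, Finset.card_insert_of_notMem
            (fun h => hvT (Finset.mem_inter.1 h).1)] at hno
          have := inter_compl_card (A := A') hTV
          rw [hT3] at this
          rw [Nat.odd_iff] at hno ⊢
          omega
      · rw [Finset.insert_inter_of_notMem h] at hno
        exact P4b hI hA'V hs hbal' hvV h hTV hT3 hno hinE (hdegs v hvV).2
    have hdc := double_count (Finset.shadow Z) M (fun T q => T ⊆ q)
    have hub : ∑ q ∈ M, ((Finset.shadow Z).filter (fun T => T ⊆ q)).card ≤ M.card • 4 := by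
      apply Finset.sum_le_card_nsmul
      intro q hq
      have hq' := Finset.mem_powersetCard.1 (Finset.mem_filter.1 (Finset.mem_sdiff.1 hq).1).1
      have : (Finset.shadow Z).filter (fun T => T ⊆ q) ⊆ Finset.powersetCard 3 q := by
        intro T hT
        obtain ⟨hT, hTq⟩ := Finset.mem_filter.1 hT
        obtain ⟨v, hvT, hin⟩ := Finset.mem_shadow_iff_insert_mem.1 hT
        have := hZ4 _ hin
        rw [Finset.card_insert_of_notMem hvT] at this
        exact Finset.mem_powersetCard.2 ⟨hTq, by omega⟩
      refine (Finset.card_le_card this).trans ?_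
      rw [Finset.card_powersetCard, hq'.2]
      decide
    have hlb : (Finset.shadow Z).card • (2 / 5 * (V.card : ℝ)) ≤
        ∑ T ∈ Finset.shadow Z, ((M.filter (fun q => T ⊆ q)).card : ℝ) :=
      Finset.card_nsmul_le_sum _ _ _ hsh
    rw [← hdc] at hub
    have hub' : ∑ T ∈ Finset.shadow Z, ((M.filter (fun q => T ⊆ q)).card : ℝ) ≤ M.card * 4 := by
      rw [smul_eq_mul] at hub
      exact_mod_cast hub
    rw [nsmul_eq_mul] at hlb
    have : (Z.card : ℝ) < M.card := by nlinarith
    have : Z.card < M.card := by exact_mod_cast this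
    omega

/-- upper bound function for the number of odd quadruples -/
noncomputable def gf (N : ℝ) : ℝ := (N ^ 2 - 3 * N + 4) ^ 2 / 48

lemma oddQ_gf {V A : Finset ℕ} (hA : A ⊆ V) :
    ((oddQ V A).card : ℝ) = gf V.card -
      ((V.card : ℝ) ^ 2 - 3 * V.card + 4 - 4 * (A.card * (V \ A).card)) ^ 2 / 48 := by
  rw [oddQ_card_real hA]
  have hbeta : (V.card : ℝ) = A.card + (V \ A).card := by
    have := Finset.card_sdiff_add_card_eq_card hA
    exact_mod_cast (by omega : V.card = A.card + (V \ A).card)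
  unfold gf
  rw [hbeta]
  ring

lemma oddQ_le_gf {V A : Finset ℕ} (hA : A ⊆ V) : ((oddQ V A).card : ℝ) ≤ gf V.card := by
  rw [oddQ_gf hA]
  have : 0 ≤ ((V.card : ℝ) ^ 2 - 3 * V.card + 4 - 4 * (A.card * (V \ A).card)) ^ 2 / 48 := by
    positivity
  linarith

lemma exists_balanced (V : Finset ℕ) (hN : 2 ≤ V.card) :
    ∃ A ⊆ V, A.card = V.card / 2 ∧ gf V.card - (V.card : ℝ) ^ 2 ≤ ((oddQ V A).card : ℝ) := by
  obtain ⟨A, hA, hc⟩ := Finset.exists_subset_card_eq (Nat.div_le_self V.card 2)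
  refine ⟨A, hA, hc, ?_⟩
  rw [oddQ_gf hA]
  have hb : (V \ A).card = V.card - V.card / 2 := by
    rw [Finset.card_sdiff_of_subset hA, hc]
  rw [hb, hc]
  have h2 : (2 : ℝ) ≤ V.card := by exact_mod_cast hN
  have hcase : 4 * (((V.card / 2 : ℕ) : ℝ) * ((V.card - V.card / 2 : ℕ) : ℝ)) = (V.card : ℝ) ^ 2 ∨
      4 * (((V.card / 2 : ℕ) : ℝ) * ((V.card - V.card / 2 : ℕ) : ℝ)) = (V.card : ℝ) ^ 2 - 1 := by
    rcases Nat.even_or_odd' V.card with ⟨k, hk | hk⟩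
    · left
      have e1 : V.card / 2 = k := by omega
      have e2 : V.card - k = k := by omega
      rw [e1, e2, hk]; push_cast; ring
    · right
      have e1 : V.card / 2 = k := by omega
      have e2 : V.card - k = k + 1 := by omega
      rw [e1, e2, hk]; push_cast; ring
  rcases hcase with h | h
  · rw [h]; nlinarith
  · rw [h]; nlinarith

lemma clean_deg {s d : ℝ} (hs : 10 ^ 14 ≤ s)
    (hd : (1 / 48 - 1 / 10 ^ 13) * (s ^ 4 - (s - 1) ^ 4) ≤ d) :
    (1 / 12 - 1 / 10 ^ 12) * s ^ 3 ≤ d := by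
  have hs0 : 0 < s := by linarith [show (0 : ℝ) < 10 ^ 14 by norm_num]
  have h1 : 4 * s ^ 3 - 6 * s ^ 2 ≤ s ^ 4 - (s - 1) ^ 4 := by
    have : s ^ 4 - (s - 1) ^ 4 = 4 * s ^ 3 - 6 * s ^ 2 + 4 * s - 1 := by ring
    rw [this]; linarith
  have h2 : 10 ^ 14 * s ^ 2 ≤ s ^ 3 := by
    have : s ^ 3 = s * s ^ 2 := by ring
    rw [this]
    exact mul_le_mul_of_nonneg_right hs (by positivity)
  have h3 : 0 < s ^ 3 := by positivity
  have h4 : (1 / 48 - 1 / 10 ^ 13) * (4 * s ^ 3 - 6 * s ^ 2) ≤ d :=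
    le_trans (mul_le_mul_of_nonneg_left h1 (by norm_num)) hd
  linarith

theorem T0 {V : Finset ℕ} {E : Finset (Finset ℕ)} (hU : E ⊆ Finset.powersetCard 4 V)
    (hI : Ind E) (hN : (10 : ℝ) ^ 16 ≤ V.card) :
    ∃ A ⊆ V, E.card < (oddQ V A).card ∨ E = oddQ V A := by
  have hN2 : 2 ≤ V.card := by
    have : (2 : ℝ) ≤ V.card := by linarith [show (2 : ℝ) ≤ 10 ^ 16 by norm_num]
    exact_mod_cast this
  obtain ⟨A0, hA0, -, hg⟩ := exists_balanced V hN2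
  by_cases hlt : E.card < (oddQ V A0).card
  · exact ⟨A0, hA0, Or.inl hlt⟩
  push Not at hlt
  have hE : gf V.card - (V.card : ℝ) ^ 2 ≤ E.card := hg.trans (by exact_mod_cast hlt)
  obtain ⟨S, hSV, hdeg, hpot⟩ := cleaning V hU (1 / 48 - 1 / 10 ^ 13)
  have hU' := res_unif hU S
  have hI' := hI.mono (res_subset E S)
  have hn1 := n1 hU' hI'
  have hSle : (S.card : ℝ) ≤ V.card := by exact_mod_cast Finset.card_le_card hSV
  have hs0 : (0 : ℝ) ≤ S.card := Nat.cast_nonneg _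
  have hs14 : (10 : ℝ) ^ 14 ≤ S.card := by
    by_contra hcon
    push Not at hcon
    unfold gf at hE
    generalize (S.card : ℝ) = s at *
    generalize (V.card : ℝ) = N at *
    have hN0 : 0 < N := by linarith [show (0 : ℝ) < 10 ^ 16 by norm_num]
    have hsN : s ≤ N / 100 := by linarith
    have h3 : s ^ 3 ≤ (N / 100) ^ 3 := pow_le_pow_left₀ hs0 hsN 3
    have h4 : s ^ 4 ≤ (N / 100) ^ 4 := pow_le_pow_left₀ hs0 hsN 4
    have hN3 : 10 ^ 16 * N ^ 3 ≤ N ^ 4 := by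
      have : N ^ 4 = N * N ^ 3 := by ring
      rw [this]
      exact mul_le_mul_of_nonneg_right hN (by positivity)
    have hN23 : N ^ 2 ≤ N ^ 3 := pow_le_pow_right₀ (by linarith [show (1 : ℝ) < 10 ^ 16 by norm_num]) (by norm_num)
    have hN13 : N ≤ N ^ 3 := by
      have := pow_le_pow_right₀ (show (1 : ℝ) ≤ N by linarith [show (1 : ℝ) < 10 ^ 16 by norm_num]) (show 1 ≤ 3 by norm_num)
      simpa using this
    have hN3p : 0 < N ^ 3 := by positivity
    have hN2p : 0 < N ^ 2 := by positivity
    nlinarith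
  have hdeg' : ∀ v ∈ S, (1 / 12 - 1 / 10 ^ 12) * (S.card : ℝ) ^ 3 ≤ dg (res E S) v :=
    fun v hv => clean_deg hs14 (hdeg v hv)
  obtain ⟨A, hA, hcore⟩ := core hU' hI' hs14 hdeg'
  by_cases hSV' : S = V
  · subst hSV'
    rw [res_self hU] at hcore
    exact ⟨A, hA, hcore⟩
  exfalso
  have hle : ((res E S).card : ℝ) ≤ gf S.card := by
    refine le_trans ?_ (oddQ_le_gf hA)
    rcases hcore with h | h
    · exact_mod_cast h.le
    · rw [h]
  have hlt' : (S.card : ℝ) + 1 ≤ V.card := by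
    have := Finset.card_lt_card (Finset.ssubset_iff_subset_ne.2 ⟨hSV, hSV'⟩)
    exact_mod_cast this
  unfold gf at hE hle
  generalize (S.card : ℝ) = s at *
  generalize (V.card : ℝ) = N at *
  generalize ((res E S).card : ℝ) = e' at *
  generalize (E.card : ℝ) = e at *
  have hN0 : 0 < N := by linarith [show (0 : ℝ) < 10 ^ 16 by norm_num]
  have hk : 1 ≤ N - s := by linarith
  have key : 1 / 10 ^ 13 * (N ^ 4 - s ^ 4) - 6 / 48 * (N ^ 3 - s ^ 3) + 17 / 48 * (N ^ 2 - s ^ 2)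
      - 24 / 48 * (N - s) ≤ N ^ 2 := by
    have e1 : (N ^ 2 - 3 * N + 4) ^ 2 / 48 = (N ^ 4 - 6 * N ^ 3 + 17 * N ^ 2 - 24 * N + 16) / 48 := by ring
    have e2 : (s ^ 2 - 3 * s + 4) ^ 2 / 48 = (s ^ 4 - 6 * s ^ 3 + 17 * s ^ 2 - 24 * s + 16) / 48 := by ring
    rw [e1] at hE
    rw [e2] at hle
    linarith
  have f1 : N ^ 4 - s ^ 4 = (N - s) * (N ^ 3 + N ^ 2 * s + N * s ^ 2 + s ^ 3) := by ring
  have f2 : N ^ 3 - s ^ 3 = (N - s) * (N ^ 2 + N * s + s ^ 2) := by ring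
  have f3 : N ^ 2 - s ^ 2 = (N - s) * (N + s) := by ring
  rw [f1, f2, f3] at key
  have hNs : N * s ≤ N ^ 2 := by nlinarith
  have hss : s ^ 2 ≤ N ^ 2 := by nlinarith
  have hN3 : 10 ^ 16 * N ^ 2 ≤ N ^ 3 := by
    have : N ^ 3 = N * N ^ 2 := by ring
    rw [this]
    exact mul_le_mul_of_nonneg_right hN (by positivity)
  have p1 : 0 ≤ N ^ 2 * s := by positivity
  have p2 : 0 ≤ N * s ^ 2 := by positivity
  have p3 : 0 ≤ s ^ 3 := by positivity
  have hN2 : 1 ≤ N ^ 2 := one_le_pow₀ (by linarith [show (1 : ℝ) < 10 ^ 16 by norm_num])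
  have g1 : N ^ 2 + N ^ 2 ≤ 1 / 10 ^ 13 * (N ^ 3 + N ^ 2 * s + N * s ^ 2 + s ^ 3)
      - 6 / 48 * (N ^ 2 + N * s + s ^ 2) + 17 / 48 * (N + s) - 24 / 48 := by linarith
  have g2 := mul_le_mul_of_nonneg_left g1 (show 0 ≤ N - s by linarith)
  have g3 : 1 * (N ^ 2 + N ^ 2) ≤ (N - s) * (N ^ 2 + N ^ 2) :=
    mul_le_mul_of_nonneg_right hk (by positivity)
  nlinarith

lemma ind_le_gf {V : Finset ℕ} {E : Finset (Finset ℕ)} (hU : E ⊆ Finset.powersetCard 4 V)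
    (hI : Ind E) (hN : (10 : ℝ) ^ 16 ≤ V.card) : (E.card : ℝ) ≤ gf V.card := by
  obtain ⟨A, hA, h⟩ := T0 hU hI hN
  refine le_trans ?_ (oddQ_le_gf hA)
  rcases h with h | h
  · exact_mod_cast h.le
  · rw [h]

theorem deg_bound {V : Finset ℕ} {E : Finset (Finset ℕ)} (hU : E ⊆ Finset.powersetCard 4 V)
    (hI : Ind E) (hN : (10 : ℝ) ^ 17 ≤ V.card)
    (hE : (1 / 48 - 1 / 10 ^ 17) * (V.card : ℝ) ^ 4 ≤ E.card) (v : ℕ) :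
    (dg E v : ℝ) ≤ (1 / 12 + 1 / 2000) * (V.card : ℝ) ^ 3 := by
  obtain ⟨S, hSV, hdeg, hpot⟩ := cleaning V hU (1 / 48 - 1 / 10 ^ 13)
  have hU' := res_unif hU S
  have hI' := hI.mono (res_subset E S)
  have hn1 := n1 hU' hI'
  have hSle : (S.card : ℝ) ≤ V.card := by exact_mod_cast Finset.card_le_card hSV
  have hs0 : (0 : ℝ) ≤ S.card := Nat.cast_nonneg _
  have hN0 : (0 : ℝ) < V.card := by linarith [show (0 : ℝ) < 10 ^ 17 by norm_num]
  have hsN : (1 - 2 / 10 ^ 4) * (V.card : ℝ) ≤ S.card := by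
    by_contra hcon
    push Not at hcon
    generalize (S.card : ℝ) = s at *
    generalize (V.card : ℝ) = N at *
    have h3 : s ^ 3 ≤ N ^ 3 := pow_le_pow_left₀ hs0 hSle 3
    have h4 : s ^ 4 ≤ ((1 - 2 / 10 ^ 4) * N) ^ 4 := pow_le_pow_left₀ hs0 hcon.le 4
    have h4' : ((1 - 2 / 10 ^ 4) * N) ^ 4 ≤ (1 - 7 / 10 ^ 4) * N ^ 4 := by
      rw [mul_pow]
      apply mul_le_mul_of_nonneg_right _ (by positivity)
      norm_num
    have hN3 : 10 ^ 17 * N ^ 3 ≤ N ^ 4 := by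
      have : N ^ 4 = N * N ^ 3 := by ring
      rw [this]
      exact mul_le_mul_of_nonneg_right hN (by positivity)
    have hN4 : 0 < N ^ 4 := by positivity
    linarith
  have hs14 : (10 : ℝ) ^ 14 ≤ S.card := by linarith
  have hdeg' : ∀ v ∈ S, (1 / 12 - 1 / 10 ^ 12) * (S.card : ℝ) ^ 3 ≤ dg (res E S) v :=
    fun v hv => clean_deg hs14 (hdeg v hv)
  obtain ⟨A, hA, -, hmiss, hbal⟩ := partition hU' hI' hs14 hdeg'
  have hbal2 : |2 * (A.card : ℝ) - S.card| ≤ S.card / 200 := hbal.trans (by linarith)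
  have hmeq : oddQ S A \ res E S = oddQ S A \ E := by
    ext q
    simp only [Finset.mem_sdiff, res, Finset.mem_filter, not_and]
    constructor
    · rintro ⟨h1, h2⟩
      exact ⟨h1, fun h => h2 h (Finset.mem_powersetCard.1 (Finset.mem_filter.1 h1).1).1⟩
    · rintro ⟨h1, h2⟩; exact ⟨h1, fun h => absurd h h2⟩
  rw [hmeq] at hmiss
  have hE4 : ∀ f ∈ E, f.card = 4 := fun f hf => (Finset.mem_powersetCard.1 (hU hf)).2
  have hs1 : 1 ≤ S.card := by
    have : (1 : ℝ) ≤ S.card := by linarith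
    exact_mod_cast this
  have hs3 : 0 ≤ (S.card : ℝ) ^ 3 := by positivity
  have hO : ((lkO E S A v).card : ℝ) ≤ (1 / 12 + 1 / 10 ^ 6) * (S.card : ℝ) ^ 3 := by
    refine le_trans ?_ (oddT_card hA hs1 hbal2)
    have : lkO E S A v ⊆ (Finset.powersetCard 3 S).filter (fun T => Odd (T ∩ A).card) := by
      intro T hT
      obtain ⟨h1, h2⟩ := Finset.mem_filter.1 hT
      exact Finset.mem_filter.2 ⟨(Finset.mem_filter.1 h1).1, h2⟩
    exact_mod_cast Finset.card_le_card this
  have hEv : ((lkE E S A v).card : ℝ) ≤ (1 / 12 + 1 / 10 ^ 6) * (S.card : ℝ) ^ 3 := by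
    refine le_trans ?_ (oddT_card (A := S \ A) Finset.sdiff_subset hs1 (bal_compl hA hbal2))
    rw [← lkO_compl]
    have : lkO E S (S \ A) v ⊆ (Finset.powersetCard 3 S).filter (fun T => Odd (T ∩ (S \ A)).card) := by
      intro T hT
      obtain ⟨h1, h2⟩ := Finset.mem_filter.1 hT
      exact Finset.mem_filter.2 ⟨(Finset.mem_filter.1 h1).1, h2⟩
    exact_mod_cast Finset.card_le_card this
  have hsum : ((lkO E S A v).card : ℝ) + (lkE E S A v).card = (lk E S v).card := by
    exact_mod_cast lkO_add_lkE E S A v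
  have hlk : ((lk E S v).card : ℝ) ≤ (1 / 12 + 2 / 10 ^ 5) * (S.card : ℝ) ^ 3 := by
    rcases LK hE4 hI hA hs14 hmiss hbal2 v with h | h | h <;> linarith
  have hsub : lk E V v ⊆ lk E S v ∪ (Finset.powersetCard 3 V).filter (fun T => ¬ Disjoint T (V \ S)) := by
    intro T hT
    obtain ⟨h1, h2⟩ := Finset.mem_filter.1 hT
    have hp := Finset.mem_powersetCard.1 h1
    rw [Finset.mem_union]
    by_cases h : Disjoint T (V \ S)
    · left
      refine Finset.mem_filter.2 ⟨Finset.mem_powersetCard.2 ⟨?_, hp.2⟩, h2⟩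
      intro x hx
      by_contra hn
      exact Finset.disjoint_left.1 h hx (Finset.mem_sdiff.2 ⟨hp.1 hx, hn⟩)
    · right; exact Finset.mem_filter.2 ⟨h1, h⟩
  have hc : ((lk E V v).card : ℝ) ≤ (lk E S v).card + (V \ S).card * (V.card : ℝ) ^ 2 := by
    exact_mod_cast (Finset.card_le_card hsub).trans ((Finset.card_union_le _ _).trans
      (Nat.add_le_add_left (hit_card V (V \ S)) _))
  have hVS : ((V \ S).card : ℝ) = V.card - S.card := by
    rw [Finset.card_sdiff_of_subset hSV, Nat.cast_sub (Finset.card_le_card hSV)]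
  rw [dg_eq_lk hU]
  rw [hVS] at hc
  have h3 : (S.card : ℝ) ^ 3 ≤ (V.card : ℝ) ^ 3 := pow_le_pow_left₀ hs0 hSle 3
  have h4 : ((V.card : ℝ) - S.card) * (V.card : ℝ) ^ 2 ≤ 2 / 10 ^ 4 * V.card * (V.card : ℝ) ^ 2 :=
    mul_le_mul_of_nonneg_right (by linarith) (by positivity)
  have h5 : 0 < (V.card : ℝ) ^ 3 := by positivity
  nlinarith

/-- `k` disjoint 7-sets inside `U` each spanning a copy. -/
def Mt (E : Finset (Finset ℕ)) (U : Finset ℕ) (k : ℕ) : Prop :=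
  ∃ S : Fin k → Finset ℕ, (∀ i, S i ⊆ U ∧ (S i).card = 7 ∧ ¬ Ind (res E (S i))) ∧
    ∀ i j, i ≠ j → Disjoint (S i) (S j)

/-- Quadruples of `V` meeting `L`. -/
def hitQ (V L : Finset ℕ) : Finset (Finset ℕ) :=
  (Finset.powersetCard 4 V).filter (fun q => ¬ Disjoint q L)

/-- The join of a clique on `L` with an odd construction. -/
def full (V L A : Finset ℕ) : Finset (Finset ℕ) := hitQ V L ∪ oddQ (V \ L) A

lemma not_ind_seven {E : Finset (Finset ℕ)} (hE4 : ∀ f ∈ E, f.card = 4) {U : Finset ℕ}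
    (h : ¬ Ind (res E U)) : ∃ S ⊆ U, S.card = 7 ∧ ¬ Ind (res E S) := by
  unfold Ind at h
  push Not at h
  obtain ⟨T, f, hT, hf, hw, -⟩ := h
  have hf4 := hE4 f (res_subset _ _ hf)
  have hfU : f ⊆ U := (Finset.mem_filter.1 hf).2
  have hdis : Disjoint T f := by
    rw [Finset.disjoint_left]
    intro x hx hxf
    have h1 := hw x hxf
    rw [Finset.insert_eq_of_mem hx] at h1
    have := hE4 _ (res_subset _ _ h1)
    omega
  have hTU : T ⊆ U := by
    have : f.Nonempty := Finset.card_pos.1 (by omega)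
    obtain ⟨x, hx⟩ := this
    exact (Finset.subset_insert _ _).trans (Finset.mem_filter.1 (hw x hx)).2
  refine ⟨T ∪ f, Finset.union_subset hTU hfU, ?_, ?_⟩
  · rw [Finset.card_union_of_disjoint hdis]; omega
  · intro hI
    refine hI T f hT (Finset.mem_filter.2 ⟨res_subset _ _ hf, Finset.subset_union_right⟩) ?_
    intro w hwf
    refine Finset.mem_filter.2 ⟨res_subset _ _ (hw w hwf), ?_⟩
    exact Finset.insert_subset (Finset.mem_union_right _ hwf) Finset.subset_union_left

lemma Mt_extend {E : Finset (Finset ℕ)} (hE4 : ∀ f ∈ E, f.card = 4) {U U' : Finset ℕ}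
    (hUU : U' ⊆ U) {k : ℕ} (h : Mt E U' k) :
    ∃ W ⊆ U', W.card ≤ 7 * k ∧ (Ind (res E (U \ W)) ∨ Mt E U (k + 1)) := by
  classical
  obtain ⟨S, hS, hd⟩ := h
  refine ⟨Finset.univ.biUnion S, ?_, ?_, ?_⟩
  · exact Finset.biUnion_subset.2 (fun i _ => (hS i).1)
  · have := Finset.card_biUnion_le_card_mul (Finset.univ : Finset (Fin k)) S 7
      (fun i _ => (hS i).2.1.le)
    simp at this
    omega
  · by_cases hI : Ind (res E (U \ Finset.univ.biUnion S))
    · exact Or.inl hI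
    right
    obtain ⟨R, hR, hR7, hRI⟩ := not_ind_seven hE4 hI
    have hdR : ∀ i, Disjoint R (S i) := by
      intro i
      rw [Finset.disjoint_left]
      intro x hx hxS
      exact (Finset.mem_sdiff.1 (hR hx)).2 (Finset.mem_biUnion.2 ⟨i, Finset.mem_univ _, hxS⟩)
    refine ⟨Fin.cons R S, ?_, ?_⟩
    · intro i
      refine Fin.cases ?_ (fun i => ?_) i
      · simp only [Fin.cons_zero]; exact ⟨hR.trans Finset.sdiff_subset, hR7, hRI⟩
      · simp only [Fin.cons_succ]; exact ⟨(hS i).1.trans hUU, (hS i).2⟩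
    · intro i j
      refine Fin.cases ?_ (fun i => ?_) i
      · refine Fin.cases ?_ (fun j => ?_) j
        · intro h; exact absurd rfl h
        · intro _; simp only [Fin.cons_zero, Fin.cons_succ]; exact hdR j
      · refine Fin.cases ?_ (fun j => ?_) j
        · intro _; simp only [Fin.cons_zero, Fin.cons_succ]; exact (hdR i).symm
        · intro h
          simp only [Fin.cons_succ]
          exact hd i j (fun e => h (by rw [e]))

lemma Mt_zero (E : Finset (Finset ℕ)) (U : Finset ℕ) : Mt E U 0 :=
  ⟨Fin.elim0, fun i => i.elim0, fun i => i.elim0⟩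

lemma exists_cover {E : Finset (Finset ℕ)} (hE4 : ∀ f ∈ E, f.card = 4) (U : Finset ℕ) (j : ℕ)
    (h : ¬ Mt E U (j + 1)) : ∃ W ⊆ U, W.card ≤ 7 * j ∧ Ind (res E (U \ W)) := by
  induction j with
  | zero =>
    obtain ⟨W, h1, h2, h3⟩ := Mt_extend hE4 (le_refl U) (Mt_zero E U)
    exact ⟨W, h1, h2, h3.resolve_right h⟩
  | succ j ih =>
    by_cases hj : Mt E U (j + 1)
    · obtain ⟨W, h1, h2, h3⟩ := Mt_extend hE4 (le_refl U) hj
      exact ⟨W, h1, h2, h3.resolve_right h⟩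
    · obtain ⟨W, h1, h2, h3⟩ := ih hj
      exact ⟨W, h1, by omega, h3⟩

lemma del_bound {V : Finset ℕ} {E : Finset (Finset ℕ)} (X : Finset ℕ)
    (hU : E ⊆ Finset.powersetCard 4 V) :
    E.card ≤ (res E (V \ X)).card + ∑ x ∈ X, dg E x := by
  have hsub : E ⊆ res E (V \ X) ∪ X.biUnion (fun x => E.filter (fun f => x ∈ f)) := by
    intro f hf
    rw [Finset.mem_union]
    by_cases h : Disjoint f X
    · left
      refine Finset.mem_filter.2 ⟨hf, ?_⟩
      intro x hx
      exact Finset.mem_sdiff.2 ⟨(Finset.mem_powersetCard.1 (hU hf)).1 hx, Finset.disjoint_left.1 h hx⟩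
    · right
      obtain ⟨x, h1, h2⟩ := Finset.not_disjoint_iff.1 h
      exact Finset.mem_biUnion.2 ⟨x, h2, Finset.mem_filter.2 ⟨hf, h1⟩⟩
  exact (Finset.card_le_card hsub).trans ((Finset.card_union_le _ _).trans
    (Nat.add_le_add_left Finset.card_biUnion_le _))

lemma dg_le {V : Finset ℕ} {E : Finset (Finset ℕ)} (hU : E ⊆ Finset.powersetCard 4 V) (v : ℕ) :
    dg E v ≤ V.card ^ 3 := by
  rw [dg_eq_lk hU]
  refine (Finset.card_le_card (Finset.filter_subset _ _)).trans ?_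
  rw [Finset.card_powersetCard]
  have := six_choose_three V.card
  omega

lemma dg_res {V U : Finset ℕ} {E : Finset (Finset ℕ)} (hU : E ⊆ Finset.powersetCard 4 V)
    {v : ℕ} (hv : v ∈ U) :
    dg E v ≤ dg (res E U) v + (V \ U).card * V.card ^ 2 := by
  rw [dg_eq_lk hU, dg_eq_lk (res_unif hU U)]
  have hsub : lk E V v ⊆ lk (res E U) U v ∪
      (Finset.powersetCard 3 V).filter (fun T => ¬ Disjoint T (V \ U)) := by
    intro T hT
    obtain ⟨h1, h2⟩ := Finset.mem_filter.1 hT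
    have hp := Finset.mem_powersetCard.1 h1
    rw [Finset.mem_union]
    by_cases h : Disjoint T (V \ U)
    · left
      have hTU : T ⊆ U := by
        intro x hx
        by_contra hn
        exact Finset.disjoint_left.1 h hx (Finset.mem_sdiff.2 ⟨hp.1 hx, hn⟩)
      exact Finset.mem_filter.2 ⟨Finset.mem_powersetCard.2 ⟨hTU, hp.2⟩,
        Finset.mem_filter.2 ⟨h2, Finset.insert_subset hv hTU⟩⟩
    · right; exact Finset.mem_filter.2 ⟨h1, h⟩
  exact (Finset.card_le_card hsub).trans ((Finset.card_union_le _ _).trans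
      (Nat.add_le_add_left (hit_card V (V \ U)) _))

/-- the extension step -/
lemma ext_step {V : Finset ℕ} {E : Finset (Finset ℕ)} (hU : E ⊆ Finset.powersetCard 4 V)
    (hn : (10 : ℝ) ^ 20 ≤ V.card) (hE : (1 / 48 - 1 / 10 ^ 19) * (V.card : ℝ) ^ 4 ≤ E.card)
    (R : Finset ℕ) (k : ℕ) (hRk : (R.card : ℝ) + 7 * k ≤ 2 / 10 ^ 19 * V.card) {v : ℕ}
    (hvV : v ∈ V) (hvR : v ∉ R) (hv : (1 / 12 + 1 / 1000) * (V.card : ℝ) ^ 3 < dg E v)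
    (hM : Mt E (V \ insert v R) k) : Mt E (V \ R) (k + 1) := by
  have hE4 : ∀ f ∈ E, f.card = 4 := fun f hf => (Finset.mem_powersetCard.1 (hU hf)).2
  obtain ⟨W, hW1, hW2, hW3⟩ := Mt_extend hE4
    (Finset.sdiff_subset_sdiff (le_refl V) (Finset.subset_insert v R)) hM
  refine hW3.resolve_left (fun hI => ?_)
  set U := (V \ R) \ W with hUdef
  have hvU : v ∈ U := by
    refine Finset.mem_sdiff.2 ⟨Finset.mem_sdiff.2 ⟨hvV, hvR⟩, fun h => ?_⟩
    exact (Finset.mem_sdiff.1 (hW1 h)).2 (Finset.mem_insert_self _ _)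
  have hUV : U ⊆ V := Finset.sdiff_subset.trans Finset.sdiff_subset
  have hX : (V \ U).card ≤ R.card + 7 * k := by
    have : V \ U ⊆ R ∪ W := by
      intro x hx
      simp only [hUdef, Finset.mem_sdiff, Finset.mem_union] at hx ⊢
      tauto
    exact (Finset.card_le_card this).trans ((Finset.card_union_le _ _).trans (by omega))
  have hX' : ((V \ U).card : ℝ) ≤ 2 / 10 ^ 19 * V.card := by
    have : ((V \ U).card : ℝ) ≤ R.card + 7 * k := by exact_mod_cast hX
    linarith
  have hUc : ((V \ U).card : ℝ) = V.card - U.card := by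
    rw [Finset.card_sdiff_of_subset hUV, Nat.cast_sub (Finset.card_le_card hUV)]
  have h1 : (E.card : ℝ) ≤ (res E U).card + (V \ U).card * (V.card : ℝ) ^ 3 := by
    have h := del_bound (V \ U) hU
    rw [Finset.sdiff_sdiff_eq_self hUV] at h
    have h2 : ∑ x ∈ V \ U, dg E x ≤ (V \ U).card * V.card ^ 3 := by
      rw [← smul_eq_mul]
      exact Finset.sum_le_card_nsmul _ _ _ (fun x _ => dg_le hU x)
    exact_mod_cast h.trans (Nat.add_le_add_left h2 _)
  have h2 : (dg E v : ℝ) ≤ dg (res E U) v + (V \ U).card * (V.card : ℝ) ^ 2 := by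
    exact_mod_cast dg_res hU hvU
  have hUle : (U.card : ℝ) ≤ V.card := by exact_mod_cast Finset.card_le_card hUV
  have hU0 : (0 : ℝ) ≤ U.card := Nat.cast_nonneg _
  have hn0 : (0 : ℝ) < V.card := by linarith [show (0 : ℝ) < 10 ^ 20 by norm_num]
  have h4 : (U.card : ℝ) ^ 4 ≤ (V.card : ℝ) ^ 4 := pow_le_pow_left₀ hU0 hUle 4
  have h3 : (U.card : ℝ) ^ 3 ≤ (V.card : ℝ) ^ 3 := pow_le_pow_left₀ hU0 hUle 3
  have hdb := deg_bound (res_unif hU U) hI (by linarith) ?_ v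
  · have e1 := mul_le_mul_of_nonneg_right hX' (show (0 : ℝ) ≤ (V.card : ℝ) ^ 2 by positivity)
    have : 0 < (V.card : ℝ) ^ 3 := by positivity
    nlinarith
  · have e1 := mul_le_mul_of_nonneg_right hX' (show (0 : ℝ) ≤ (V.card : ℝ) ^ 3 by positivity)
    have : 0 < (V.card : ℝ) ^ 4 := by positivity
    nlinarith

lemma hitQ_card {V L : Finset ℕ} (hL : L ⊆ V) :
    (hitQ V L).card + (V.card - L.card).choose 4 = V.card.choose 4 := by
  have h := Finset.card_filter_add_card_filter_not (s := Finset.powersetCard 4 V) (fun q => ¬ Disjoint q L)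
  rw [Finset.card_powersetCard] at h
  have h2 : (Finset.powersetCard 4 V).filter (fun q => ¬ ¬ Disjoint q L) = Finset.powersetCard 4 (V \ L) := by
    ext q
    simp only [not_not, Finset.mem_filter, Finset.mem_powersetCard, Finset.subset_sdiff]
    tauto
  rw [h2, Finset.card_powersetCard, Finset.card_sdiff_of_subset hL] at h
  exact h

lemma full_card {V L A : Finset ℕ} : (full V L A).card = (hitQ V L).card + (oddQ (V \ L) A).card := by
  unfold full
  apply Finset.card_union_of_disjoint
  rw [Finset.disjoint_left]
  intro q h1 h2
  have h3 := (Finset.mem_powersetCard.1 (Finset.mem_filter.1 h2).1).1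
  exact (Finset.mem_filter.1 h1).2 (Finset.subset_sdiff.1 h3).2

lemma sub_hit {V : Finset ℕ} {E : Finset (Finset ℕ)} (hU : E ⊆ Finset.powersetCard 4 V) (L : Finset ℕ) :
    E ⊆ hitQ V L ∪ res E (V \ L) := by
  intro f hf
  rw [Finset.mem_union]
  by_cases h : Disjoint f L
  · right
    exact Finset.mem_filter.2 ⟨hf, Finset.subset_sdiff.2 ⟨(Finset.mem_powersetCard.1 (hU hf)).1, h⟩⟩
  · left; exact Finset.mem_filter.2 ⟨hU hf, h⟩

lemma choose4_real (a : ℕ) : (a.choose 4 : ℝ) = a * (a - 1) * (a - 2) * (a - 3) / 24 := by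
  rw [Nat.cast_choose_eq_descPochhammer_div]
  simp [descPochhammer_succ_right, Nat.factorial]

noncomputable def cf (x : ℝ) : ℝ := x * (x - 1) * (x - 2) * (x - 3) / 24

lemma cf_diff {x y : ℝ} (hy : 1 ≤ y) (hxy : y ≤ x) :
    (x - y) * (4 * y ^ 3 - 18 * x ^ 2) / 24 ≤ cf x - cf y := by
  unfold cf
  have hx : 1 ≤ x := le_trans hy hxy
  have e : x * (x - 1) * (x - 2) * (x - 3) / 24 - y * (y - 1) * (y - 2) * (y - 3) / 24 =
    (x - y) * (x ^ 3 + x ^ 2 * y + x * y ^ 2 + y ^ 3 - 6 * (x ^ 2 + x * y + y ^ 2) + 11 * (x + y) - 6) / 24 := by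
    ring
  rw [e]
  have h1 : y ^ 3 ≤ x ^ 3 := by gcongr
  have h2 : y ^ 2 ≤ x ^ 2 := by gcongr
  have h3 : y ^ 3 ≤ x ^ 2 * y := by nlinarith
  have h4 : y ^ 3 ≤ x * y ^ 2 := by nlinarith [sq_nonneg y]
  have h5 : x * y ≤ x ^ 2 := by nlinarith
  have h0 : 0 ≤ x - y := by linarith
  have : 4 * y ^ 3 - 18 * x ^ 2 ≤ x ^ 3 + x ^ 2 * y + x * y ^ 2 + y ^ 3 - 6 * (x ^ 2 + x * y + y ^ 2) + 11 * (x + y) - 6 := by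
    linarith
  have := mul_le_mul_of_nonneg_left this h0
  linarith

lemma gf_diff {x y : ℝ} (hy : 1 ≤ y) (hxy : y ≤ x) :
    gf x - gf y ≤ (x - y) * (4 * x ^ 3 + 34 * x) / 48 ∧
    (x - y) * (4 * y ^ 3 - 18 * x ^ 2 - 24) / 48 ≤ gf x - gf y := by
  unfold gf
  have hx : 1 ≤ x := le_trans hy hxy
  have e : (x ^ 2 - 3 * x + 4) ^ 2 / 48 - (y ^ 2 - 3 * y + 4) ^ 2 / 48 =
    (x - y) * (x ^ 3 + x ^ 2 * y + x * y ^ 2 + y ^ 3 - 6 * (x ^ 2 + x * y + y ^ 2) + 17 * (x + y) - 24) / 48 := by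
    ring
  rw [e]
  have h1 : y ^ 3 ≤ x ^ 3 := by gcongr
  have h2 : y ^ 2 ≤ x ^ 2 := by gcongr
  have h3 : y ^ 3 ≤ x ^ 2 * y := by nlinarith
  have h4 : y ^ 3 ≤ x * y ^ 2 := by nlinarith [sq_nonneg y]
  have h5 : x * y ≤ x ^ 2 := by nlinarith
  have h6 : x ^ 2 * y ≤ x ^ 3 := by nlinarith [sq_nonneg x]
  have h7 : x * y ^ 2 ≤ x ^ 3 := by nlinarith
  have h0 : 0 ≤ x - y := by linarith
  have h8 : 0 ≤ x * y := by nlinarith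
  have h9 : 0 ≤ x ^ 2 := by positivity
  have h10 : 0 ≤ y ^ 2 := by positivity
  constructor
  · have : x ^ 3 + x ^ 2 * y + x * y ^ 2 + y ^ 3 - 6 * (x ^ 2 + x * y + y ^ 2) + 17 * (x + y) - 24 ≤ 4 * x ^ 3 + 34 * x := by
      linarith
    have := mul_le_mul_of_nonneg_left this h0
    linarith
  · have : 4 * y ^ 3 - 18 * x ^ 2 - 24 ≤ x ^ 3 + x ^ 2 * y + x * y ^ 2 + y ^ 3 - 6 * (x ^ 2 + x * y + y ^ 2) + 17 * (x + y) - 24 := by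
      linarith
    have := mul_le_mul_of_nonneg_left this h0
    linarith

set_option maxHeartbeats 1000000 in
lemma num_contra {n s t w : ℝ} (hn : 10 ^ 20 ≤ n) (hs : 0 ≤ s) (ht : t ≤ 1 / 10 ^ 20 * n)
    (hj : s + 1 ≤ t) (hw0 : 0 ≤ w) (hw : w ≤ 7 * (t - s))
    (h : cf (n - s) - cf (n - t) + gf (n - t) - (n - t) ^ 2 ≤
      w * ((1 / 12 + 1 / 1000) * n ^ 3) + gf (n - s - w)) : False := by
  have hn0 : 0 < n := by linarith [show (0 : ℝ) < 10 ^ 20 by norm_num]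
  have hbig : (1 : ℝ) ≤ (1 - 1 / 10 ^ 8) * n := by
    nlinarith [show (100 : ℝ) ≤ 10 ^ 20 by norm_num]
  have hy : (1 - 1 / 10 ^ 8) * n ≤ n - t := by
    norm_num at ht ⊢; linarith
  have hz : (1 - 1 / 10 ^ 8) * n ≤ n - s - w := by
    norm_num at ht ⊢; linarith
  have h1 := cf_diff (x := n - s) (y := n - t) (by linarith) (by linarith)
  have h2 := (gf_diff (x := n - s) (y := n - t) (by linarith) (by linarith)).1
  have h3 := (gf_diff (x := n - s) (y := n - s - w) (by linarith) (by linarith)).2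
  have hx : n - s ≤ n := by linarith
  have hx0 : 0 ≤ n - s := by linarith
  have x2 : (n - s) ^ 2 ≤ n ^ 2 := by gcongr
  have x3 : (n - s) ^ 3 ≤ n ^ 3 := by gcongr
  have n2 : n ^ 2 ≤ 1 / 10 ^ 20 * n ^ 3 := by
    have : 0 ≤ n ^ 2 * (n - 10 ^ 20) := by apply mul_nonneg; positivity; linarith
    norm_num at this ⊢
    nlinarith
  have n1 : n ≤ 1 / 10 ^ 20 * n ^ 3 := by
    nlinarith [show (1 : ℝ) ≤ 10 ^ 20 by norm_num]
  have hc : (1 - 1 / 10 ^ 6 : ℝ) * n ^ 3 ≤ ((1 - 1 / 10 ^ 8) * n) ^ 3 := by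
    rw [mul_pow]; gcongr; norm_num
  have y3 : (1 - 1 / 10 ^ 6 : ℝ) * n ^ 3 ≤ (n - t) ^ 3 := by
    refine hc.trans ?_
    have : 0 ≤ (1 - 1 / 10 ^ 8) * n := by linarith
    gcongr
  have z3 : (1 - 1 / 10 ^ 6 : ℝ) * n ^ 3 ≤ (n - s - w) ^ 3 := by
    refine hc.trans ?_
    have : 0 ≤ (1 - 1 / 10 ^ 8) * n := by linarith
    gcongr
  have y2 : (n - t) ^ 2 ≤ n ^ 2 := by
    have : 0 ≤ n - t := by linarith
    have : n - t ≤ n := by linarith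
    gcongr
  have hM : 1 ≤ n ^ 3 := by
    have : (1 : ℝ) ≤ n := by linarith [show (1 : ℝ) ≤ 10 ^ 20 by norm_num]
    exact one_le_pow₀ this
  have n0 : 1 ≤ 1 / 10 ^ 20 * n ^ 3 := by
    refine le_trans ?_ n1
    linarith [show (1 : ℝ) ≤ 10 ^ 20 by norm_num]
  set j := t - s with hjd
  have hj1 : 1 ≤ j := by linarith
  have exy : n - s - (n - t) = j := by rw [hjd]; ring
  have exz : n - s - (n - s - w) = w := by ring
  rw [exy] at h1 h2
  rw [exz] at h3
  have a1 : j * ((4 - 1 / 10 ^ 5) * n ^ 3) ≤ j * (4 * (n - t) ^ 3 - 18 * (n - s) ^ 2) := by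
    apply mul_le_mul_of_nonneg_left _ (by linarith)
    norm_num at *; linarith
  have a2 : j * (4 * (n - s) ^ 3 + 34 * (n - s)) ≤ j * ((4 + 1 / 10 ^ 5) * n ^ 3) := by
    apply mul_le_mul_of_nonneg_left _ (by linarith)
    norm_num at *; linarith
  have a3 : w * ((4 - 1 / 10 ^ 5) * n ^ 3) ≤ w * (4 * (n - s - w) ^ 3 - 18 * (n - s) ^ 2 - 24) := by
    apply mul_le_mul_of_nonneg_left _ hw0
    norm_num at *; linarith
  have a4 : (n - t) ^ 2 ≤ j * (1 / 10 ^ 5 * n ^ 3) := by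
    have : 1 / 10 ^ 5 * n ^ 3 ≤ j * (1 / 10 ^ 5 * n ^ 3) := le_mul_of_one_le_left (by positivity) hj1
    norm_num at *; linarith
  have a5 : w * n ^ 3 ≤ 7 * (j * n ^ 3) := by
    have := mul_le_mul_of_nonneg_right hw (show 0 ≤ n ^ 3 by positivity)
    linarith
  have a6 : 0 < j * n ^ 3 := by positivity
  norm_num at *
  linarith

lemma low_bound {n t : ℝ} (hn : 10 ^ 20 ≤ n) (ht0 : 0 ≤ t) (ht : t ≤ 1 / 10 ^ 20 * n) :
    (1 / 48 - 1 / 10 ^ 19) * n ^ 4 ≤ cf n - cf (n - t) + gf (n - t) - (n - t) ^ 2 := by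
  have hn0 : 0 < n := by linarith [show (0 : ℝ) < 10 ^ 20 by norm_num]
  have hy : 1 ≤ n - t := by
    nlinarith [show (100 : ℝ) ≤ 10 ^ 20 by norm_num]
  have h1 := cf_diff (x := n) (y := n - t) (by linarith) (by linarith)
  have h2 := (gf_diff (x := n) (y := n - t) (by linarith) (by linarith)).1
  have e : n - (n - t) = t := by ring
  rw [e] at h1 h2
  have y2 : (n - t) ^ 2 ≤ n ^ 2 := by gcongr; linarith
  have y3 : (1 / 2 : ℝ) * n ^ 3 ≤ (n - t) ^ 3 := by
    have : (0.9 * n) ^ 3 ≤ (n - t) ^ 3 := by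
      gcongr
      norm_num at ht ⊢; linarith
    refine le_trans ?_ this
    rw [mul_pow]; gcongr; norm_num
  have n1 : n ≤ n ^ 3 := by
    apply le_self_pow₀ _ (by norm_num)
    linarith [show (1 : ℝ) ≤ 10 ^ 20 by norm_num]
  have n2 : 10 ^ 20 * n ^ 2 ≤ n ^ 3 := by
    have : 0 ≤ n ^ 2 * (n - 10 ^ 20) := by apply mul_nonneg; positivity; linarith
    norm_num at this ⊢
    nlinarith
  have n4 : 10 ^ 20 * n ^ 3 ≤ n ^ 4 := by
    have : 0 ≤ n ^ 3 * (n - 10 ^ 20) := by apply mul_nonneg; positivity; linarith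
    norm_num at this ⊢
    nlinarith
  have a1 : 0 ≤ t * (4 * (n - t) ^ 3 - 18 * n ^ 2) := by
    apply mul_nonneg ht0
    norm_num at *; nlinarith [sq_nonneg n]
  have a2 : t * (4 * n ^ 3 + 34 * n) ≤ 1 / 10 ^ 20 * n * (38 * n ^ 3) := by
    apply mul_le_mul ht _ (by positivity) (by positivity)
    linarith
  have a3 : 1 / 48 * n ^ 4 - 1 / 8 * n ^ 3 ≤ gf n + 1 / 8 * n ^ 2 * 0 := by
    unfold gf
    have : (n ^ 2 - 3 * n + 4) ^ 2 = n ^ 4 - 6 * n ^ 3 + 17 * n ^ 2 - 24 * n + 16 := by ring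
    rw [this]
    nlinarith [show (100 : ℝ) ≤ 10 ^ 20 by norm_num]
  have e4 : 1 / 10 ^ 20 * n * (38 * n ^ 3) = 38 / 10 ^ 20 * n ^ 4 := by ring
  rw [e4] at a2
  have hp : 0 < n ^ 3 := by positivity
  have hp2 : 0 < n ^ 4 := by positivity
  have hp3 : 0 < n ^ 2 := by positivity
  norm_num at *
  linarith

lemma hitQ_real {V L : Finset ℕ} (hL : L ⊆ V) :
    ((hitQ V L).card : ℝ) = cf V.card - cf ((V.card : ℝ) - L.card) := by
  have h := hitQ_card hL
  have h' : ((hitQ V L).card : ℝ) + ((V.card - L.card).choose 4 : ℕ) = (V.card.choose 4 : ℕ) := by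
    exact_mod_cast h
  rw [choose4_real, choose4_real, Nat.cast_sub (Finset.card_le_card hL)] at h'
  unfold cf
  linarith

lemma grow {V : Finset ℕ} {E : Finset (Finset ℕ)} (hU : E ⊆ Finset.powersetCard 4 V)
    (hn : (10 : ℝ) ^ 20 ≤ V.card) (hE : (1 / 48 - 1 / 10 ^ 19) * (V.card : ℝ) ^ 4 ≤ E.card)
    (t : ℕ) (ht : (t : ℝ) ≤ 1 / 10 ^ 20 * V.card) (R : Finset ℕ) :
    ∀ k : ℕ, (∀ v ∈ R, v ∈ V ∧ (1 / 12 + 1 / 1000) * (V.card : ℝ) ^ 3 < dg E v) →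
      R.card + k ≤ t + 1 → Mt E (V \ R) k → Mt E V (k + R.card) := by
  induction R using Finset.induction_on with
  | empty => intro k _ _ h; simpa using h
  | insert v R hv ih =>
    intro k hR hk hM
    rw [Finset.card_insert_of_notMem hv] at hk ⊢
    have h1 := hR v (Finset.mem_insert_self v R)
    have h2 := ext_step hU hn hE R k (by
      have : (R.card : ℝ) + 1 + k ≤ t + 1 := by exact_mod_cast hk
      have hR0 : (0 : ℝ) ≤ R.card := by positivity
      norm_num at ht hn ⊢
      linarith) h1.1 hv h1.2 hM
    have := ih (k + 1) (fun u hu => hR u (Finset.mem_insert_of_mem hu)) (by omega) h2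
    rwa [show k + (R.card + 1) = k + 1 + R.card by ring]

theorem main_struct {V : Finset ℕ} {E : Finset (Finset ℕ)} {t : ℕ}
    (hU : E ⊆ Finset.powersetCard 4 V)
    (hn : (10 : ℝ) ^ 20 ≤ V.card) (ht : (t : ℝ) ≤ 1 / 10 ^ 20 * V.card)
    (hM : ¬ Mt E V (t + 1))
    (hmax : ∀ L ⊆ V, L.card = t → ∀ A ⊆ V \ L, (full V L A).card ≤ E.card) :
    ∃ L ⊆ V, L.card = t ∧ ∃ A ⊆ V \ L, E = full V L A := by
  classical
  have hn0 : (0 : ℝ) ≤ V.card := by positivity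
  have htn : t ≤ V.card := by
    have : (t : ℝ) ≤ V.card := by norm_num at ht; linarith
    exact_mod_cast this
  have hlow : cf V.card - cf ((V.card : ℝ) - t) + gf ((V.card : ℝ) - t) - ((V.card : ℝ) - t) ^ 2 ≤
      E.card := by
    obtain ⟨L, hL, hLt⟩ := Finset.exists_subset_card_eq htn
    have hc : (V \ L).card = V.card - t := by rw [Finset.card_sdiff_of_subset hL, hLt]
    have hcr : ((V \ L).card : ℝ) = (V.card : ℝ) - t := by rw [hc, Nat.cast_sub htn]
    obtain ⟨A, hA, -, hg⟩ := exists_balanced (V \ L) (by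
      have : (2 : ℝ) ≤ (V \ L).card := by
        rw [hcr]; norm_num at ht ⊢; linarith
      exact_mod_cast this)
    have := hmax L hL hLt A hA
    rw [full_card] at this
    have h2 : ((hitQ V L).card : ℝ) + (oddQ (V \ L) A).card ≤ E.card := by exact_mod_cast this
    rw [hitQ_real hL, hLt] at h2
    rw [hcr] at hg
    linarith
  have hE := (low_bound hn (by positivity) ht).trans hlow
  have hE4 : ∀ f ∈ E, f.card = 4 := fun f hf => (Finset.mem_powersetCard.mp (hU hf)).2
  set L := V.filter (fun v => (1 / 12 + 1 / 1000) * (V.card : ℝ) ^ 3 < dg E v) with hLd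
  have hLV : L ⊆ V := Finset.filter_subset _ _
  have hLm : ∀ v ∈ L, v ∈ V ∧ (1 / 12 + 1 / 1000) * (V.card : ℝ) ^ 3 < dg E v := fun v hv =>
    Finset.mem_filter.mp hv
  have hLt : L.card ≤ t := by
    by_contra hcon
    obtain ⟨R, hR, hRc⟩ := Finset.exists_subset_card_eq (show t + 1 ≤ L.card by omega)
    have := grow hU hn hE t ht R 0 (fun v hv => hLm v (hR hv)) (by omega) (Mt_zero _ _)
    rw [hRc, zero_add] at this
    exact hM this
  have hj : ¬ Mt E (V \ L) (t - L.card + 1) := by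
    intro h
    have := grow hU hn hE t ht L _ hLm (by omega) h
    rw [show t - L.card + 1 + L.card = t + 1 by omega] at this
    exact hM this
  obtain ⟨W, hWU, hWc, hWI⟩ := exists_cover hE4 (V \ L) (t - L.card) hj
  have hcx : ((V \ L).card : ℝ) = (V.card : ℝ) - L.card := by
    rw [Finset.card_sdiff_of_subset hLV, Nat.cast_sub (Finset.card_le_card hLV)]
  have hcz : (((V \ L) \ W).card : ℝ) = (V.card : ℝ) - L.card - W.card := by
    rw [Finset.card_sdiff_of_subset hWU, Nat.cast_sub (Finset.card_le_card hWU), hcx]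
  have hWr : (W.card : ℝ) ≤ 7 * ((t : ℝ) - L.card) := by
    rw [← Nat.cast_sub hLt]; exact_mod_cast hWc
  have hL0 : (0 : ℝ) ≤ L.card := by positivity
  have hz16 : (10 : ℝ) ^ 16 ≤ ((V \ L) \ W).card := by
    rw [hcz]; norm_num at ht ⊢; linarith
  have hsub := Finset.card_le_card (sub_hit hU L)
  have hsub2 := hsub.trans (Finset.card_union_le _ _)
  by_cases hjt : L.card = t
  · refine ⟨L, hLV, hjt, ?_⟩
    have hW : W = ∅ := by
      rw [← Finset.card_eq_zero]; omega
    subst hW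
    rw [Finset.sdiff_empty] at hWI hz16
    obtain ⟨A, hA, h⟩ := T0 (res_unif hU (V \ L)) hWI hz16
    have hm := hmax L hLV hjt A hA
    rw [full_card] at hm
    rcases h with h | h
    · omega
    · refine ⟨A, hA, ?_⟩
      have hs := sub_hit hU L
      rw [h] at hs
      refine Finset.eq_of_subset_of_card_le hs ?_
      rw [full_card]; exact hm
  · exfalso
    have hd := del_bound (V := V \ L) W (res_unif hU (V \ L))
    have hrr : res (res E (V \ L)) ((V \ L) \ W) = res E ((V \ L) \ W) := by
      ext f
      simp only [res, Finset.mem_filter]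
      constructor
      · rintro ⟨⟨a, b⟩, c⟩; exact ⟨a, c⟩
      · rintro ⟨a, c⟩; exact ⟨⟨a, c.trans Finset.sdiff_subset⟩, c⟩
    rw [hrr] at hd
    have hg := ind_le_gf (res_unif hU ((V \ L) \ W)) hWI hz16
    have hsum : ((∑ x ∈ W, dg (res E (V \ L)) x : ℕ) : ℝ) ≤
        W.card * ((1 / 12 + 1 / 1000) * (V.card : ℝ) ^ 3) := by
      push_cast
      rw [← nsmul_eq_mul]
      apply Finset.sum_le_card_nsmul
      intro x hx
      have hx2 := Finset.mem_sdiff.mp (hWU hx)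
      have hx3 : (dg E x : ℝ) ≤ (1 / 12 + 1 / 1000) * (V.card : ℝ) ^ 3 := by
        by_contra hcon
        exact hx2.2 (Finset.mem_filter.mpr ⟨hx2.1, not_le.mp hcon⟩)
      refine le_trans ?_ hx3
      have : dg (res E (V \ L)) x ≤ dg E x := by
        unfold dg
        exact Finset.card_le_card (Finset.filter_subset_filter _ (res_subset _ _))
      exact_mod_cast this
    have hdr : ((res E (V \ L)).card : ℝ) ≤ (res E ((V \ L) \ W)).card +
        ((∑ x ∈ W, dg (res E (V \ L)) x : ℕ) : ℝ) := by exact_mod_cast hd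
    have hs2 : (E.card : ℝ) ≤ (hitQ V L).card + (res E (V \ L)).card := by exact_mod_cast hsub2
    rw [hitQ_real hLV] at hs2
    rw [hcz] at hg
    refine num_contra (n := V.card) (s := L.card) (t := t) (w := W.card) hn hL0 ht ?_
      (by positivity) hWr ?_
    · exact_mod_cast (show L.card + 1 ≤ t by omega)
    · linarith

lemma F43_edges : F43.edges =
    {({1,2,3,4} : Finset ℕ), {1,2,3,5}, {1,2,3,6}, {1,2,3,7}, {4,5,6,7}} := by decide

lemma F43_verts : F43.verts = {1,2,3,4,5,6,7} := by decide

lemma induce_mem (H : HGraph 4) (S e : Finset ℕ) :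
    e ∈ (H.induce S).edges ↔ e ∈ res H.edges S := by
  simp only [HGraph.induce, HGraph.ofEdges, res, Finset.mem_filter]
  constructor
  · rintro ⟨h, -⟩; exact h
  · intro h
    exact ⟨h, Finset.subset_inter (H.edges_sub e h.1) h.2, H.edges_card e h.1⟩

set_option maxHeartbeats 1000000 in
lemma copy_iff (H : HGraph 4) (S : Finset ℕ) :
    F43.IsCopyIn (H.induce S) ↔ ¬ Ind (res H.edges S) := by
  constructor
  · rintro ⟨f, hinj, -, he⟩ hI
    simp only [induce_mem, F43_edges, Finset.mem_insert, Finset.mem_singleton, forall_eq_or_imp,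
      forall_eq, Finset.image_insert, Finset.image_singleton] at he
    obtain ⟨h4, h5, h6, h7, hg⟩ := he
    rw [F43_verts] at hinj
    refine hI {f 1, f 2, f 3} {f 4, f 5, f 6, f 7} ?_ hg ?_
    · have : ({f 1, f 2, f 3} : Finset ℕ) = ({1, 2, 3} : Finset ℕ).image f := by
        simp [Finset.image_insert]
      rw [this, Finset.card_image_of_injOn]
      · rfl
      · exact hinj.mono (by intro x; simp; tauto)
    · intro w hw
      have key : ∀ u, insert u ({f 1, f 2, f 3} : Finset ℕ) = {f 1, f 2, f 3, u} := by
        intro u; ext x; simp; tauto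
      rw [key]
      simp only [Finset.mem_insert, Finset.mem_singleton] at hw
      rcases hw with rfl | rfl | rfl | rfl <;> assumption
  · intro h
    unfold Ind at h
    push Not at h
    obtain ⟨T, g, hT, hg, hw, -⟩ := h
    have hc4 : ∀ e ∈ res H.edges S, e.card = 4 := fun e he =>
      H.edges_card e (Finset.mem_filter.mp he).1
    have hsub : ∀ e ∈ res H.edges S, e ⊆ (H.induce S).verts := fun e he =>
      Finset.subset_inter (H.edges_sub e (Finset.mem_filter.mp he).1) (Finset.mem_filter.mp he).2
    have hg4 := hc4 g hg
    have hdis : ∀ w ∈ g, w ∉ T := by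
      intro w hw1 hw2
      have := hc4 _ (hw w hw1)
      rw [Finset.insert_eq_of_mem hw2] at this
      omega
    obtain ⟨a, b, c, hab, hac, hbc, rfl⟩ := Finset.card_eq_three.mp hT
    obtain ⟨p, q, r, s, hpq, hpr, hps, hqr, hqs, hrs, rfl⟩ := Finset.card_eq_four.mp hg4
    have mp := hw p (by simp)
    have mq := hw q (by simp)
    have mr := hw r (by simp)
    have ms := hw s (by simp)
    have dp := hdis p (by simp)
    have dq := hdis q (by simp)
    have dr := hdis r (by simp)
    have ds := hdis s (by simp)
    simp only [Finset.mem_insert, Finset.mem_singleton, not_or] at dp dq dr ds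
    have key : ∀ u, insert u ({a, b, c} : Finset ℕ) = {a, b, c, u} := by
      intro u; ext x; simp; tauto
    rw [key] at mp mq mr ms
    let f : ℕ → ℕ := fun i => if i = 1 then a else if i = 2 then b else if i = 3 then c else
      if i = 4 then p else if i = 5 then q else if i = 6 then r else s
    have f1 : f 1 = a := rfl
    have f2 : f 2 = b := rfl
    have f3 : f 3 = c := rfl
    have f4 : f 4 = p := rfl
    have f5 : f 5 = q := rfl
    have f6 : f 6 = r := rfl
    have f7 : f 7 = s := rfl
    refine ⟨f, ?_, ?_, ?_⟩
    · apply Finset.card_image_iff.mp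
      have him : F43.verts.image f = {a, b, c} ∪ {p, q, r, s} := by
        rw [F43_verts]
        simp only [Finset.image_insert, Finset.image_singleton, f1, f2, f3, f4, f5, f6, f7,
          Finset.insert_union, Finset.singleton_union]
      rw [him, Finset.card_union_of_disjoint (Finset.disjoint_right.mpr hdis), hT, hg4, F43_verts]
      rfl
    · rw [F43_verts]
      have s1 := hsub _ mp
      have s2 := hsub _ hg
      simp only [Finset.insert_subset_iff, Finset.singleton_subset_iff] at s1 s2
      simp only [Finset.mem_insert, Finset.mem_singleton, forall_eq_or_imp, forall_eq, f1, f2, f3,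
        f4, f5, f6, f7]
      tauto
    · simp only [induce_mem, F43_edges, Finset.mem_insert, Finset.mem_singleton, forall_eq_or_imp,
        forall_eq, Finset.image_insert, Finset.image_singleton, f1, f2, f3, f4, f5, f6, f7]
      exact ⟨mp, mq, mr, ms, hg⟩

lemma matching_iff (H : HGraph 4) (k : ℕ) :
    F43.HasMatching H k ↔ Mt H.edges H.verts k := by
  unfold HGraph.HasMatching Mt
  have h7 : F43.verts.card = 7 := by rw [F43_verts]; rfl
  simp only [copy_iff, h7]
  constructor
  · rintro ⟨S, h1, h2, h3⟩; exact ⟨S, fun i => ⟨(h1 i).1, (h1 i).2, h3 i⟩, h2⟩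
  · rintro ⟨S, h1, h2⟩; exact ⟨S, fun i => ⟨(h1 i).1, (h1 i).2.1⟩, h2, fun i => (h1 i).2.2⟩

lemma ind_oddQ (V A : Finset ℕ) : Ind (oddQ V A) := by
  intro T f hT hf hw
  have hf' := Finset.mem_filter.mp hf
  have hf4 := (Finset.mem_powersetCard.mp hf'.1).2
  have hodd : Odd (f ∩ A).card := hf'.2
  have h1 : ∀ w ∈ f, w ∉ T := by
    intro w hw1 hw2
    have := Finset.mem_filter.mp (hw w hw1)
    have h4 := (Finset.mem_powersetCard.mp this.1).2
    rw [Finset.insert_eq_of_mem hw2] at h4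
    omega
  have h2 : ∀ w ∈ f, (w ∈ A ↔ Even (T ∩ A).card) := by
    intro w hw1
    have h3 : Odd ((insert w T) ∩ A).card := (Finset.mem_filter.mp (hw w hw1)).2
    by_cases hA : w ∈ A
    · rw [Finset.insert_inter_of_mem hA, Finset.card_insert_of_notMem
        (fun h => h1 w hw1 (Finset.mem_inter.mp h).1)] at h3
      simp only [hA, true_iff]
      rw [Nat.odd_add_one] at h3
      exact Nat.not_odd_iff_even.mp h3
    · rw [Finset.insert_inter_of_notMem hA] at h3
      simp only [hA, false_iff]
      exact Nat.not_even_iff_odd.mpr h3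
  by_cases he : Even (T ∩ A).card
  · have : f ∩ A = f := Finset.inter_eq_left.mpr (fun w hw => (h2 w hw).mpr he)
    rw [this, hf4] at hodd
    exact absurd hodd (by decide)
  · have : f ∩ A = ∅ := by
      rw [Finset.eq_empty_iff_forall_notMem]
      intro w hw
      have := Finset.mem_inter.mp hw
      exact he ((h2 w this.1).mp this.2)
    rw [this] at hodd
    simp at hodd

lemma full_no_Mt {V L A : Finset ℕ} : ¬ Mt (full V L A) V (L.card + 1) := by
  rintro ⟨S, hS, hd⟩
  have hm : ∀ i, ∃ x ∈ L, x ∈ S i := by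
    intro i
    by_contra hcon
    push Not at hcon
    apply (hS i).2.2
    apply Ind.mono (ind_oddQ (V \ L) A)
    intro f hf
    have hf' := Finset.mem_filter.mp hf
    rcases Finset.mem_union.mp hf'.1 with h | h
    · exfalso
      apply (Finset.mem_filter.mp h).2
      rw [Finset.disjoint_left]
      intro x hx hxL
      exact hcon x hxL (hf'.2 hx)
    · exact h
  choose g hg1 hg2 using hm
  have := Finset.card_le_card_of_injOn (s := (Finset.univ : Finset (Fin (L.card + 1)))) (t := L) g
    (fun i _ => hg1 i) (by
      intro i _ j _ hij
      by_contra hne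
      have := Finset.disjoint_left.mp (hd i j hne) (hg2 i)
      rw [hij] at this
      exact this (hg2 j))
  simp at this

/-- The hypergraph with prescribed vertex set and edge set. -/
def mkG (V : Finset ℕ) (E : Finset (Finset ℕ)) (h : E ⊆ Finset.powersetCard 4 V) : HGraph 4 where
  verts := V
  edges := E
  edges_sub := fun _ he => (Finset.mem_powersetCard.mp (h he)).1
  edges_card := fun _ he => (Finset.mem_powersetCard.mp (h he)).2

lemma full_unif {V L A : Finset ℕ} : full V L A ⊆ Finset.powersetCard 4 V := by
  intro f hf
  rcases Finset.mem_union.mp hf with h | h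
  · exact (Finset.mem_filter.mp h).1
  · have := Finset.mem_powersetCard.mp (Finset.mem_filter.mp h).1
    exact Finset.mem_powersetCard.mpr ⟨this.1.trans Finset.sdiff_subset, this.2⟩

lemma ext_struct {n t : ℕ} {H : HGraph 4} (hn : (10 : ℝ) ^ 20 ≤ n)
    (ht : (t : ℝ) ≤ 1 / 10 ^ 20 * n) (hH : IsExtremalMatchingFree 4 n t F43 H) :
    ∃ L ⊆ H.verts, L.card = t ∧ ∃ A ⊆ H.verts \ L, H.edges = full H.verts L A ∧
      ∀ A' ⊆ H.verts \ L, (full H.verts L A').card ≤ (full H.verts L A).card := by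
  obtain ⟨hV, hM, hx⟩ := hH
  subst hV
  have hU : H.edges ⊆ Finset.powersetCard 4 H.verts := fun e he =>
    Finset.mem_powersetCard.mpr ⟨H.edges_sub e he, H.edges_card e he⟩
  have hmax : ∀ L ⊆ H.verts, L.card = t → ∀ A ⊆ H.verts \ L,
      (full H.verts L A).card ≤ H.edges.card := by
    intro L hL hLt A hA
    rw [hx]
    apply le_csSup
    · refine ⟨H.verts.card.choose 4, ?_⟩
      rintro m ⟨G, hG, -, rfl⟩
      rw [← hG, ← Finset.card_powersetCard]
      apply Finset.card_le_card
      intro e he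
      exact Finset.mem_powersetCard.mpr ⟨G.edges_sub e he, G.edges_card e he⟩
    · refine ⟨mkG H.verts (full H.verts L A) full_unif, rfl, ?_, rfl⟩
      rw [matching_iff]
      subst hLt
      exact full_no_Mt
  rw [matching_iff] at hM
  obtain ⟨L, hL, hLt, A, hA, h⟩ := main_struct hU hn ht hM hmax
  refine ⟨L, hL, hLt, A, hA, h, ?_⟩
  intro A' hA'
  rw [← h]
  exact hmax L hL hLt A' hA'

lemma exists_img (S T : Finset ℕ) (h : S.card = T.card) : ∃ f : ℕ → ℕ, S.image f = T := by
  classical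
  let e := Finset.equivOfCardEq h
  refine ⟨fun x => if hx : x ∈ S then (e ⟨x, hx⟩ : ℕ) else 0, ?_⟩
  ext y
  rw [Finset.mem_image]
  constructor
  · rintro ⟨x, hx, rfl⟩
    simp only [hx, dite_true]
    exact (e ⟨x, hx⟩).2
  · intro hy
    refine ⟨e.symm ⟨y, hy⟩, (e.symm ⟨y, hy⟩).2, ?_⟩
    simp

lemma join_mem {t n k : ℕ} (h1 : t ≤ k) (h2 : k ≤ n) {q : Finset ℕ} (hq : q ⊆ Finset.range n)
    (hc : q.card = 4) :
    q ∈ ((completeOn 4 (Finset.range t)).join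
        (oddCross 4 (Finset.Ico t k) (Finset.Ico k n))).edges ↔
      ¬ Disjoint q (Finset.range t) ∨ (Disjoint q (Finset.range t) ∧ Odd (q ∩ Finset.Ico t k).card) := by
  have hu : Finset.Ico t k ∪ Finset.Ico k n = Finset.Ico t n :=
    Finset.Ico_union_Ico_eq_Ico h1 h2
  have hu2 : Finset.range t ∪ Finset.Ico t n = Finset.range n := by
    ext x; simp only [Finset.mem_union, Finset.mem_range, Finset.mem_Ico]; omega
  have hsub : Disjoint q (Finset.range t) ↔ q ⊆ Finset.Ico t n := by
    rw [Finset.disjoint_left]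
    constructor
    · intro h x hx
      have a := h hx
      have b := hq hx
      simp only [Finset.mem_range, Finset.mem_Ico] at *; omega
    · intro h x hx
      have b := h hx
      simp only [Finset.mem_range, Finset.mem_Ico] at *; omega
  simp only [HGraph.join, completeOn, oddCross, HGraph.ofEdges, hu, hu2, Finset.mem_filter,
    Finset.mem_union, Finset.mem_powersetCard, hc, hq, and_true, true_and]
  constructor
  · rintro ((h | h) | h)
    · left
      intro hd
      have : q = ∅ := by
        have := Finset.disjoint_of_subset_right h.1 hd
        simpa using this
      rw [this] at hc; simp at hc
    · right
      exact ⟨hsub.mpr h.1.1, h.1.2⟩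
    · left
      rw [Finset.not_disjoint_iff_nonempty_inter]
      exact h.1
  · rintro (h | h)
    · by_cases h3 : q ⊆ Finset.range t
      · left; left; exact ⟨h3, h3⟩
      · right
        refine ⟨Finset.not_disjoint_iff_nonempty_inter.mp h, ?_⟩
        obtain ⟨x, hx, hx2⟩ := Finset.not_subset.mp h3
        refine ⟨x, Finset.mem_inter.mpr ⟨hx, ?_⟩⟩
        have := hq hx
        simp only [Finset.mem_range, Finset.mem_Ico] at *; omega
    · left; right
      exact ⟨⟨hsub.mp h.1, h.2⟩, hsub.mp h.1⟩

lemma iso_full {H : HGraph 4} {L A : Finset ℕ} {n t k : ℕ} (hV : H.verts.card = n)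
    (hL : L ⊆ H.verts) (hLt : L.card = t) (hA : A ⊆ H.verts \ L) (hk : t + A.card = k)
    (hE : H.edges = full H.verts L A) :
    H.Iso ((completeOn 4 (Finset.range t)).join
        (oddCross 4 (Finset.Ico t k) (Finset.Ico k n))) := by
  classical
  set V := H.verts with hVd
  set B := (V \ L) \ A with hB
  have hcL : (V \ L).card = n - t := by rw [Finset.card_sdiff_of_subset hL, hLt, hV]
  have htn : t ≤ n := by rw [← hV, ← hLt]; exact Finset.card_le_card hL
  have hAc : A.card ≤ n - t := by rw [← hcL]; exact Finset.card_le_card hA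
  have hBc : B.card = n - t - A.card := by rw [hB, Finset.card_sdiff_of_subset hA, hcL]
  have h1 : t ≤ k := by omega
  have h2 : k ≤ n := by omega
  obtain ⟨f1, hf1⟩ := exists_img L (Finset.range t) (by simp [hLt])
  obtain ⟨f2, hf2⟩ := exists_img A (Finset.Ico t k) (by rw [Nat.card_Ico]; omega)
  obtain ⟨f3, hf3⟩ := exists_img B (Finset.Ico k n) (by rw [Nat.card_Ico]; omega)
  let f : ℕ → ℕ := fun x => if x ∈ L then f1 x else if x ∈ A then f2 x else f3 x
  have hAL : ∀ x ∈ A, x ∉ L := fun x hx => (Finset.mem_sdiff.mp (hA hx)).2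
  have g1 : ∀ x ∈ L, f x ∈ Finset.range t := by
    intro x hx
    simp only [f, hx, if_true]
    rw [← hf1]; exact Finset.mem_image_of_mem _ hx
  have g2 : ∀ x ∈ A, f x ∈ Finset.Ico t k := by
    intro x hx
    simp only [f, hx, hAL x hx, if_true, if_false]
    rw [← hf2]; exact Finset.mem_image_of_mem _ hx
  have g3 : ∀ x ∈ B, f x ∈ Finset.Ico k n := by
    intro x hx
    have a1 := (Finset.mem_sdiff.mp hx)
    have a2 := (Finset.mem_sdiff.mp a1.1).2
    simp only [f, a1.2, a2, if_false]
    rw [← hf3]; exact Finset.mem_image_of_mem _ hx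
  have himg : V.image f = Finset.range n := by
    ext y
    rw [Finset.mem_image]
    constructor
    · rintro ⟨x, hx, rfl⟩
      by_cases hxL : x ∈ L
      · have := g1 x hxL; simp only [Finset.mem_range] at *; omega
      · by_cases hxA : x ∈ A
        · have := g2 x hxA; simp only [Finset.mem_range, Finset.mem_Ico] at *; omega
        · have := g3 x (by simp [hB, hx, hxL, hxA])
          simp only [Finset.mem_range, Finset.mem_Ico] at *; omega
    · intro hy
      rw [Finset.mem_range] at hy
      by_cases y1 : y < t
      · have : y ∈ L.image f1 := by rw [hf1]; exact Finset.mem_range.mpr y1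
        obtain ⟨x, hx, rfl⟩ := Finset.mem_image.mp this
        exact ⟨x, hL hx, by simp only [f, hx, if_true]⟩
      · by_cases y2 : y < k
        · have : y ∈ A.image f2 := by rw [hf2, Finset.mem_Ico]; omega
          obtain ⟨x, hx, rfl⟩ := Finset.mem_image.mp this
          exact ⟨x, (Finset.mem_sdiff.mp (hA hx)).1, by
            simp only [f, hx, hAL x hx, if_true, if_false]⟩
        · have : y ∈ B.image f3 := by rw [hf3, Finset.mem_Ico]; omega
          obtain ⟨x, hx, rfl⟩ := Finset.mem_image.mp this
          have a1 := (Finset.mem_sdiff.mp hx)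
          have a2 := (Finset.mem_sdiff.mp a1.1)
          exact ⟨x, a2.1, by simp only [f, a1.2, a2.2, if_false]⟩
  have hinj : Set.InjOn f ↑V := by
    apply Finset.card_image_iff.mp
    rw [himg, hV, Finset.card_range]
  have k1 : ∀ x ∈ V, (f x ∈ Finset.range t ↔ x ∈ L) := by
    intro x hx
    refine ⟨fun h => ?_, g1 x⟩
    by_contra hxL
    by_cases hxA : x ∈ A
    · have := g2 x hxA; simp only [Finset.mem_range, Finset.mem_Ico] at *; omega
    · have := g3 x (by simp [hB, hx, hxL, hxA])
      simp only [Finset.mem_range, Finset.mem_Ico] at *; omega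
  have k2 : ∀ x ∈ V, (f x ∈ Finset.Ico t k ↔ x ∈ A) := by
    intro x hx
    refine ⟨fun h => ?_, g2 x⟩
    by_contra hxA
    by_cases hxL : x ∈ L
    · have := g1 x hxL; simp only [Finset.mem_range, Finset.mem_Ico] at *; omega
    · have := g3 x (by simp [hB, hx, hxL, hxA])
      simp only [Finset.mem_range, Finset.mem_Ico] at *; omega
  have hverts : ((completeOn 4 (Finset.range t)).join
        (oddCross 4 (Finset.Ico t k) (Finset.Ico k n))).verts = Finset.range n := by
    simp only [HGraph.join, completeOn, oddCross, HGraph.ofEdges]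
    ext x; simp only [Finset.mem_union, Finset.mem_range, Finset.mem_Ico]; omega
  refine ⟨f, ?_, ?_⟩
  · rw [hverts, ← himg, Finset.coe_image]
    exact hinj.bijOn_image
  · intro q hq
    obtain ⟨hqV, hq4⟩ := Finset.mem_powersetCard.mp hq
    have hqi : Set.InjOn f ↑q := hinj.mono (by exact_mod_cast hqV)
    rw [join_mem h1 h2 (by rw [← himg]; exact Finset.image_subset_image hqV)
      (by rw [Finset.card_image_of_injOn hqi, hq4])]
    have d1 : Disjoint (q.image f) (Finset.range t) ↔ Disjoint q L := by
      rw [Finset.disjoint_left, Finset.disjoint_left]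
      constructor
      · intro h x hx hxL
        exact h (Finset.mem_image_of_mem f hx) (g1 x hxL)
      · intro h y hy hyt
        obtain ⟨x, hx, rfl⟩ := Finset.mem_image.mp hy
        exact h hx ((k1 x (hqV hx)).mp hyt)
    have d2 : q.image f ∩ Finset.Ico t k = (q ∩ A).image f := by
      ext y
      simp only [Finset.mem_inter, Finset.mem_image]
      constructor
      · rintro ⟨⟨x, hx, rfl⟩, hy⟩
        exact ⟨x, ⟨hx, (k2 x (hqV hx)).mp hy⟩, rfl⟩
      · rintro ⟨x, ⟨hx, hxA⟩, rfl⟩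
        exact ⟨⟨x, hx, rfl⟩, g2 x hxA⟩
    have d3 : (q.image f ∩ Finset.Ico t k).card = (q ∩ A).card := by
      rw [d2, Finset.card_image_of_injOn]
      exact hqi.mono (by exact_mod_cast Finset.inter_subset_left)
    rw [d1, d3, hE]
    unfold full hitQ oddQ
    simp only [Finset.mem_union, Finset.mem_filter, Finset.mem_powersetCard, hq4,
      and_true, Finset.subset_sdiff]
    have hqV' : q ⊆ V := hqV
    simp only [hqV', true_and]

lemma final_aux {H : HGraph 4} {n t : ℕ} {L A : Finset ℕ} (hV : H.verts.card = n)
    (hN : 3 ≤ n - t)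
    (hL : L ⊆ H.verts) (hLt : L.card = t) (hA : A ⊆ H.verts \ L)
    (hE : H.edges = full H.verts L A) (hα : n - t ≤ 2 * A.card)
    (hmax : ∀ A' ⊆ H.verts \ L, (full H.verts L A').card ≤ (full H.verts L A).card) :
    ∃ m : ℕ, (m : ℝ) ≤ Real.sqrt (4 * ((n - t : ℕ) : ℝ)) ∧
          H.Iso ((completeOn 4 (Finset.range t)).join
            (oddCross 4 (Finset.Ico t (t + (n - t) / 2 + m))
              (Finset.Ico (t + (n - t) / 2 + m) n))) := by
  have hcL : (H.verts \ L).card = n - t := by rw [Finset.card_sdiff_of_subset hL, hLt, hV]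
  have hge : (n - t) / 2 ≤ A.card := by omega
  refine ⟨A.card - (n - t) / 2, ?_, iso_full hV hL hLt hA (by omega) hE⟩
  obtain ⟨A0, hA0, -, hg⟩ := exists_balanced (H.verts \ L) (by omega)
  have h1 := hmax A0 hA0
  rw [full_card, full_card] at h1
  have h2 : ((oddQ (H.verts \ L) A0).card : ℝ) ≤ (oddQ (H.verts \ L) A).card := by
    exact_mod_cast (by omega)
  have h3 := hg.trans h2
  rw [oddQ_gf hA] at h3
  have hb : (((H.verts \ L) \ A).card : ℝ) = ((n - t : ℕ) : ℝ) - A.card := by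
    rw [Finset.card_sdiff_of_subset hA, hcL, Nat.cast_sub]
    rw [← hcL]; exact Finset.card_le_card hA
  rw [hb, hcL] at h3
  have hm2 : 2 * (A.card - (n - t) / 2) ≤ 2 * A.card - (n - t) + 1 := by omega
  have hm3 : 2 * ((A.card - (n - t) / 2 : ℕ) : ℝ) ≤ 2 * A.card - ((n - t : ℕ) : ℝ) + 1 := by
    have : ((2 * (A.card - (n - t) / 2) : ℕ) : ℝ) ≤ ((2 * A.card - (n - t) + 1 : ℕ) : ℝ) := by
      exact_mod_cast hm2
    rw [Nat.cast_add, Nat.cast_sub hα] at this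
    push_cast at this ⊢
    linarith
  have hNr : (3 : ℝ) ≤ ((n - t : ℕ) : ℝ) := by exact_mod_cast hN
  have hαr : ((n - t : ℕ) : ℝ) ≤ 2 * A.card := by exact_mod_cast hα
  generalize ((n - t : ℕ) : ℝ) = N at *
  have hm0 : (0 : ℝ) ≤ ((A.card - (n - t) / 2 : ℕ) : ℝ) := by positivity
  generalize ((A.card - (n - t) / 2 : ℕ) : ℝ) = m at *
  generalize (A.card : ℝ) = a at *
  apply Real.le_sqrt_of_sq_le
  have e : N ^ 2 - 3 * N + 4 - 4 * (a * (N - a)) = (2 * a - N) ^ 2 - 3 * N + 4 := by ring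
  rw [e] at h3
  have h4 : ((2 * a - N) ^ 2 - 3 * N + 4) ^ 2 ≤ (7 * N) ^ 2 := by nlinarith
  have h5 := abs_le_of_sq_le_sq h4 (by linarith)
  have hd : (2 * a - N) ^ 2 ≤ 10 * N - 4 := by linarith [(abs_le.mp h5).2]
  have hd0 : 0 ≤ 2 * a - N := by linarith
  generalize 2 * a - N = d at *
  have h6 : (2 * m) ^ 2 ≤ (d + 1) ^ 2 := by gcongr
  nlinarith [sq_nonneg (d - 10)]

/-- extremal constructions for `𝔽_{4,3}` are contained in joins of
a clique with the graphs `B_4^{odd}(n−t, m)`, `0 ≤ m ≤ √(4(n−t))`. -/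
theorem statement_15 :
    ∃ N₀ : ℕ, ∃ c : ℝ, 0 < c ∧ ∀ n : ℕ, N₀ ≤ n → ∀ t : ℕ, (t : ℝ) ≤ c * n →
      ∀ H : HGraph 4, IsExtremalMatchingFree 4 n t F43 H →
        ∃ m : ℕ, (m : ℝ) ≤ Real.sqrt (4 * ((n - t : ℕ) : ℝ)) ∧
          H.Iso ((completeOn 4 (Finset.range t)).join
            (oddCross 4 (Finset.Ico t (t + (n - t) / 2 + m))
              (Finset.Ico (t + (n - t) / 2 + m) n))) := by
  refine ⟨10 ^ 20, 1 / 10 ^ 20, by positivity, ?_⟩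
  intro n hn t ht H hH
  have hnr : (10 : ℝ) ^ 20 ≤ n := by exact_mod_cast hn
  obtain ⟨L, hL, hLt, A, hA, hE, hmax⟩ := ext_struct hnr ht hH
  have hV := hH.1
  have hN : 3 ≤ n - t := by
    have : (t : ℝ) + 3 ≤ n := by
      norm_num at ht; linarith
    have : t + 3 ≤ n := by exact_mod_cast this
    omega
  have hcL : (H.verts \ L).card = n - t := by rw [Finset.card_sdiff_of_subset hL, hLt, hV]
  by_cases hα : n - t ≤ 2 * A.card
  · exact final_aux hV hN hL hLt hA hE hα hmax
  · have hsw : full H.verts L ((H.verts \ L) \ A) = full H.verts L A := by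
      unfold full; rw [oddQ_compl]
    refine final_aux (A := (H.verts \ L) \ A) hV hN hL hLt Finset.sdiff_subset (by rw [hsw, hE]) ?_
      (by rw [hsw]; exact hmax)
    rw [Finset.card_sdiff_of_subset hA, hcL]
    omega

end DensityCH
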